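/- arXiv:2304.02334 — 3 statements merged into one kernel-verified Lean document; each statement's English description precedes it below -/
import Mathlib

section
/- Let W ∈ L¹(ℝ, ℝ) be an even function, let c > 0, and let u : ℝ → ℂ be a bounded smooth (C^∞) function with u' ∈ L²(ℝ) and 1 − |u|² ∈ L²(ℝ) satisfying i·c·u'(x) + u''(x) + (W ⋆ (1 − |u|²))(x)·u(x) = 0 for all x ∈ ℝ, where ⋆ denotes convolution on ℝ. Then u(x) ≠ 0 for every x ∈ ℝ. -/
open MeasureTheory Filter

/-- If `W ∈ L¹(ℝ)` is even, `c > 0`, and `u : ℝ → ℂ` is a bounded smooth finite-energy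
solution of the nonlocal traveling-wave equation
`i c u' + u'' + (W ⋆ (1 - |u|²)) u = 0`, then `u` never vanishes. -/
theorem darkSoliton_ne_zero
    (W : ℝ → ℝ) (hW_int : Integrable W) (hW_even : ∀ x, W (-x) = W x)
    (c : ℝ) (hc : 0 < c)
    (u : ℝ → ℂ) (hu_smooth : ContDiff ℝ (⊤ : ℕ∞) u)
    (hu_bdd : ∃ M : ℝ, ∀ x, ‖u x‖ ≤ M)
    (hu_deriv : MemLp (deriv u) 2 (volume : Measure ℝ))
    (hu_mod : MemLp (fun x : ℝ => 1 - ‖u x‖ ^ 2) 2 (volume : Measure ℝ))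
    (heq : ∀ x : ℝ,
      Complex.I * (c : ℂ) * deriv u x + deriv (deriv u) x +
        (((∫ t : ℝ, W t * (1 - ‖u (x - t)‖ ^ 2)) : ℝ) : ℂ) * u x = 0) :
    ∀ x : ℝ, u x ≠ 0 := by
  intro x0 hx0
  have hd : ∀ x, HasDerivAt u (deriv u x) x := fun x =>
    ((hu_smooth.differentiable (by simp)) x).hasDerivAt
  have hs' : ContDiff ℝ (⊤ : ℕ∞) (deriv u) := (contDiff_infty_iff_deriv.1 hu_smooth).2
  have hdd : ∀ x, HasDerivAt (deriv u) (deriv (deriv u) x) x := fun x =>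
    ((hs'.differentiable (by simp)) x).hasDerivAt
  have hns : ∀ z : ℂ, ‖z‖ ^ 2 = z.re * z.re + z.im * z.im := fun z => by
    rw [← Complex.normSq_eq_norm_sq, Complex.normSq_apply]
  have hre : ∀ {f : ℝ → ℂ} {f' : ℂ} {x : ℝ}, HasDerivAt f f' x →
      HasDerivAt (fun y => (f y).re) f'.re x := fun {f f' x} h => by
    exact (Complex.reCLM.hasFDerivAt.comp_hasDerivAt x h)
  have him : ∀ {f : ℝ → ℂ} {f' : ℂ} {x : ℝ}, HasDerivAt f f' x →
      HasDerivAt (fun y => (f y).im) f'.im x := fun {f f' x} h => by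
    exact (Complex.imCLM.hasFDerivAt.comp_hasDerivAt x h)
  let A : ℝ → ℝ := fun x => (deriv u x).im * (u x).re - (deriv u x).re * (u x).im
  let J : ℝ → ℝ := fun x => A x - c / 2 * (1 - ‖u x‖ ^ 2)
  have hJ : ∀ x, HasDerivAt J 0 x := by
    intro x
    have h1 := (((him (hdd x)).mul (hre (hd x))).sub ((hre (hdd x)).mul (him (hd x)))).sub
      (((((hre (hd x)).mul (hre (hd x))).add ((him (hd x)).mul (him (hd x)))).const_sub 1).const_mul
        (c / 2))
    have e := heq x
    have e1 := congrArg Complex.re e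
    have e2 := congrArg Complex.im e
    simp at e1 e2
    refine HasDerivAt.congr_deriv (HasDerivAt.congr_of_eventuallyEq h1
      (Eventually.of_forall fun y => ?_)) ?_
    · simp [J, A, hns]
    · linear_combination (u x).re * e2 - (u x).im * e1
  have hconst : ∀ x, J x = J x0 := fun x =>
    is_const_of_deriv_eq_zero (fun y => (hJ y).differentiableAt) (fun y => (hJ y).deriv) x x0
  have hA : MemLp A 2 (volume : Measure ℝ) := by
    obtain ⟨M, hM⟩ := hu_bdd
    have hc1 := hu_smooth.continuous
    have hc2 := hs'.continuous
    refine hu_deriv.of_le_mul (c := M) ?_ (Eventually.of_forall fun x => ?_)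
    · exact Continuous.aestronglyMeasurable (by fun_prop)
    · have : A x = (deriv u x * (starRingEnd ℂ) (u x)).im := by
        simp [A]; ring
      rw [this, Real.norm_eq_abs]
      refine (Complex.abs_im_le_norm _).trans ?_
      rw [norm_mul, RCLike.norm_conj, mul_comm]
      exact mul_le_mul_of_nonneg_right (hM x) (norm_nonneg _)
  have hJ2 : MemLp J 2 (volume : Measure ℝ) := hA.sub (hu_mod.const_mul (c / 2))
  have hJc : J = fun _ => J x0 := funext hconst
  rw [hJc, memLp_const_iff (by simp) (by simp)] at hJ2
  have h0 : J x0 = -(c / 2) := by simp [J, A, hx0]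
  rw [h0] at hJ2
  simp at hJ2
  exact hc.ne' hJ2
end

section
/- Let W ∈ L¹(ℝ, ℝ) be an even function, let c > 0, and let u : ℝ → ℂ be a bounded smooth (C^∞) function with u' ∈ L²(ℝ) and 1 − |u|² ∈ L²(ℝ) satisfying i·c·u'(x) + u''(x) + (W ⋆ (1 − |u|²))(x)·u(x) = 0 for all x ∈ ℝ. Then there exist smooth real-valued functions θ and η on ℝ with η(x) < 1 for all x ∈ ℝ, such that u(x) = √(1 − η(x))·e^{i θ(x)} for all x ∈ ℝ, θ' ∈ H^k(ℝ) and η ∈ H^k(ℝ) for every k ∈ ℕ, |u(x)| → 1 as x → ±∞, and for every j ≥ 1 the j-th derivatives u^{(j)}(x), θ^{(j)}(x), η^{(j)}(x) tend to 0 as x → ±∞. -/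
open MeasureTheory Filter

/-- recursive Sobolev predicate -/
def HS : ℕ → (ℝ → ℝ) → Prop
  | 0, f => MemLp f 2 (volume : Measure ℝ)
  | n + 1, f => Differentiable ℝ f ∧ MemLp f 2 (volume : Measure ℝ) ∧ HS n (deriv f)

/-- recursive bounded derivatives predicate -/
def BS : ℕ → (ℝ → ℝ) → Prop
  | 0, f => Continuous f ∧ ∃ M : ℝ, ∀ x, |f x| ≤ M
  | n + 1, f => Differentiable ℝ f ∧ (∃ M : ℝ, ∀ x, |f x| ≤ M) ∧ BS n (deriv f)

lemma HS.memLp {n : ℕ} {f : ℝ → ℝ} (h : HS n f) : MemLp f 2 (volume : Measure ℝ) := by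
  cases n with
  | zero => exact h
  | succ n => exact h.2.1

lemma BS.cont {n : ℕ} {f : ℝ → ℝ} (h : BS n f) : Continuous f := by
  cases n with
  | zero => exact h.1
  | succ n => exact h.1.continuous

lemma BS.bdd {n : ℕ} {f : ℝ → ℝ} (h : BS n f) : ∃ M : ℝ, ∀ x, |f x| ≤ M := by
  cases n with
  | zero => exact h.2
  | succ n => exact h.2.1

lemma HS.pred {n : ℕ} {f : ℝ → ℝ} (h : HS (n + 1) f) : HS n f := by
  induction n generalizing f with
  | zero => exact h.2.1
  | succ n ih => exact ⟨h.1, h.2.1, ih h.2.2⟩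

lemma BS.pred {n : ℕ} {f : ℝ → ℝ} (h : BS (n + 1) f) : BS n f := by
  induction n generalizing f with
  | zero => exact ⟨h.1.continuous, h.2.1⟩
  | succ n ih => exact ⟨h.1, h.2.1, ih h.2.2⟩

lemma memLp_bdd_mul {f g : ℝ → ℝ} (hf : Continuous f) (hb : ∃ M : ℝ, ∀ x, |f x| ≤ M)
    (hg : MemLp g 2 (volume : Measure ℝ)) : MemLp (fun x => f x * g x) 2 (volume : Measure ℝ) := by
  obtain ⟨M, hM⟩ := hb
  refine MemLp.of_le_mul (c := M) hg (hf.aestronglyMeasurable.mul hg.1) ?_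
  refine Eventually.of_forall fun x => ?_
  simp only [norm_mul, Real.norm_eq_abs]
  exact mul_le_mul_of_nonneg_right (hM x) (abs_nonneg _)

lemma HS.add {n : ℕ} {f g : ℝ → ℝ} (hf : HS n f) (hg : HS n g) : HS n (fun x => f x + g x) := by
  induction n generalizing f g with
  | zero => exact MemLp.add hf hg
  | succ n ih =>
    refine ⟨hf.1.add hg.1, MemLp.add hf.2.1 hg.2.1, ?_⟩
    have : deriv (fun x => f x + g x) = fun x => deriv f x + deriv g x := by
      funext x; exact deriv_fun_add (hf.1 x) (hg.1 x)
    rw [this]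
    exact ih hf.2.2 hg.2.2

lemma HS.const_mul {n : ℕ} {f : ℝ → ℝ} (k : ℝ) (hf : HS n f) : HS n (fun x => k * f x) := by
  induction n generalizing f with
  | zero => exact MemLp.const_mul hf k
  | succ n ih =>
    refine ⟨hf.1.const_mul k, MemLp.const_mul hf.2.1 k, ?_⟩
    have : deriv (fun x => k * f x) = fun x => k * deriv f x := by
      funext x; exact deriv_const_mul k (hf.1 x)
    rw [this]
    exact ih hf.2.2

lemma BS.add {n : ℕ} {f g : ℝ → ℝ} (hf : BS n f) (hg : BS n g) : BS n (fun x => f x + g x) := by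
  have hb : ∃ M : ℝ, ∀ x, |f x + g x| ≤ M := by
    obtain ⟨M, hM⟩ := hf.bdd
    obtain ⟨N, hN⟩ := hg.bdd
    exact ⟨M + N, fun x => (abs_add_le _ _).trans (add_le_add (hM x) (hN x))⟩
  induction n generalizing f g with
  | zero => exact ⟨hf.1.add hg.1, hb⟩
  | succ n ih =>
    refine ⟨hf.1.add hg.1, hb, ?_⟩
    have : deriv (fun x => f x + g x) = fun x => deriv f x + deriv g x := by
      funext x; exact deriv_fun_add (hf.1 x) (hg.1 x)
    rw [this]
    refine ih hf.2.2 hg.2.2 ?_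
    obtain ⟨M, hM⟩ := hf.2.2.bdd
    obtain ⟨N, hN⟩ := hg.2.2.bdd
    exact ⟨M + N, fun x => (abs_add_le _ _).trans (add_le_add (hM x) (hN x))⟩

lemma bdd_mul' {f g : ℝ → ℝ} (hf : ∃ M : ℝ, ∀ x, |f x| ≤ M) (hg : ∃ M : ℝ, ∀ x, |g x| ≤ M) :
    ∃ M : ℝ, ∀ x, |f x * g x| ≤ M := by
  obtain ⟨M, hM⟩ := hf
  obtain ⟨N, hN⟩ := hg
  refine ⟨M * N, fun x => ?_⟩
  rw [abs_mul]
  exact mul_le_mul (hM x) (hN x) (abs_nonneg _) ((abs_nonneg _).trans (hM x))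

lemma BS.mul {n : ℕ} {f g : ℝ → ℝ} (hf : BS n f) (hg : BS n g) : BS n (fun x => f x * g x) := by
  induction n generalizing f g with
  | zero => exact ⟨hf.1.mul hg.1, bdd_mul' hf.2 hg.2⟩
  | succ n ih =>
    refine ⟨hf.1.mul hg.1, bdd_mul' hf.2.1 hg.2.1, ?_⟩
    have : deriv (fun x => f x * g x) = fun x => deriv f x * g x + f x * deriv g x := by
      funext x; exact deriv_fun_mul (hf.1 x) (hg.1 x)
    rw [this]
    exact (ih hf.2.2 hg.pred).add (ih hf.pred hg.2.2)

lemma HS.bmul {n : ℕ} {f g : ℝ → ℝ} (hf : BS n f) (hg : HS n g) : HS n (fun x => f x * g x) := by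
  induction n generalizing f g with
  | zero => exact memLp_bdd_mul hf.1 hf.2 hg
  | succ n ih =>
    refine ⟨hf.1.mul hg.1, memLp_bdd_mul hf.1.continuous hf.2.1 hg.2.1, ?_⟩
    have : deriv (fun x => f x * g x) = fun x => deriv f x * g x + f x * deriv g x := by
      funext x; exact deriv_fun_mul (hf.1 x) (hg.1 x)
    rw [this]
    exact (ih hf.2.2 hg.pred).add (ih hf.pred hg.2.2)

lemma HS.tendsto {f : ℝ → ℝ} (hf : HS 1 f) :
    Tendsto f atTop (nhds 0) ∧ Tendsto f atBot (nhds 0) := by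
  obtain ⟨hd, h0, h1⟩ := hf
  have h1 : MemLp (deriv f) 2 (volume : Measure ℝ) := h1
  have hsq : Integrable (fun x => f x ^ 2) := (memLp_two_iff_integrable_sq h0.1).1 h0
  have hsq' : Integrable (fun x => 2 * (f x * deriv f x)) := (h0.integrable_mul h1).const_mul 2
  have hder : ∀ x, HasDerivAt (fun x => f x ^ 2) (2 * (f x * deriv f x)) x := by
    intro x
    exact ((hd x).hasDerivAt.fun_pow 2).congr_deriv (by norm_num; ring)
  have key : ∀ l : Filter ℝ, Tendsto (fun x => f x ^ 2) l (nhds 0) → Tendsto f l (nhds 0) := by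
    intro l hl
    have := hl.sqrt
    simp only [Real.sqrt_sq_eq_abs, Real.sqrt_zero] at this
    exact (tendsto_zero_iff_abs_tendsto_zero _).2 this
  constructor
  · exact key _ (tendsto_zero_of_hasDerivAt_of_integrableOn_Ioi (a := 0) (fun x _ => hder x)
      hsq'.integrableOn hsq.integrableOn)
  · exact key _ (tendsto_zero_of_hasDerivAt_of_integrableOn_Iic (a := 0) (fun x _ => hder x)
      hsq'.integrableOn hsq.integrableOn)

lemma HS.exists_bdd {f : ℝ → ℝ} (hf : HS 1 f) : ∃ M : ℝ, ∀ x, |f x| ≤ M := by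
  obtain ⟨h1, h2⟩ := hf.tendsto
  have hc : Continuous f := hf.1.continuous
  have e1 : ∀ᶠ x in atTop, |f x| < 1 := by
    have := h1.abs
    rw [abs_zero] at this
    exact this.eventually (gt_mem_nhds one_pos)
  have e2 : ∀ᶠ x in atBot, |f x| < 1 := by
    have := h2.abs
    rw [abs_zero] at this
    exact this.eventually (gt_mem_nhds one_pos)
  obtain ⟨R, hR⟩ := eventually_atTop.1 e1
  obtain ⟨S, hS⟩ := eventually_atBot.1 e2
  obtain ⟨M, hM⟩ := (isCompact_Icc (a := S) (b := R)).exists_bound_of_continuousOn hc.continuousOn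
  refine ⟨max M 1, fun x => ?_⟩
  by_cases hx : R ≤ x
  · exact (hR x hx).le.trans (le_max_right _ _)
  by_cases hx' : x ≤ S
  · exact (hS x hx').le.trans (le_max_right _ _)
  · push Not at hx hx'
    exact (hM x ⟨hx'.le, hx.le⟩).trans (le_max_left _ _)

lemma HS.toBS {n : ℕ} {f : ℝ → ℝ} (hf : HS (n + 1) f) : BS n f := by
  induction n generalizing f with
  | zero => exact ⟨hf.1.continuous, hf.exists_bdd⟩
  | succ n ih => exact ⟨hf.1, HS.exists_bdd ⟨hf.1, hf.2.1, hf.2.2.memLp⟩, ih hf.2.2⟩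

/-- convolution -/
noncomputable def cv (W f : ℝ → ℝ) (x : ℝ) : ℝ := ∫ t : ℝ, W t * f (x - t)

lemma cv_int {W f : ℝ → ℝ} (hW : Integrable W) (hf : Continuous f)
    (hb : ∃ M : ℝ, ∀ x, |f x| ≤ M) (x : ℝ) : Integrable (fun t => W t * f (x - t)) := by
  obtain ⟨M, hM⟩ := hb
  refine hW.mul_bdd (c := M) (hf.comp (by fun_prop)).aestronglyMeasurable ?_
  exact Eventually.of_forall fun t => hM _

lemma cv_cont {W f : ℝ → ℝ} (hW : Integrable W) (hf : Continuous f)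
    (hb : ∃ M : ℝ, ∀ x, |f x| ≤ M) : Continuous (cv W f) := by
  have hi := cv_int hW hf hb
  obtain ⟨M, hM⟩ := hb
  refine continuous_of_dominated (bound := fun t => |W t| * M) (fun x => (hi x).1) ?_
    (hW.abs.mul_const M) ?_
  · intro x
    refine Eventually.of_forall fun t => ?_
    rw [Real.norm_eq_abs, abs_mul]
    exact mul_le_mul_of_nonneg_left (hM _) (abs_nonneg _)
  · refine Eventually.of_forall fun t => ?_
    fun_prop

lemma cv_memLp {W f : ℝ → ℝ} (hW : Integrable W) (hf : Continuous f)
    (hb : ∃ M : ℝ, ∀ x, |f x| ≤ M) (h2 : MemLp f 2 (volume : Measure ℝ)) :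
    MemLp (cv W f) 2 (volume : Measure ℝ) := by
  have hcont := cv_cont hW hf hb
  rw [memLp_two_iff_integrable_sq hcont.aestronglyMeasurable]
  have hsq : Integrable (fun x => f x ^ 2) := (memLp_two_iff_integrable_sq h2.1).1 h2
  have hI : Integrable (fun x => ∫ t, |W t| * f (x - t) ^ 2) := by
    have := hW.abs.integrable_convolution (ContinuousLinearMap.mul ℝ ℝ) hsq
    exact this
  refine Integrable.mono' (hI.const_mul (∫ t, |W t|)) (hcont.pow 2).aestronglyMeasurable ?_
  refine Eventually.of_forall fun x => ?_
  have iA := hW.abs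
  have iB : Integrable (fun t => |W t| * |f (x - t)|) := by
    have := (cv_int hW hf hb x).abs
    simpa only [abs_mul] using this
  have iC : Integrable (fun t => |W t| * f (x - t) ^ 2) := by
    refine cv_int (f := fun x => f x ^ 2) hW.abs (hf.pow 2) ?_ x
    simpa only [pow_two] using bdd_mul' hb hb
  have hq : ∀ m : ℝ, 0 ≤ (∫ t, |W t|) * (m * m) + (-2 * ∫ t, |W t| * |f (x - t)|) * m
      + ∫ t, |W t| * f (x - t) ^ 2 := by
    intro m
    have : (∫ t, |W t|) * (m * m) + (-2 * ∫ t, |W t| * |f (x - t)|) * m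
      + ∫ t, |W t| * f (x - t) ^ 2 = ∫ t, |W t| * (|f (x - t)| - m) ^ 2 := by
      have e : ∀ t, |W t| * (|f (x - t)| - m) ^ 2 =
          (m * m) * |W t| + (-2 * m) * (|W t| * |f (x - t)|) + |W t| * f (x - t) ^ 2 := by
        intro t
        rw [← sq_abs (f (x - t))]; ring
      have iAB : Integrable (fun t => (m * m) * |W t| + (-2 * m) * (|W t| * |f (x - t)|)) :=
        (iA.const_mul _).add (iB.const_mul _)
      simp_rw [e]
      rw [integral_add iAB iC,
        integral_add (iA.const_mul _) (iB.const_mul _), integral_const_mul, integral_const_mul]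
      ring
    rw [this]
    exact integral_nonneg fun t => by positivity
  have hd := discrim_le_zero hq
  unfold discrim at hd
  have h1 : |cv W f x| ≤ ∫ t, |W t| * |f (x - t)| := by
    unfold cv
    refine (abs_integral_le_integral_abs).trans (le_of_eq ?_)
    simp only [abs_mul]
  have h2 : |cv W f x| ^ 2 ≤ (∫ t, |W t| * |f (x - t)|) ^ 2 :=
    pow_le_pow_left₀ (abs_nonneg _) h1 2
  rw [Real.norm_eq_abs, abs_of_nonneg (sq_nonneg _), ← sq_abs]
  nlinarith

lemma cv_deriv {W f : ℝ → ℝ} (hW : Integrable W) (hf : Differentiable ℝ f)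
    (hb : ∃ M : ℝ, ∀ x, |f x| ≤ M) (hc' : Continuous (deriv f))
    (hb' : ∃ M : ℝ, ∀ x, |deriv f x| ≤ M) (x : ℝ) :
    HasDerivAt (cv W f) (cv W (deriv f) x) x := by
  have hi := cv_int hW hf.continuous hb
  have hi' := cv_int hW hc' hb'
  obtain ⟨M, hM⟩ := hb'
  refine (hasDerivAt_integral_of_dominated_loc_of_deriv_le (s := Set.univ)
    (bound := fun t => |W t| * M) (F := fun x t => W t * f (x - t))
    (F' := fun x t => W t * deriv f (x - t)) univ_mem
    (Eventually.of_forall fun x => (hi x).1) (hi x) (hi' x).1 ?_ (hW.abs.mul_const M) ?_).2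
  · refine Eventually.of_forall fun t y _ => ?_
    rw [Real.norm_eq_abs, abs_mul]
    exact mul_le_mul_of_nonneg_left (hM _) (abs_nonneg _)
  · refine Eventually.of_forall fun t y _ => ?_
    have := (hf (y - t)).hasDerivAt.comp_sub_const y t
    exact this.const_mul (W t)

lemma HS.cv {W : ℝ → ℝ} (hW : Integrable W) {n : ℕ} {f : ℝ → ℝ} (hf : HS (n + 1) f) :
    HS n (cv W f) := by
  induction n generalizing f with
  | zero => exact cv_memLp hW hf.1.continuous hf.exists_bdd hf.2.1
  | succ n ih =>
    have hb := hf.toBS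
    have hd := cv_deriv hW hf.1 hb.bdd hf.2.2.toBS.cont hf.2.2.toBS.bdd
    refine ⟨fun x => (hd x).differentiableAt, cv_memLp hW hb.cont hb.bdd hf.2.1, ?_⟩
    have : deriv (_root_.cv W f) = _root_.cv W (deriv f) := funext fun x => (hd x).deriv
    rw [this]
    exact ih hf.2.2

lemma HS.iter {f : ℝ → ℝ} (hf : ∀ n, HS n f) (j : ℕ) : ∀ n, HS n (iteratedDeriv j f) := by
  induction j generalizing f with
  | zero => simpa using hf
  | succ j ih =>
    rw [iteratedDeriv_succ']
    exact ih fun n => (hf (n + 1)).2.2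

lemma BS.inv {n : ℕ} {f : ℝ → ℝ} (hf : BS n f) {m : ℝ} (hm : 0 < m) (hl : ∀ x, m ≤ f x) :
    BS n (fun x => (f x)⁻¹) := by
  have hpos : ∀ x, f x ≠ 0 := fun x => (hm.trans_le (hl x)).ne'
  have hb : ∃ M : ℝ, ∀ x, |(f x)⁻¹| ≤ M := by
    refine ⟨m⁻¹, fun x => ?_⟩
    rw [abs_of_pos (inv_pos.2 (hm.trans_le (hl x)))]
    exact inv_anti₀ hm (hl x)
  induction n with
  | zero => exact ⟨hf.1.inv₀ hpos, hb⟩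
  | succ n ih =>
    refine ⟨fun x => (hf.1 x).inv (hpos x), hb, ?_⟩
    have : deriv (fun x => (f x)⁻¹) = fun x => (-1) * deriv f x * ((f x)⁻¹ * (f x)⁻¹) := by
      funext x
      rw [deriv_fun_inv'' (hf.1 x) (hpos x)]
      field_simp
    rw [this]
    have h1 : BS n (fun _ : ℝ => (-1 : ℝ)) := by
      have : ∀ n k, BS n (fun _ : ℝ => (k : ℝ)) := by
        intro n
        induction n with
        | zero => exact fun k => ⟨continuous_const, |k|, fun _ => le_rfl⟩
        | succ n ih => exact fun k => ⟨differentiable_const k, ⟨|k|, fun _ => le_rfl⟩, by simpa using ih 0⟩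
      exact this n _
    exact (h1.mul hf.2.2).mul ((ih hf.pred).mul (ih hf.pred))

lemma bs_of_deriv {n : ℕ} {a : ℝ → ℝ} (ha : Differentiable ℝ a) (hb : ∃ M : ℝ, ∀ x, |a x| ≤ M)
    (h : HS n (deriv a)) : BS n a := by
  cases n with
  | zero => exact ⟨ha.continuous, hb⟩
  | succ n => exact ⟨ha, hb, h.toBS⟩

lemma core_reg {W : ℝ → ℝ} (hW : Integrable W) {c : ℝ} {a b η : ℝ → ℝ}
    (ha : Differentiable ℝ a) (hb : Differentiable ℝ b)
    (ha' : Differentiable ℝ (deriv a)) (hb' : Differentiable ℝ (deriv b))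
    (hη : ∀ x, η x = 1 - (a x ^ 2 + b x ^ 2))
    (hab : ∃ M : ℝ, ∀ x, |a x| ≤ M) (hbb : ∃ M : ℝ, ∀ x, |b x| ≤ M)
    (h2a : MemLp (deriv a) 2 (volume : Measure ℝ)) (h2b : MemLp (deriv b) 2 (volume : Measure ℝ))
    (h2η : MemLp η 2 (volume : Measure ℝ))
    (e1 : ∀ x, deriv (deriv a) x = c * deriv b x + (-1) * (a x * cv W η x))
    (e2 : ∀ x, deriv (deriv b) x = (-c) * deriv a x + (-1) * (b x * cv W η x)) (n : ℕ) :
    HS n (deriv a) ∧ HS n (deriv b) ∧ HS (n + 1) η := by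
  have hdη : ∀ x, HasDerivAt η ((-2) * (a x * deriv a x + b x * deriv b x)) x := by
    intro x
    have h := (((ha x).hasDerivAt.fun_pow 2).add ((hb x).hasDerivAt.fun_pow 2)).const_sub 1
    have he : η = fun x => 1 - (a x ^ 2 + b x ^ 2) := funext hη
    rw [he]
    exact h.congr_deriv (by norm_num; ring)
  have hdη' : deriv η = fun x => (-2) * (a x * deriv a x + b x * deriv b x) :=
    funext fun x => (hdη x).deriv
  have step : ∀ n, HS n (deriv a) → HS n (deriv b) → HS (n + 1) η := by
    intro n h1 h2
    refine ⟨fun x => (hdη x).differentiableAt, h2η, ?_⟩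
    rw [hdη']
    exact HS.const_mul _ ((HS.bmul (bs_of_deriv ha hab h1) h1).add
      (HS.bmul (bs_of_deriv hb hbb h2) h2))
  have main : HS n (deriv a) ∧ HS n (deriv b) := by
    induction n with
    | zero => exact ⟨h2a, h2b⟩
    | succ n ih =>
      obtain ⟨h1, h2⟩ := ih
      have hw : HS n (cv W η) := HS.cv hW (step n h1 h2)
      refine ⟨⟨ha', h2a, ?_⟩, ⟨hb', h2b, ?_⟩⟩
      · rw [funext e1]
        exact (h2.const_mul _).add (HS.const_mul _ (HS.bmul (bs_of_deriv ha hab h1) hw))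
      · rw [funext e2]
        exact (h1.const_mul _).add (HS.const_mul _ (HS.bmul (bs_of_deriv hb hbb h2) hw))
  exact ⟨main.1, main.2, step n main.1 main.2⟩

lemma core_mom {w : ℝ → ℝ} {c : ℝ} {a b η : ℝ → ℝ}
    (ha : Differentiable ℝ a) (hb : Differentiable ℝ b)
    (ha' : Differentiable ℝ (deriv a)) (hb' : Differentiable ℝ (deriv b))
    (hη : ∀ x, η x = 1 - (a x ^ 2 + b x ^ 2))
    (hab : ∃ M : ℝ, ∀ x, |a x| ≤ M) (hbb : ∃ M : ℝ, ∀ x, |b x| ≤ M)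
    (h2a : MemLp (deriv a) 2 (volume : Measure ℝ)) (h2b : MemLp (deriv b) 2 (volume : Measure ℝ))
    (h2η : MemLp η 2 (volume : Measure ℝ))
    (e1 : ∀ x, deriv (deriv a) x = c * deriv b x + (-1) * (a x * w x))
    (e2 : ∀ x, deriv (deriv b) x = (-c) * deriv a x + (-1) * (b x * w x)) (x : ℝ) :
    a x * deriv b x - b x * deriv a x = c / 2 * η x := by
  set K : ℝ → ℝ := fun x => a x * deriv b x - b x * deriv a x - c / 2 * η x with hK
  have hdη : ∀ x, HasDerivAt η ((-2) * (a x * deriv a x + b x * deriv b x)) x := by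
    intro x
    have h := (((ha x).hasDerivAt.fun_pow 2).add ((hb x).hasDerivAt.fun_pow 2)).const_sub 1
    have he : η = fun x => 1 - (a x ^ 2 + b x ^ 2) := funext hη
    rw [he]
    exact h.congr_deriv (by norm_num; ring)
  have hKd : ∀ x, HasDerivAt K 0 x := by
    intro x
    have h := ((((ha x).hasDerivAt.fun_mul (hb' x).hasDerivAt).fun_sub
      ((hb x).hasDerivAt.fun_mul (ha' x).hasDerivAt)).fun_sub ((hdη x).const_mul (c / 2)))
    exact h.congr_deriv (by rw [e1, e2]; ring)
  have hconst : ∀ y, K y = K x := fun y =>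
    is_const_of_deriv_eq_zero (fun z => (hKd z).differentiableAt) (fun z => (hKd z).deriv) y x
  have hKm : MemLp K 2 (volume : Measure ℝ) :=
    ((memLp_bdd_mul ha.continuous hab h2b).sub (memLp_bdd_mul hb.continuous hbb h2a)).sub
      (h2η.const_mul (c / 2))
  rw [funext hconst, memLp_const_iff (by norm_num) (by norm_num)] at hKm
  have : K x = 0 := by
    rcases hKm with h | h
    · exact h
    · simp at h
  simp only [hK] at this
  linarith

lemma exists_lower {η : ℝ → ℝ} (h : HS 1 η) (hlt : ∀ x, η x < 1) :
    ∃ m : ℝ, 0 < m ∧ ∀ x, m ≤ 1 - η x := by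
  obtain ⟨h1, h2⟩ := h.tendsto
  have hc : Continuous η := h.1.continuous
  obtain ⟨R, hR⟩ := eventually_atTop.1 (h1.eventually (gt_mem_nhds (show (0 : ℝ) < 1 / 2 by norm_num)))
  obtain ⟨S, hS⟩ := eventually_atBot.1 (h2.eventually (gt_mem_nhds (show (0 : ℝ) < 1 / 2 by norm_num)))
  obtain ⟨y, -, hy⟩ := (isCompact_Icc (a := min S R) (b := R)).exists_isMaxOn
    ⟨R, min_le_right _ _, le_rfl⟩ hc.continuousOn
  refine ⟨min (1 / 2) (1 - η y), lt_min (by norm_num) (by linarith [hlt y]), fun x => ?_⟩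
  by_cases hx : R ≤ x
  · exact (min_le_left _ _).trans (by linarith [hR x hx])
  by_cases hx' : x ≤ S
  · exact (min_le_left _ _).trans (by linarith [hS x hx'])
  · push Not at hx hx'
    have : η x ≤ η y := hy ⟨(min_le_left _ _).trans hx'.le, hx.le⟩
    exact (min_le_right _ _).trans (by linarith)

lemma lift_eq {u : ℝ → ℂ} {u' : ℝ → ℂ} {η η' θ θ' : ℝ → ℝ}
    (hu : ∀ x, HasDerivAt u (u' x) x) (hη : ∀ x, HasDerivAt η (η' x) x)
    (hθ : ∀ x, HasDerivAt θ (θ' x) x) (hlt : ∀ x, η x < 1)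
    (h0 : u 0 = ((Real.sqrt (1 - η 0) : ℝ) : ℂ) * Complex.exp (Complex.I * (θ 0 : ℂ)))
    (he : ∀ x, u' x = ((-(η' x) / 2 / (1 - η x) : ℝ) : ℂ) * u x + Complex.I * (θ' x : ℂ) * u x)
    (x : ℝ) :
    u x = ((Real.sqrt (1 - η x) : ℝ) : ℂ) * Complex.exp (Complex.I * (θ x : ℂ)) := by
  have hpos : ∀ x, 0 < Real.sqrt (1 - η x) := fun x => Real.sqrt_pos.2 (by linarith [hlt x])
  set v : ℝ → ℂ := fun x => ((Real.sqrt (1 - η x) : ℝ) : ℂ) * Complex.exp (Complex.I * (θ x : ℂ))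
    with hv
  have hvne : ∀ x, v x ≠ 0 := fun x =>
    mul_ne_zero (by exact_mod_cast (hpos x).ne') (Complex.exp_ne_zero _)
  have hvd : ∀ x, HasDerivAt v
      (((-(η' x) / 2 / (1 - η x) : ℝ) : ℂ) * v x + Complex.I * (θ' x : ℂ) * v x) x := by
    intro x
    have h1 : HasDerivAt (fun x => Real.sqrt (1 - η x))
        (-(η' x) / 2 / (1 - η x) * Real.sqrt (1 - η x)) x := by
      have := ((hη x).const_sub 1).sqrt (by linarith [hlt x])
      refine this.congr_deriv ?_
      have hs : Real.sqrt (1 - η x) * Real.sqrt (1 - η x) = 1 - η x :=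
        Real.mul_self_sqrt (by linarith [hlt x])
      have hne := (hpos x).ne'
      rw [div_mul_eq_mul_div, div_eq_div_iff (by positivity) (by linarith [hlt x])]
      linear_combination (η' x) * hs
    have h2 : HasDerivAt (fun x => Complex.exp (Complex.I * (θ x : ℂ)))
        (Complex.exp (Complex.I * (θ x : ℂ)) * (Complex.I * (θ' x : ℂ))) x :=
      ((hθ x).ofReal_comp.const_mul Complex.I).cexp
    refine (h1.ofReal_comp.mul h2).congr_deriv ?_
    simp only [hv]
    push_cast
    ring
  have hq : ∀ x, HasDerivAt (fun x => u x / v x) 0 x := by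
    intro x
    refine ((hu x).fun_div (hvd x) (hvne x)).congr_deriv ?_
    rw [he x]
    rw [div_eq_zero_iff]
    left; ring
  have hc : u x / v x = u 0 / v 0 :=
    is_const_of_deriv_eq_zero (fun z => (hq z).differentiableAt) (fun z => (hq z).deriv) x 0
  have h00 : u 0 = v 0 := h0
  rw [h00, div_self (hvne 0), div_eq_one_iff_eq (hvne x)] at hc
  exact hc

lemma BS.const (n : ℕ) (k : ℝ) : BS n (fun _ : ℝ => k) := by
  induction n generalizing k with
  | zero => exact ⟨continuous_const, |k|, fun _ => le_rfl⟩
  | succ n ih =>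
    exact ⟨differentiable_const k, ⟨|k|, fun _ => le_rfl⟩, by simpa using ih 0⟩

lemma iter_clm (L : ℂ →L[ℝ] ℝ) {u : ℝ → ℂ} (hu : ContDiff ℝ (⊤ : ℕ∞) u) (j : ℕ) (x : ℝ) :
    iteratedDeriv j (fun x => L (u x)) x = L (iteratedDeriv j u x) := by
  induction j generalizing u with
  | zero => simp
  | succ j ih =>
    rw [iteratedDeriv_succ', iteratedDeriv_succ']
    obtain ⟨hd, hs⟩ := contDiff_infty_iff_deriv.1 hu
    have : deriv (fun x => L (u x)) = fun x => L (deriv u x) := by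
      funext y
      exact (L.hasFDerivAt.comp_hasDerivAt y (hd y).hasDerivAt).deriv
    rw [this]
    exact ih hs



/-- Decay and lifting properties of dark solitons: a bounded smooth finite-energy solution
`u` of the nonlocal traveling-wave equation with speed `c > 0` admits a smooth lifting
`u = √(1 - η) e^{iθ}` with `η < 1`, `θ' ∈ Hᵏ(ℝ)` and `η ∈ Hᵏ(ℝ)` for all `k`,
`|u| → 1` at `±∞`, and all derivatives of `u`, `θ`, `η` of order `≥ 1` tend to `0`
at `±∞`. -/
theorem darkSoliton_lifting_and_decay
    (W : ℝ → ℝ) (hW_int : Integrable W) (hW_even : ∀ x, W (-x) = W x)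
    (c : ℝ) (hc : 0 < c)
    (u : ℝ → ℂ) (hu_smooth : ContDiff ℝ (⊤ : ℕ∞) u)
    (hu_bdd : ∃ M : ℝ, ∀ x, ‖u x‖ ≤ M)
    (hu_deriv : MemLp (deriv u) 2 (volume : Measure ℝ))
    (hu_mod : MemLp (fun x : ℝ => 1 - ‖u x‖ ^ 2) 2 (volume : Measure ℝ))
    (heq : ∀ x : ℝ,
      Complex.I * (c : ℂ) * deriv u x + deriv (deriv u) x +
        (((∫ t : ℝ, W t * (1 - ‖u (x - t)‖ ^ 2)) : ℝ) : ℂ) * u x = 0) :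
    ∃ θ η : ℝ → ℝ,
      ContDiff ℝ (⊤ : ℕ∞) θ ∧ ContDiff ℝ (⊤ : ℕ∞) η ∧
      (∀ x, η x < 1) ∧
      (∀ x, u x = ((Real.sqrt (1 - η x) : ℝ) : ℂ) * Complex.exp (Complex.I * (θ x : ℂ))) ∧
      (∀ j : ℕ, MemLp (iteratedDeriv j (deriv θ)) 2 (volume : Measure ℝ)) ∧
      (∀ j : ℕ, MemLp (iteratedDeriv j η) 2 (volume : Measure ℝ)) ∧
      Tendsto (fun x => ‖u x‖) atTop (nhds 1) ∧
      Tendsto (fun x => ‖u x‖) atBot (nhds 1) ∧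
      (∀ j : ℕ, 1 ≤ j →
        Tendsto (iteratedDeriv j u) atTop (nhds 0) ∧
        Tendsto (iteratedDeriv j u) atBot (nhds 0) ∧
        Tendsto (iteratedDeriv j θ) atTop (nhds 0) ∧
        Tendsto (iteratedDeriv j θ) atBot (nhds 0) ∧
        Tendsto (iteratedDeriv j η) atTop (nhds 0) ∧
        Tendsto (iteratedDeriv j η) atBot (nhds 0)) := by
  obtain ⟨M, hM⟩ := hu_bdd
  set a : ℝ → ℝ := fun x => (u x).re with ha_def
  set b : ℝ → ℝ := fun x => (u x).im with hb_def
  set η : ℝ → ℝ := fun x => 1 - ‖u x‖ ^ 2 with hη_def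
  have hsa : ContDiff ℝ (⊤ : ℕ∞) a := Complex.reCLM.contDiff.comp hu_smooth
  have hsb : ContDiff ℝ (⊤ : ℕ∞) b := Complex.imCLM.contDiff.comp hu_smooth
  have hη : ∀ x, η x = 1 - (a x ^ 2 + b x ^ 2) := by
    intro x
    simp only [hη_def, ha_def, hb_def, Complex.sq_norm, Complex.normSq_apply]
    ring
  have hsη : ContDiff ℝ (⊤ : ℕ∞) η := by
    rw [funext hη]
    exact contDiff_const.sub ((hsa.pow 2).add (hsb.pow 2))
  obtain ⟨hdu, hsu'⟩ := contDiff_infty_iff_deriv.1 hu_smooth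
  obtain ⟨hdu', -⟩ := contDiff_infty_iff_deriv.1 hsu'
  obtain ⟨hda, hsa'⟩ := contDiff_infty_iff_deriv.1 hsa
  obtain ⟨hdb, hsb'⟩ := contDiff_infty_iff_deriv.1 hsb
  obtain ⟨hda', -⟩ := contDiff_infty_iff_deriv.1 hsa'
  obtain ⟨hdb', -⟩ := contDiff_infty_iff_deriv.1 hsb'
  have da : ∀ x, deriv a x = (deriv u x).re := fun x =>
    (Complex.reCLM.hasFDerivAt.comp_hasDerivAt x (hdu x).hasDerivAt).deriv
  have db : ∀ x, deriv b x = (deriv u x).im := fun x =>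
    (Complex.imCLM.hasFDerivAt.comp_hasDerivAt x (hdu x).hasDerivAt).deriv
  have dda : ∀ x, deriv (deriv a) x = (deriv (deriv u) x).re := fun x => by
    rw [funext da]
    exact (Complex.reCLM.hasFDerivAt.comp_hasDerivAt x (hdu' x).hasDerivAt).deriv
  have ddb : ∀ x, deriv (deriv b) x = (deriv (deriv u) x).im := fun x => by
    rw [funext db]
    exact (Complex.imCLM.hasFDerivAt.comp_hasDerivAt x (hdu' x).hasDerivAt).deriv
  have hab : ∃ M : ℝ, ∀ x, |a x| ≤ M := ⟨M, fun x => (Complex.abs_re_le_norm _).trans (hM x)⟩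
  have hbb : ∃ M : ℝ, ∀ x, |b x| ≤ M := ⟨M, fun x => (Complex.abs_im_le_norm _).trans (hM x)⟩
  have h2a : MemLp (deriv a) 2 (volume : Measure ℝ) := by
    rw [funext da]; exact hu_deriv.re
  have h2b : MemLp (deriv b) 2 (volume : Measure ℝ) := by
    rw [funext db]; exact hu_deriv.im
  have heq' : ∀ x, Complex.I * (c : ℂ) * deriv u x + deriv (deriv u) x +
        ((cv W η x : ℝ) : ℂ) * u x = 0 := heq
  have e1 : ∀ x, deriv (deriv a) x = c * deriv b x + (-1) * (a x * cv W η x) := by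
    intro x
    have := congrArg Complex.re (heq' x)
    simp at this
    rw [dda, db]
    simp only [ha_def]
    linarith
  have e2 : ∀ x, deriv (deriv b) x = (-c) * deriv a x + (-1) * (b x * cv W η x) := by
    intro x
    have := congrArg Complex.im (heq' x)
    simp at this
    rw [ddb, da]
    simp only [hb_def]
    linarith
  have reg := core_reg hW_int hda hdb hda' hdb' hη hab hbb h2a h2b hu_mod e1 e2
  have mom := core_mom hda hdb hda' hdb' hη hab hbb h2a h2b hu_mod e1 e2
  have rη : ∀ n, HS n η := fun n => (reg n).2.2.pred
  have hlt : ∀ x, η x < 1 := by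
    intro x
    by_contra hcon
    have h1 : a x ^ 2 + b x ^ 2 ≤ 0 := by linarith [hη x]
    have ha0 : a x = 0 := by nlinarith [sq_nonneg (a x), sq_nonneg (b x)]
    have hb0 : b x = 0 := by nlinarith [sq_nonneg (a x), sq_nonneg (b x)]
    have h2 := mom x
    have h3 := hη x
    rw [ha0, hb0] at h2 h3
    rw [h3] at h2
    linarith
  obtain ⟨m, hm, hml⟩ := exists_lower (rη 1) hlt
  have hne : ∀ x, 1 - η x ≠ 0 := fun x => by linarith [hlt x]
  set φ : ℝ → ℝ := fun x => c / 2 * ((1 - η x)⁻¹ * η x) with hφ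
  have hsφ : ContDiff ℝ (⊤ : ℕ∞) φ :=
    contDiff_const.mul (((contDiff_const.sub hsη).inv hne).mul hsη)
  have rφ : ∀ n, HS n φ := by
    intro n
    refine HS.const_mul _ (HS.bmul (BS.inv ?_ hm hml) (rη n))
    have h1 : BS n (fun x => (fun _ : ℝ => (1 : ℝ)) x + (-1) * η x) :=
      (BS.const n 1).add (HS.const_mul (-1) (rη (n + 1))).toBS
    have : (fun x => 1 - η x) = fun x => (fun _ : ℝ => (1 : ℝ)) x + (-1) * η x := by
      funext x; ring
    rw [this]; exact h1
  set θ : ℝ → ℝ := fun x => Complex.arg (u 0) + ∫ t in (0 : ℝ)..x, φ t with hθ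
  have hdθ : ∀ x, HasDerivAt θ (φ x) x := fun x =>
    (hsφ.continuous.integral_hasStrictDerivAt 0 x).hasDerivAt.const_add _
  have hθ' : deriv θ = φ := funext fun x => (hdθ x).deriv
  have hsθ : ContDiff ℝ (⊤ : ℕ∞) θ := by
    refine contDiff_infty_iff_deriv.2 ⟨fun x => (hdθ x).differentiableAt, ?_⟩
    rw [hθ']; exact hsφ
  have hdη : ∀ x, HasDerivAt η ((-2) * (a x * deriv a x + b x * deriv b x)) x := by
    intro x
    have h := (((hda x).hasDerivAt.fun_pow 2).add ((hdb x).hasDerivAt.fun_pow 2)).const_sub 1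
    rw [funext hη]
    exact h.congr_deriv (by norm_num; ring)
  have hlift : ∀ x, u x = ((Real.sqrt (1 - η x) : ℝ) : ℂ) *
      Complex.exp (Complex.I * (θ x : ℂ)) := by
    refine lift_eq (fun x => (hdu x).hasDerivAt) hdη hdθ hlt ?_ ?_
    · have h1 : Real.sqrt (1 - η 0) = ‖u 0‖ := by
        simp [hη_def]
      have h2 : θ 0 = Complex.arg (u 0) := by simp [hθ]
      rw [h1, h2, mul_comm Complex.I]
      exact (Complex.norm_mul_exp_arg_mul_I (u 0)).symm
    · intro x
      have hm1 := mom x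
      have hφx : φ x = (a x * deriv b x - b x * deriv a x) / (1 - η x) := by
        rw [hm1]; simp only [hφ]; field_simp
      have hmod : a x ^ 2 + b x ^ 2 = 1 - η x := by linarith [hη x]
      have hq : a x ^ 2 + b x ^ 2 ≠ 0 := by rw [hmod]; exact hne x
      have hux : (u x).re = a x := rfl
      have huy : (u x).im = b x := rfl
      rw [hφx, ← hmod]
      apply Complex.ext
      · simp only [Complex.add_re, Complex.mul_re, Complex.mul_im, Complex.ofReal_re,
          Complex.ofReal_im, Complex.I_re, Complex.I_im, hux, huy, ← da x]
        field_simp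
        ring
      · simp only [Complex.add_im, Complex.mul_re, Complex.mul_im, Complex.ofReal_re,
          Complex.ofReal_im, Complex.I_re, Complex.I_im, hux, huy, ← db x]
        field_simp
        ring
  have hnorm : ∀ l : Filter ℝ, Tendsto η l (nhds 0) → Tendsto (fun x => ‖u x‖) l (nhds 1) := by
    intro l hl
    have h1 : Tendsto (fun x => Real.sqrt (1 - η x)) l (nhds (Real.sqrt (1 - 0))) :=
      (hl.const_sub 1).sqrt
    simpa [hη_def] using h1
  refine ⟨θ, η, hsθ, hsη, hlt, hlift, ?_, ?_, hnorm _ (rη 1).tendsto.1, hnorm _ (rη 1).tendsto.2, ?_⟩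
  · intro j
    rw [hθ']
    exact HS.iter rφ j 0
  · intro j
    exact HS.iter rη j 0
  · intro j hj
    obtain ⟨k, rfl⟩ : ∃ k, j = k + 1 := ⟨j - 1, by omega⟩
    have ta := (HS.iter (fun n => (reg n).1) k 1).tendsto
    have tb := (HS.iter (fun n => (reg n).2.1) k 1).tendsto
    have tθ := (HS.iter rφ k 1).tendsto
    have tη := (HS.iter rη (k + 1) 1).tendsto
    rw [← iteratedDeriv_succ'] at ta tb
    rw [← hθ', ← iteratedDeriv_succ'] at tθ
    have hiu : iteratedDeriv (k + 1) u = fun x =>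
        ((iteratedDeriv (k + 1) a x : ℝ) : ℂ) + ((iteratedDeriv (k + 1) b x : ℝ) : ℂ) * Complex.I := by
      funext x
      have hra := iter_clm Complex.reCLM hu_smooth (k + 1) x
      have hrb := iter_clm Complex.imCLM hu_smooth (k + 1) x
      have hra' : iteratedDeriv (k + 1) a x = (iteratedDeriv (k + 1) u x).re := hra
      have hrb' : iteratedDeriv (k + 1) b x = (iteratedDeriv (k + 1) u x).im := hrb
      rw [hra', hrb']
      exact (Complex.re_add_im _).symm
    have htu : ∀ l : Filter ℝ, Tendsto (iteratedDeriv (k + 1) a) l (nhds 0) →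
        Tendsto (iteratedDeriv (k + 1) b) l (nhds 0) →
        Tendsto (iteratedDeriv (k + 1) u) l (nhds 0) := by
      intro l h1 h2
      rw [hiu]
      have h1' := (Complex.continuous_ofReal.tendsto 0).comp h1
      have h2' := ((Complex.continuous_ofReal.tendsto 0).comp h2).mul_const Complex.I
      simpa using h1'.add h2'
    exact ⟨htu _ ta.1 tb.1, htu _ ta.2 tb.2, tθ.1, tθ.2, tη.1, tη.2⟩
end

section
/- Let W ∈ L¹(ℝ, ℝ) be an even function and let Ŵ(ξ) = ∫_ℝ e^{−i x ξ} W(x) dx denote its Fourier transform. Assume there exists σ ∈ (0, 1] such that inf_{ξ ∈ ℝ} (Ŵ(ξ) + ξ²/2) = σ. Then for almost every c ∈ (0, √(2σ)) (with respect to Lebesgue measure) there exists a nonconstant bounded smooth function u : ℝ → ℂ with u' ∈ L²(ℝ) and 1 − |u|² ∈ L²(ℝ) satisfying i·c·u'(x) + u''(x) + (W ⋆ (1 − |u|²))(x)·u(x) = 0 for all x ∈ ℝ. -/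
open MeasureTheory Filter


namespace DS
open scoped Topology

lemma fatou_slope (f : ℕ → ℝ → ℝ) (hf : ∀ n, Monotone (f n)) (a b : ℝ) (hab : a < b) (C : ℝ)
    (hC : ∀ n, f n b - f n a ≤ C) :
    ∀ᵐ c ∂(volume.restrict (Set.Ioo a b)), ∃ M : ℝ, ∃ᶠ n in atTop,
      DifferentiableAt ℝ (f n) c ∧ deriv (f n) c ≤ M := by
  have hdiff : ∀ᵐ c ∂(volume.restrict (Set.Ioo a b)), ∀ n, DifferentiableAt ℝ (f n) c :=
    ae_restrict_of_ae (ae_all_iff.2 fun n => (hf n).ae_differentiableAt)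
  set g : ℕ → ℝ → ENNReal := fun n c => ENNReal.ofReal (deriv (f n) c) with hg
  have hgm : ∀ n, Measurable (g n) := fun n => (measurable_deriv (f n)).ennreal_ofReal
  have hbound : ∀ n, ∫⁻ c in Set.Ioo a b, g n c ≤ ENNReal.ofReal C := by
    intro n
    have h1 : IntervalIntegrable (deriv (f n)) volume a b :=
      ((hf n).monotoneOn _).intervalIntegrable_deriv
    have h2 := ((hf n).monotoneOn (Set.uIcc a b)).intervalIntegral_deriv_mem_uIcc
    have h3 : 0 ≤ f n b - f n a := sub_nonneg.2 (hf n hab.le)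
    rw [Set.uIcc_of_le h3] at h2
    rw [intervalIntegral.integral_of_le hab.le] at h2
    rw [intervalIntegrable_iff_integrableOn_Ioc_of_le hab.le] at h1
    have h4 : ∫⁻ c in Set.Ioo a b, g n c ≤ ∫⁻ c in Set.Ioc a b, g n c :=
      lintegral_mono_set Set.Ioo_subset_Ioc_self
    refine h4.trans ?_
    rw [hg, ← ofReal_integral_eq_lintegral_ofReal h1]
    · exact ENNReal.ofReal_le_ofReal (h2.2.trans (hC n))
    · exact Eventually.of_forall fun c => (hf n).deriv_nonneg
  have hlim : ∫⁻ c in Set.Ioo a b, liminf (fun n => g n c) atTop ≤ ENNReal.ofReal C := by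
    refine (lintegral_liminf_le hgm).trans ?_
    refine (liminf_le_liminf (Eventually.of_forall hbound)).trans ?_
    simp
  have hfin : ∀ᵐ c ∂(volume.restrict (Set.Ioo a b)), liminf (fun n => g n c) atTop < ⊤ := by
    refine ae_lt_top (Measurable.liminf hgm) ?_
    exact (hlim.trans_lt ENNReal.ofReal_lt_top).ne
  filter_upwards [hdiff, hfin] with c h1 h2
  obtain ⟨K, hK1, hK2⟩ := exists_between h2
  refine ⟨K.toReal, ?_⟩
  have := frequently_lt_of_liminf_lt (by isBoundedDefault) hK1
  refine this.mono fun n hn => ⟨h1 n, ?_⟩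
  have h5 : ENNReal.ofReal (deriv (f n) c) ≤ K := hn.le
  exact (ENNReal.ofReal_le_iff_le_toReal hK2.ne).1 h5

variable {ι : Type} [Fintype ι]

def pos (ι : Type) : Set (ι → ℝ) := {ρ | ∀ j, 0 < ρ j}

lemma isOpen_pos : IsOpen (pos ι) := by
  have : pos ι = Set.univ.pi fun _ => Set.Ioi (0:ℝ) := by
    ext; simp [pos]
  rw [this]
  exact isOpen_set_pi Set.finite_univ fun _ _ => isOpen_Ioi

def levelSet (E Q : (ι → ℝ) → ℝ) (a e : ι → ℝ) (c : ℝ) : Set ℝ :=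
  {m | ∃ p : ℝ → ι → ℝ, Continuous p ∧ (∀ t, p t ∈ pos ι) ∧ p 0 = a ∧ p 1 = e ∧
    ∀ t, E (p t) - c ^ 2 / 8 * Q (p t) ≤ m}

noncomputable def level (E Q : (ι → ℝ) → ℝ) (a e : ι → ℝ) (c : ℝ) : ℝ := sInf (levelSet E Q a e c)

lemma tube {X : Type*} [TopologicalSpace X] {K : Set X} (hK : IsCompact K) {U : Set (X × ℝ)}
    (hU : ∀ x ∈ K, U ∈ 𝓝 (x, (0:ℝ))) : ∃ τ > 0, ∀ x ∈ K, ∀ s, 0 ≤ s → s ≤ τ → (x, s) ∈ U := by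
  have h : U ∈ 𝓝ˢ (K ×ˢ ({0} : Set ℝ)) := by
    rw [mem_nhdsSet_iff_forall]
    rintro ⟨x, s⟩ ⟨hx, hs⟩
    simp only [Set.mem_singleton_iff] at hs
    simp only [hs]; exact hU x hx
  rw [hK.nhdsSet_prod_eq isCompact_singleton, nhdsSet_singleton] at h
  obtain ⟨A, hA, B, hB, hAB⟩ := Filter.mem_prod_iff.1 h
  obtain ⟨ε, hε, hb⟩ := Metric.mem_nhds_iff.1 hB
  refine ⟨ε / 2, by positivity, fun x hx s hs hs' => hAB ⟨subset_of_mem_nhdsSet hA hx, hb ?_⟩⟩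
  simp [abs_of_nonneg hs]; linarith

set_option maxHeartbeats 1000000 in
theorem mp_crit (E Q : (ι → ℝ) → ℝ) (gE gQ : (ι → ℝ) → (ι → ℝ))
    (hE : ContinuousOn E (pos ι)) (hQ : ContinuousOn Q (pos ι))
    (hgE : ContinuousOn gE (pos ι)) (hgQ : ContinuousOn gQ (pos ι))
    (dE : ∀ ρ ∈ pos ι, ∀ w : ι → ℝ, HasDerivAt (fun s : ℝ => E (ρ + s • w)) (∑ j, gE ρ j * w j) 0)
    (dQ : ∀ ρ ∈ pos ι, ∀ w : ι → ℝ, HasDerivAt (fun s : ℝ => Q (ρ + s • w)) (∑ j, gQ ρ j * w j) 0)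
    (hQ0 : ∀ ρ, 0 ≤ Q ρ)
    (hQc : ∀ M : ℝ, IsCompact {ρ | ρ ∈ pos ι ∧ Q ρ ≤ M})
    (a e : ι → ℝ) (c1 c α M : ℝ) (hc1 : 0 < c1) (hc : c1 < c) (hα : 0 < α) (hM : 0 ≤ M)
    (ha : E a - c ^ 2 / 8 * Q a ≤ 0) (he : E e - c ^ 2 / 8 * Q e ≤ 0)
    (hne : ∀ c' : ℝ, (levelSet E Q a e c').Nonempty)
    (hlow : ∀ p : ℝ → ι → ℝ, Continuous p → (∀ t, p t ∈ pos ι) → p 0 = a → p 1 = e →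
      ∃ t, α ≤ E (p t) - c ^ 2 / 8 * Q (p t))
    (hslope : ∃ᶠ c' in 𝓝[<] c, level E Q a e c' ≤ level E Q a e c + M * (c - c')) :
    ∃ ρ ∈ pos ι, Q ρ ≤ 4 * (M + 4) / c1 ∧
      α / 2 ≤ E ρ - c ^ 2 / 8 * Q ρ ∧ E ρ - c ^ 2 / 8 * Q ρ ≤ level E Q a e c + 1 ∧
      ∀ j, gE ρ j - c ^ 2 / 8 * gQ ρ j = 0 := by
  set J : (ι → ℝ) → ℝ := fun ρ => E ρ - c ^ 2 / 8 * Q ρ with hJdef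
  set g : (ι → ℝ) → (ι → ℝ) := fun ρ => gE ρ - (c ^ 2 / 8) • gQ ρ with hgdef
  have hJ : ContinuousOn J (pos ι) := hE.sub (continuousOn_const.mul hQ)
  have hg : ContinuousOn g (pos ι) := by rw [hgdef]; fun_prop
  have dJ : ∀ ρ ∈ pos ι, ∀ w : ι → ℝ,
      HasDerivAt (fun s : ℝ => J (ρ + s • w)) (∑ j, g ρ j * w j) 0 := by
    intro ρ hρ w
    have := (dE ρ hρ w).sub ((dQ ρ hρ w).const_mul (c ^ 2 / 8))
    refine this.congr_deriv ?_
    rw [Finset.mul_sum, ← Finset.sum_sub_distrib]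
    refine Finset.sum_congr rfl fun j _ => ?_
    simp [hgdef]; ring
  set γ := level E Q a e c with hγ
  have hbdd : BddBelow (levelSet E Q a e c) := by
    refine ⟨α, ?_⟩
    rintro m ⟨p, h1, h2, h3, h4, h5⟩
    obtain ⟨t, ht⟩ := hlow p h1 h2 h3 h4
    exact ht.trans (h5 t)
  have hγα : α ≤ γ := by
    refine le_csInf (hne c) ?_
    rintro m ⟨p, h1, h2, h3, h4, h5⟩
    obtain ⟨t, ht⟩ := hlow p h1 h2 h3 h4
    exact ht.trans (h5 t)
  set M' := 4 * (M + 4) / c1 with hM'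
  by_contra hcon
  push Not at hcon
  set K : Set (ι → ℝ) := {ρ | ρ ∈ pos ι ∧ Q ρ ≤ M'} ∩ J ⁻¹' (Set.Icc (α / 2) (γ + 1)) with hKdef
  have hKc : IsCompact K := by
    have h0 := hQc M'
    have : ContinuousOn J {ρ | ρ ∈ pos ι ∧ Q ρ ≤ M'} := hJ.mono fun x hx => hx.1
    exact h0.of_isClosed_subset (this.preimage_isClosed_of_isClosed h0.isClosed isClosed_Icc)
      Set.inter_subset_left
  have hKpos : K ⊆ pos ι := fun x hx => hx.1.1
  -- lower bound on gradient
  have hgpos : ∀ ρ ∈ K, 0 < ∑ j, g ρ j * g ρ j := by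
    intro ρ hρ
    obtain ⟨j, hj⟩ := hcon ρ hρ.1.1 hρ.1.2 hρ.2.1 hρ.2.2
    refine Finset.sum_pos' (fun i _ => mul_self_nonneg _) ⟨j, Finset.mem_univ _, ?_⟩
    exact mul_self_pos.2 (by simpa [hgdef] using hj)
  have hgc : ContinuousOn (fun ρ => ∑ j, g ρ j * g ρ j) (pos ι) := by
    refine continuousOn_finsetSum _ fun j _ => ?_
    have := continuousOn_pi.1 hg j
    exact this.mul this
  obtain ⟨d, hd, hdK⟩ : ∃ d > 0, ∀ ρ ∈ K, d ≤ ∑ j, g ρ j * g ρ j := by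
    rcases K.eq_empty_or_nonempty with h | h
    · exact ⟨1, one_pos, by simp [h]⟩
    · obtain ⟨x, hx, hmin⟩ := hKc.exists_isMinOn h (hgc.mono hKpos)
      exact ⟨_, hgpos x hx, fun ρ hρ => hmin hρ⟩
  -- uniform step
  set φ : (ι → ℝ) × ℝ → (ι → ℝ) := fun q => q.1 + q.2 • (-(g q.1)) with hφ
  have hφc : ∀ ρ ∈ pos ι, ContinuousAt φ (ρ, 0) := by
    intro ρ hρ
    have h1 : ContinuousAt g ρ := hg.continuousAt (isOpen_pos.mem_nhds hρ)
    have h2 : ContinuousAt (fun q : (ι → ℝ) × ℝ => g q.1) (ρ, 0) :=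
      ContinuousAt.comp (f := Prod.fst) (x := ((ρ, 0) : (ι → ℝ) × ℝ)) h1 continuousAt_fst
    exact continuousAt_fst.add (continuousAt_snd.smul h2.neg)
  obtain ⟨τ, hτ, hstep⟩ : ∃ τ > 0, ∀ ρ ∈ K, ∀ s, 0 ≤ s → s ≤ τ →
      (ρ, s) ∈ {q : (ι → ℝ) × ℝ | φ q ∈ pos ι ∧ d / 2 < ∑ j, g (φ q) j * g q.1 j} := by
    refine tube hKc fun ρ hρ => ?_
    have hρp := hKpos hρ
    have hφ0 : φ (ρ, 0) = ρ := by simp [hφ]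
    have h1 : ∀ᶠ q in 𝓝 (ρ, (0:ℝ)), φ q ∈ pos ι := by
      refine (hφc ρ hρp).eventually_mem ?_
      rw [hφ0]; exact isOpen_pos.mem_nhds hρp
    have h2 : ContinuousAt (fun q => ∑ j, g (φ q) j * g q.1 j) (ρ, (0:ℝ)) := by
      have h1 : ContinuousAt g ρ := hg.continuousAt (isOpen_pos.mem_nhds hρp)
      have h3 : ContinuousAt (fun q : (ι → ℝ) × ℝ => g q.1) (ρ, 0) :=
        ContinuousAt.comp (f := Prod.fst) (x := ((ρ, 0) : (ι → ℝ) × ℝ)) h1 continuousAt_fst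
      have h4 : ContinuousAt (fun q : (ι → ℝ) × ℝ => g (φ q)) (ρ, 0) := by
        refine ContinuousAt.comp (g := g) (f := φ) (x := ((ρ, 0) : (ι → ℝ) × ℝ)) ?_ (hφc ρ hρp)
        rw [hφ0]; exact h1
      refine tendsto_finsetSum _ fun j _ => ?_
      exact (continuousAt_pi.1 h4 j).mul (continuousAt_pi.1 h3 j)
    have h3 : ∀ᶠ q in 𝓝 (ρ, (0:ℝ)), d / 2 < ∑ j, g (φ q) j * g q.1 j := by
      refine h2.eventually_const_lt ?_
      simp only [hφ0]
      linarith [hdK ρ hρ]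
    exact h1.and h3
  have hdec : ∀ ρ ∈ K, ∀ s, 0 ≤ s → s ≤ τ → J (ρ + s • (-(g ρ))) ≤ J ρ - d / 2 * s := by
    intro ρ hρ s hs hs'
    have hder : ∀ x ∈ Set.Icc 0 τ, HasDerivAt (fun x : ℝ => J (ρ + x • (-(g ρ))))
        (∑ j, g (φ (ρ, x)) j * (-(g ρ)) j) x := by
      intro x hx
      have h1 := dJ (φ (ρ, x)) (hstep ρ hρ x hx.1 hx.2).1 (-(g ρ))
      have h2 : HasDerivAt (fun y : ℝ => y - x) 1 x := (hasDerivAt_id x).sub_const x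
      have h3 := HasDerivAt.scomp_of_eq (h := fun y : ℝ => y - x) x h1 h2 (by simp)
      simp only [one_smul] at h3
      refine h3.congr_of_eventuallyEq (Eventually.of_forall fun y => ?_)
      simp only [Function.comp, hφ]
      congr 1
      rw [add_assoc, ← add_smul]; congr 2; ring
    have hanti : AntitoneOn (fun x : ℝ => J (ρ + x • (-(g ρ))) + d / 2 * x) (Set.Icc 0 τ) := by
      refine antitoneOn_of_deriv_nonpos (convex_Icc 0 τ) ?_ ?_ ?_
      · intro x hx
        exact ((hder x hx).add ((hasDerivAt_id x).const_mul _)).continuousAt.continuousWithinAt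
      · intro x hx
        rw [interior_Icc] at hx
        exact ((hder x ⟨hx.1.le, hx.2.le⟩).add
          ((hasDerivAt_id x).const_mul _)).differentiableAt.differentiableWithinAt
      · intro x hx
        rw [interior_Icc] at hx
        have hx' : x ∈ Set.Icc 0 τ := ⟨hx.1.le, hx.2.le⟩
        have := ((hder x hx').add ((hasDerivAt_id x).const_mul (d/2))).deriv
        have h5 := (hstep ρ hρ x hx'.1 hx'.2).2
        have h6 : deriv (fun x : ℝ => J (ρ + x • (-(g ρ))) + d / 2 * x) x
          = ∑ j, g (φ (ρ, x)) j * (-(g ρ)) j + d / 2 * 1 := this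
        rw [h6]
        simp only [Pi.neg_apply, mul_neg, Finset.sum_neg_distrib]
        simp only at h5
        linarith
    have := hanti (⟨le_rfl, hτ.le⟩ : (0:ℝ) ∈ Set.Icc 0 τ) ⟨hs, hs'⟩ hs
    simp at this
    simp only [smul_neg]
    linarith
  -- choose c'
  set ε0 := min (min (α / 8) (1 / (M + 4))) (min (τ * d / (4 * (M + 4))) ((c - c1))) with hε0
  have hε0p : 0 < ε0 := by
    have : 0 < c - c1 := by linarith
    rw [hε0]; positivity
  have hev : ∀ᶠ c' in 𝓝[<] c, c - ε0 < c' ∧ c' < c := by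
    have h1 : ∀ᶠ c' in 𝓝[<] c, c' < c := eventually_mem_nhdsWithin
    have h2 : ∀ᶠ c' in 𝓝[<] c, c - ε0 < c' :=
      (eventually_gt_nhds (by linarith : c - ε0 < c)).filter_mono nhdsWithin_le_nhds
    exact h2.and h1
  obtain ⟨c', hc'1, hc'2, hc'3⟩ := (hslope.and_eventually hev).exists
  set ε := c - c' with hεdef
  have hε : 0 < ε := by linarith
  have hεε0 : ε < ε0 := by linarith
  have e1 : ε ≤ α / 8 := hεε0.le.trans ((min_le_left _ _).trans (min_le_left _ _))
  have e2 : ε * (M + 4) ≤ 1 := by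
    have : ε ≤ 1 / (M + 4) := hεε0.le.trans ((min_le_left _ _).trans (min_le_right _ _))
    rwa [le_div_iff₀ (by linarith)] at this
  have e3 : ε * (4 * (M + 4)) ≤ τ * d := by
    have : ε ≤ τ * d / (4 * (M + 4)) := hεε0.le.trans ((min_le_right _ _).trans (min_le_left _ _))
    rwa [le_div_iff₀ (by linarith)] at this
  have e4 : c1 ≤ c' := by
    have : ε ≤ c - c1 := hεε0.le.trans ((min_le_right _ _).trans (min_le_right _ _))
    linarith
  obtain ⟨m, ⟨p, hp1, hp2, hp3, hp4, hp5⟩, hm⟩ :=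
    exists_lt_of_csInf_lt (hne c') (show sInf (levelSet E Q a e c') < level E Q a e c' + ε by
      change level E Q a e c' < _; linarith)
  have hp6 : ∀ t, E (p t) - c' ^ 2 / 8 * Q (p t) ≤ γ + (M + 1) * ε := fun t => by
    have := hp5 t; nlinarith
  have hcc : c1 * ε * 2 ≤ c ^ 2 - c' ^ 2 := by
    have : c ^ 2 - c' ^ 2 = ε * (c + c') := by rw [hεdef]; ring
    rw [this]; nlinarith
  have hJJ : ∀ t, J (p t) ≤ γ + (M + 1) * ε := fun t => by
    have h1 := hp6 t
    have h2 := hQ0 (p t)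
    have h3 : 0 ≤ (c ^ 2 - c' ^ 2) * Q (p t) := mul_nonneg (by nlinarith) h2
    simp only [hJdef]
    nlinarith
  have hinK : ∀ t, γ - 2 * ε ≤ J (p t) → p t ∈ K := by
    intro t ht
    refine ⟨⟨hp2 t, ?_⟩, ?_, ?_⟩
    · have h1 := hp6 t
      have h2 := hQ0 (p t)
      have h4 : (c ^ 2 - c' ^ 2) / 8 * Q (p t) ≤ (M + 3) * ε := by
        simp only [hJdef] at ht
        nlinarith
      have h3 : c1 * ε * 2 / 8 * Q (p t) ≤ (M + 3) * ε := by
        refine le_trans ?_ h4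
        gcongr
      have h6 : ε * (c1 * Q (p t)) ≤ ε * (4 * (M + 4)) := by nlinarith
      rw [hM', le_div_iff₀ hc1]
      have := le_of_mul_le_mul_left h6 hε
      linarith
    · show α / 2 ≤ _
      linarith
    · show _ ≤ γ + 1
      have := hJJ t
      nlinarith
  -- deform
  set χ : ℝ → ℝ := fun t => max 0 (min 1 ((J (p t) - (γ - 2 * ε)) / ε)) with hχ
  have hJp : Continuous fun t => J (p t) := hJ.comp_continuous hp1 hp2
  have hχc : Continuous χ := by
    exact continuous_const.max (continuous_const.min ((hJp.sub continuous_const).div_const _))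
  have hχ0 : ∀ t, 0 ≤ χ t := fun t => le_max_left _ _
  have hχ1 : ∀ t, χ t ≤ 1 := fun t => max_le zero_le_one (min_le_left _ _)
  have hχz : ∀ t, J (p t) ≤ γ - 2 * ε → χ t = 0 := by
    intro t ht
    refine max_eq_left ((min_le_right _ _).trans ?_)
    exact div_nonpos_of_nonpos_of_nonneg (by linarith) hε.le
  have hχo : ∀ t, γ - ε ≤ J (p t) → χ t = 1 := by
    intro t ht
    have : 1 ≤ (J (p t) - (γ - 2 * ε)) / ε := by rw [le_div_iff₀ hε]; linarith
    simp only [hχ]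
    rw [min_eq_left this]; simp
  set q : ℝ → ι → ℝ := fun t => p t + (τ * χ t) • (-(g (p t))) with hq
  have hgp : Continuous fun t => g (p t) := hg.comp_continuous hp1 hp2
  have hqc : Continuous q := by
    rw [hq]; exact hp1.add ((continuous_const.mul hχc).smul hgp.neg)
  have hτχ : ∀ t, 0 ≤ τ * χ t ∧ τ * χ t ≤ τ := fun t =>
    ⟨mul_nonneg hτ.le (hχ0 t), by nlinarith [hχ1 t]⟩
  have hq_eq : ∀ t, J (p t) ≤ γ - 2 * ε → q t = p t := by
    intro t ht; simp [hq, hχz t ht]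
  have hqp : ∀ t, q t ∈ pos ι := by
    intro t
    rcases le_total (J (p t)) (γ - 2 * ε) with h | h
    · rw [hq_eq t h]; exact hp2 t
    · exact (hstep (p t) (hinK t h) _ (hτχ t).1 (hτχ t).2).1
  have hqJ : ∀ t, J (q t) ≤ γ - ε := by
    intro t
    rcases le_total (J (p t)) (γ - 2 * ε) with h | h
    · rw [hq_eq t h]; linarith
    · have h1 := hdec (p t) (hinK t h) _ (hτχ t).1 (hτχ t).2
      change J (q t) ≤ _ at h1
      rcases le_total (γ - ε) (J (p t)) with h2 | h2
      · rw [hχo t h2] at h1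
        have := hJJ t
        nlinarith
      · have : 0 ≤ d / 2 * (τ * χ t) := mul_nonneg (by positivity) (hτχ t).1
        linarith
  have hmem : γ - ε ∈ levelSet E Q a e c := by
    refine ⟨q, hqc, hqp, ?_, ?_, hqJ⟩
    · rw [hq_eq 0, hp3]; rw [hp3]; have ha' : J a ≤ 0 := ha; linarith
    · rw [hq_eq 1, hp4]; rw [hp4]; have he' : J e ≤ 0 := he; linarith
  have := csInf_le hbdd hmem
  change γ ≤ _ at this
  linarith

end DS


namespace DS
open scoped Topology
set_option linter.unusedSectionVars false

section circle
variable {N : ℕ} [NeZero N]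

lemma sum_shift (f : ZMod N → ℝ) (k : ZMod N) : ∑ j, f (j + k) = ∑ j, f j :=
  Fintype.sum_equiv (Equiv.addRight k) _ _ fun _ => rfl

lemma tv_aux (f : ZMod N → ℝ) (k : ZMod N) (n : ℕ) :
    |f (k + n) - f k| ≤ ∑ i ∈ Finset.range n, |f (k + i + 1) - f (k + i)| := by
  induction n with
  | zero => simp
  | succ n ih =>
    rw [Finset.sum_range_succ]
    have : f (k + (n + 1 : ℕ)) - f k = (f (k + n) - f k) + (f (k + n + 1) - f (k + n)) := by
      push_cast; rw [← add_assoc]; ring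
    rw [this]
    exact (abs_add_le _ _).trans (add_le_add_left ih _)

lemma sum_range_zmod (g : ZMod N → ℝ) : ∑ i ∈ Finset.range N, g i = ∑ j, g j := by
  refine Finset.sum_nbij (fun i => (i : ZMod N)) (by simp) ?_ ?_ (by simp)
  · intro a ha b hb hab
    simp only [Finset.coe_range, Set.mem_Iio] at ha hb
    have := congrArg ZMod.val hab
    simpa [ZMod.val_natCast, Nat.mod_eq_of_lt ha, Nat.mod_eq_of_lt hb] using this
  · intro j _
    exact ⟨j.val, by simpa using ZMod.val_lt j, by simp⟩

lemma tv (f : ZMod N → ℝ) (j k : ZMod N) : |f j - f k| ≤ ∑ i, |f (i + 1) - f i| := by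
  have h1 : j = k + ((j - k).val : ℕ) := by simp
  have h2 := tv_aux f k (j - k).val
  rw [← h1] at h2
  refine h2.trans ?_
  have h3 : ∑ i ∈ Finset.range (j - k).val, |f (k + i + 1) - f (k + i)| ≤
      ∑ i ∈ Finset.range N, |f (k + i + 1) - f (k + i)| :=
    Finset.sum_le_sum_of_subset_of_nonneg
      (by intro x hx; simp only [Finset.mem_range] at hx ⊢; exact hx.trans (ZMod.val_lt _))
      (fun _ _ _ => abs_nonneg _)
  refine h3.trans ?_
  rw [sum_range_zmod (fun i : ZMod N => |f (k + i + 1) - f (k + i)|)]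
  have := sum_shift (fun i => |f (i + 1) - f i|) k
  rw [← this]
  refine le_of_eq (Finset.sum_congr rfl fun i _ => ?_)
  rw [add_comm k i]

lemma exists_min (f : ZMod N → ℝ) : ∃ k, N * f k ≤ ∑ j, f j := by
  by_contra h
  push Not at h
  have := Finset.sum_lt_sum_of_nonempty (s := (Finset.univ : Finset (ZMod N)))
    Finset.univ_nonempty (fun k _ => h k)
  rw [← Finset.mul_sum] at this
  simp [ZMod.card] at this

/-- correlation -/
noncomputable def corr (η : ZMod N → ℝ) (m : ZMod N) : ℝ := ∑ j, η j * η (j + m)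

lemma corr_zero (η : ZMod N → ℝ) : corr η 0 = ∑ j, η j ^ 2 := by
  simp [corr, sq]

lemma abs_corr_le (η : ZMod N → ℝ) (m : ZMod N) : |corr η m| ≤ ∑ j, η j ^ 2 := by
  have h1 : |corr η m| ≤ ∑ j, (η j ^ 2 + η (j + m) ^ 2) / 2 := by
    refine (Finset.abs_sum_le_sum_abs _ _).trans (Finset.sum_le_sum fun j _ => ?_)
    rw [abs_le]; constructor <;> nlinarith [sq_nonneg (η j + η (j + m)), sq_nonneg (η j - η (j + m))]
  refine h1.trans (le_of_eq ?_)
  rw [← Finset.sum_div, Finset.sum_add_distrib, sum_shift (fun j => η j ^ 2)]; ring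

lemma corr_neg (η : ZMod N → ℝ) (m : ZMod N) : corr η (-m) = corr η m := by
  unfold corr
  rw [← sum_shift (fun j => η j * η (j + -m)) m]
  exact Finset.sum_congr rfl fun j _ => by simp [mul_comm]

lemma parseval (η : ZMod N → ℝ) : ∃ P : ZMod N → ℝ, (∀ k, 0 ≤ P k) ∧ ∀ m : ℤ,
    corr η (m : ZMod N) = ∑ k, P k * Real.cos (2 * Real.pi * k.valMinAbs / N * m) := by
  set ψ := (ZMod.stdAddChar (N := N)) with hψ
  set F : ZMod N → ℂ := fun k => ∑ j, (η j : ℂ) * ψ (k * j) with hF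
  have hN : (N : ℝ) ≠ 0 := by exact_mod_cast NeZero.ne N
  refine ⟨fun k => Complex.normSq (F k) / N, fun k => div_nonneg (Complex.normSq_nonneg _) (by positivity), ?_⟩
  intro m
  have key : ∑ k, ψ (k * m) * (F k * (starRingEnd ℂ) (F k)) = (N : ℂ) * (corr η (m : ZMod N) : ℂ) := by
    have h1 : ∀ k, ψ (k * m) * (F k * (starRingEnd ℂ) (F k)) =
        ∑ j, ∑ l, ((η j : ℂ) * η l) * ψ (k * (m + j - l)) := by
      intro k
      simp only [hF, map_sum, map_mul, Complex.conj_ofReal]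
      rw [Finset.sum_mul_sum, Finset.mul_sum]
      refine Finset.sum_congr rfl fun j _ => ?_
      rw [Finset.mul_sum]
      refine Finset.sum_congr rfl fun l _ => ?_
      rw [← AddChar.map_neg_eq_conj]
      have : k * ((m : ZMod N) + j - l) = k * m + (k * j + -(k * l)) := by ring
      rw [this, AddChar.map_add_eq_mul, AddChar.map_add_eq_mul]
      ring
    simp only [h1]
    rw [Finset.sum_comm]
    have h2 : ∀ j : ZMod N, ∑ k, ∑ l, ((η j : ℂ) * η l) * ψ (k * ((m : ZMod N) + j - l)) =
        (N : ℂ) * ((η j : ℂ) * η (j + m)) := by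
      intro j
      rw [Finset.sum_comm]
      simp only [← Finset.mul_sum]
      simp only [hψ, AddChar.sum_mulShift _ (ZMod.isPrimitive_stdAddChar N)]
      rw [Finset.sum_eq_single (j + (m : ZMod N))]
      · simp [ZMod.card, add_comm]; ring
      · intro l _ hl
        have : (m : ZMod N) + j - l ≠ 0 := by
          intro h; apply hl; rw [sub_eq_zero] at h; rw [← h, add_comm]
        simp [this]
      · simp
    rw [Finset.sum_congr rfl fun j _ => h2 j, ← Finset.mul_sum]
    simp [corr]
  have hre := congrArg Complex.re key
  rw [Complex.re_sum] at hre
  have h3 : ∀ k : ZMod N, (ψ (k * m) * (F k * (starRingEnd ℂ) (F k))).re =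
      Complex.normSq (F k) * Real.cos (2 * Real.pi * k.valMinAbs / N * m) := by
    intro k
    rw [Complex.mul_conj, Complex.re_mul_ofReal, mul_comm]
    congr 1
    have h4 : (k * (m : ZMod N)) = ((k.valMinAbs * m : ℤ) : ZMod N) := by
      push_cast; simp
    rw [h4, hψ, ZMod.stdAddChar_coe]
    have h5 : (2 * Real.pi * Complex.I * ((k.valMinAbs * m : ℤ) : ℂ) / N : ℂ) =
      ((2 * Real.pi * k.valMinAbs / N * m : ℝ) : ℂ) * Complex.I := by
      push_cast; ring
    rw [h5, Complex.exp_ofReal_mul_I_re]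
  rw [Finset.sum_congr rfl fun k _ => h3 k] at hre
  have h6 : ((N : ℂ) * (corr η (m : ZMod N) : ℂ)).re = N * corr η (m : ZMod N) := by
    simp
  rw [h6] at hre
  have : corr η (m : ZMod N) = (∑ k, Complex.normSq (F k) * Real.cos (2 * Real.pi * k.valMinAbs / N * m)) / N := by
    rw [hre]; field_simp
  rw [this, Finset.sum_div]
  exact Finset.sum_congr rfl fun k _ => by ring

end circle

set_option maxHeartbeats 1000000 in
lemma symbol (W : ℝ → ℝ) (hW : Integrable W) (FW : ℝ → ℝ)
    (hFW : ∀ ξ, FW ξ = ∫ x, W x * Real.cos (ξ * x)) (σ : ℝ) (hσ : ∀ ξ, σ ≤ FW ξ + ξ ^ 2 / 2)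
    (ε : ℝ) (hε : 0 < ε) : ∃ h0 > 0, ∀ h, 0 < h → h < h0 → ∀ θ, |θ| ≤ Real.pi →
      σ - ε ≤ (1 - Real.cos θ) / h ^ 2 + ∫ t, W t * Real.cos (θ * ⌊t / h⌋) := by
  set w := ∫ t, |W t| with hw
  have hw0 : 0 ≤ w := integral_nonneg fun _ => abs_nonneg _
  have hintg : ∀ f : ℝ → ℝ, Measurable f → Integrable fun t => W t * Real.cos (f t) := by
    intro f hf
    refine hW.mul_bdd (c := 1) (Real.measurable_cos.comp hf).aestronglyMeasurable ?_
    exact Eventually.of_forall fun t => by simpa using Real.abs_cos_le_one _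
  have hm : ∀ θ h : ℝ, Measurable fun t : ℝ => θ * (⌊t / h⌋ : ℝ) := by
    intro θ h
    have : Measurable fun t : ℝ => (⌊t / h⌋ : ℝ) :=
      (measurable_of_countable (fun n : ℤ => (n : ℝ))).comp (Int.measurable_floor.comp (measurable_id.div_const h))
    exact this.const_mul _
  have hbd : ∀ f : ℝ → ℝ, Measurable f → -w ≤ ∫ t, W t * Real.cos (f t) := by
    intro f hf
    rw [hw, ← integral_neg]
    refine integral_mono hW.abs.neg (hintg f hf) fun t => ?_
    have h1 := Real.abs_cos_le_one (f t)
    have h2 : |W t * Real.cos (f t)| ≤ |W t| := by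
      rw [abs_mul]; nlinarith [abs_nonneg (W t)]
    exact (abs_le.1 h2).1
  set R := Real.pi * (|σ| + w + 1) with hR
  have hpi := Real.pi_pos
  have hpi3 := Real.pi_gt_three
  have hR1 : 1 ≤ R := by
    rw [hR]; nlinarith [abs_nonneg σ]
  have hR0 : 0 < R := by linarith
  refine ⟨min (1 / R) (min (ε / (2 * R ^ 4)) (ε / (2 * (R * w + 1)))), by positivity, ?_⟩
  intro h hh hh0 θ hθ
  have a1 : h * R ≤ 1 := by
    have := hh0.le.trans (min_le_left _ _)
    rwa [le_div_iff₀ hR0] at this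
  have a2 : h * (2 * R ^ 4) ≤ ε := by
    have := hh0.le.trans ((min_le_right _ _).trans (min_le_left _ _))
    rwa [le_div_iff₀ (by positivity)] at this
  have a3 : h * (2 * (R * w + 1)) ≤ ε := by
    have := hh0.le.trans ((min_le_right _ _).trans (min_le_right _ _))
    rwa [le_div_iff₀ (by positivity)] at this
  set ξ := θ / h with hξ
  have hθξ : θ = ξ * h := by rw [hξ]; field_simp
  rcases le_total R |ξ| with hc | hc
  · have h1 := Real.cos_le_one_sub_mul_cos_sq hθ
    have h2 := hbd _ (hm θ h)
    have h3 : 2 / Real.pi ^ 2 * ξ ^ 2 ≤ (1 - Real.cos θ) / h ^ 2 := by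
      rw [le_div_iff₀ (by positivity)]
      have : 2 / Real.pi ^ 2 * ξ ^ 2 * h ^ 2 = 2 / Real.pi ^ 2 * θ ^ 2 := by rw [hθξ]; ring
      linarith
    have h4 : R ^ 2 ≤ ξ ^ 2 := by rw [← sq_abs ξ]; gcongr
    have h5 : |σ| + w + 1 ≤ 2 / Real.pi ^ 2 * ξ ^ 2 := by
      have : 2 / Real.pi ^ 2 * R ^ 2 ≤ 2 / Real.pi ^ 2 * ξ ^ 2 := by gcongr
      refine le_trans ?_ this
      have : 2 / Real.pi ^ 2 * R ^ 2 = 2 * (|σ| + w + 1) ^ 2 := by rw [hR]; field_simp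
      rw [this]; nlinarith [abs_nonneg σ]
    have := le_abs_self σ
    linarith
  · have hle : |θ| ≤ h * R := by
      rw [hθξ, abs_mul, abs_of_pos hh]; nlinarith
    have h1 := abs_le.1 (Real.cos_bound (hle.trans a1))
    have h2 : ξ ^ 2 / 2 - ε / 2 ≤ (1 - Real.cos θ) / h ^ 2 := by
      rw [le_div_iff₀ (by positivity)]
      have e1 : |θ| ^ 4 ≤ h ^ 4 * R ^ 4 := by
        rw [← mul_pow]; gcongr
      have e2 : ξ ^ 2 * h ^ 2 = θ ^ 2 := by rw [hθξ]; ring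
      have e3 : h ^ 4 * R ^ 4 ≤ h ^ 2 * (ε / 2) := by
        have : h ≤ 1 := by nlinarith
        have e4 : h ^ 2 ≤ h := by nlinarith
        have e5 : h ^ 2 * R ^ 4 ≤ ε / 2 := by nlinarith [pow_pos hR0 4]
        nlinarith [pow_pos hh 2]
      have e6 : (ξ ^ 2 / 2 - ε / 2) * h ^ 2 = θ ^ 2 / 2 - h ^ 2 * (ε / 2) := by rw [← e2]; ring
      have e7 : 0 ≤ |θ| ^ 4 := by positivity
      rw [e6]
      linarith [h1.2]
    have h3 : FW ξ - ε / 2 ≤ ∫ t, W t * Real.cos (θ * ⌊t / h⌋) := by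
      rw [hFW]
      have e1 : (∫ x, W x * Real.cos (ξ * x)) - ∫ t, W t * Real.cos (θ * ⌊t / h⌋) ≤
          ∫ t, |W t| * (R * h) := by
        rw [← integral_sub (hintg (fun x => ξ * x) (by fun_prop)) (hintg _ (hm θ h))]
        refine integral_mono ((hintg (fun x => ξ * x) (by fun_prop)).sub (hintg _ (hm θ h)))
          (hW.abs.mul_const _) fun t => ?_
        simp only
        rw [← mul_sub]
        refine (le_abs_self _).trans ?_
        rw [abs_mul]
        gcongr
        refine (Real.abs_cos_sub_cos_le _ _).trans ?_
        have : ξ * t - θ * ⌊t / h⌋ = ξ * (h * Int.fract (t / h)) := by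
          rw [← Int.self_sub_floor, hθξ]; field_simp
        rw [this, abs_mul]
        have h7 : |h * Int.fract (t / h)| ≤ h := by
          rw [abs_of_nonneg (mul_nonneg hh.le (Int.fract_nonneg _))]
          nlinarith [(Int.fract_lt_one (t / h)).le]
        exact mul_le_mul hc h7 (abs_nonneg _) hR0.le
      rw [integral_mul_const, ← hw] at e1
      nlinarith
    linarith [hσ ξ]

end DS


namespace DS
open scoped Topology
set_option linter.unusedSectionVars false

section ops
variable {N : ℕ} [NeZero N]

lemma meas_floor (h : ℝ) {β : Type*} [MeasurableSpace β] (f : ℤ → β) :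
    Measurable fun t : ℝ => f ⌊t / h⌋ :=
  (measurable_of_countable f).comp (Int.measurable_floor.comp (measurable_id.div_const h))

lemma int_floor (W : ℝ → ℝ) (hW : Integrable W) (h : ℝ) (f : ℤ → ℝ) (C : ℝ) (hf : ∀ n, |f n| ≤ C) :
    Integrable fun t => W t * f ⌊t / h⌋ :=
  hW.mul_bdd (c := C) (meas_floor h f).aestronglyMeasurable
    (Eventually.of_forall fun t => by simpa using hf _)

lemma int_floor' (W : ℝ → ℝ) (hW : Integrable W) (h : ℝ) (f : ℤ → ZMod N → ℝ) (C : ℝ) (hf : ∀ n j, |f n j| ≤ C) (j) :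
    Integrable fun t => W t * f ⌊t / h⌋ j :=
  int_floor W hW h (fun n => f n j) C (fun n => hf n j)

lemma abs_int_floor (W : ℝ → ℝ) (hW : Integrable W) (h : ℝ) (f : ℤ → ℝ) (C : ℝ) (hf : ∀ n, |f n| ≤ C) :
    |∫ t, W t * f ⌊t / h⌋| ≤ (∫ t, |W t|) * C := by
  rw [← integral_mul_const]
  refine (abs_integral_le_integral_abs).trans ?_
  refine integral_mono (int_floor W hW h f C hf).abs (hW.abs.mul_const _) fun t => ?_
  simp only [abs_mul]
  exact mul_le_mul_of_nonneg_left (hf _) (abs_nonneg _)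

/-- pointwise symmetrised shift -/
noncomputable def shf (η : ZMod N → ℝ) (j : ZMod N) (n : ℤ) : ℝ := (η (j - n) + η (j + n)) / 2

noncomputable def Sop (W : ℝ → ℝ) (h : ℝ) (η : ZMod N → ℝ) (j : ZMod N) : ℝ :=
  ∫ t, W t * shf η j ⌊t / h⌋

lemma exists_bd (η : ZMod N → ℝ) : ∃ C, 0 ≤ C ∧ ∀ j, |η j| ≤ C :=
  ⟨∑ j, |η j|, Finset.sum_nonneg fun _ _ => abs_nonneg _, fun j =>
    Finset.single_le_sum (f := fun j => |η j|) (fun _ _ => abs_nonneg _) (Finset.mem_univ j)⟩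

lemma shf_bd {η : ZMod N → ℝ} {C : ℝ} (hC : ∀ j, |η j| ≤ C) (j : ZMod N) (n : ℤ) : |shf η j n| ≤ C := by
  unfold shf
  have h1 := abs_le.1 (hC (j - n))
  have h2 := abs_le.1 (hC (j + n))
  rw [abs_le]; constructor <;> linarith [h1.1, h1.2, h2.1, h2.2]


lemma shf_int (W : ℝ → ℝ) (hW : Integrable W) (h : ℝ) (η : ZMod N → ℝ) (j : ZMod N) : Integrable fun t => W t * shf η j ⌊t / h⌋ := by
  obtain ⟨C, _, hC⟩ := exists_bd η
  exact int_floor W hW h _ C (shf_bd hC j)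

lemma Sop_bd (W : ℝ → ℝ) (hW : Integrable W) (h : ℝ) {η : ZMod N → ℝ} {C : ℝ} (hC : ∀ j, |η j| ≤ C) (j : ZMod N) :
    |Sop W h η j| ≤ (∫ t, |W t|) * C :=
  abs_int_floor W hW h _ C (shf_bd hC j)

noncomputable def Slin (W : ℝ → ℝ) (hW : Integrable W) (h : ℝ) : (ZMod N → ℝ) →ₗ[ℝ] (ZMod N → ℝ) where
  toFun := Sop W h
  map_add' η ζ := by
    funext j
    simp only [Sop, Pi.add_apply]
    rw [← integral_add (shf_int W hW h η j) (shf_int W hW h ζ j)]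
    congr 1; funext t; simp only [shf, Pi.add_apply]; ring
  map_smul' s η := by
    funext j
    simp only [Sop, Pi.smul_apply, smul_eq_mul, RingHom.id_apply]
    rw [← integral_const_mul]
    congr 1; funext t; simp only [shf, Pi.smul_apply, smul_eq_mul]; ring

lemma Sop_sum (W : ℝ → ℝ) (hW : Integrable W) (h : ℝ) (η ζ : ZMod N → ℝ) :
    ∑ j, ζ j * Sop W h η j = ∫ t, W t * ∑ j, ζ j * shf η j ⌊t / h⌋ := by
  simp only [Sop, ← integral_const_mul]
  rw [← integral_finsetSum _ (fun j _ => (shf_int W hW h η j).const_mul _)]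
  congr 1; funext t
  rw [Finset.mul_sum]
  exact Finset.sum_congr rfl fun j _ => by ring

lemma shf_symm (η ζ : ZMod N → ℝ) (n : ℤ) : ∑ j, ζ j * shf η j n = ∑ j, η j * shf ζ j n := by
  have h1 : ∀ η ζ : ZMod N → ℝ, ∑ j, ζ j * η (j - n) = ∑ j, η j * ζ (j + n) := by
    intro η ζ
    rw [← sum_shift (fun j => ζ j * η (j - n)) n]
    exact Finset.sum_congr rfl fun j _ => by simp [mul_comm]
  have h2 : ∀ η ζ : ZMod N → ℝ, ∑ j, ζ j * shf η j n =
      (∑ j, ζ j * η (j - n) + ∑ j, ζ j * η (j + n)) / 2 := by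
    intro η ζ
    rw [← Finset.sum_add_distrib, Finset.sum_div]
    exact Finset.sum_congr rfl fun j _ => by simp only [shf]; ring
  rw [h2, h2, h1 η ζ, h1 ζ η, add_comm]

lemma Sop_symm (W : ℝ → ℝ) (hW : Integrable W) (h : ℝ) (η ζ : ZMod N → ℝ) : ∑ j, ζ j * Sop W h η j = ∑ j, η j * Sop W h ζ j := by
  rw [Sop_sum W hW, Sop_sum W hW]
  congr 1; funext t; rw [shf_symm]

noncomputable def dd (h : ℝ) (η : ZMod N → ℝ) : ℝ := ∑ j, ((η (j + 1) - η j) / h) ^ 2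
noncomputable def nn (η : ZMod N → ℝ) : ℝ := ∑ j, η j ^ 2
noncomputable def qq (W : ℝ → ℝ) (h : ℝ) (η : ZMod N → ℝ) : ℝ := ∑ j, η j * Sop W h η j

lemma nn_nonneg (η : ZMod N → ℝ) : 0 ≤ nn η := Finset.sum_nonneg fun _ _ => sq_nonneg _
lemma dd_nonneg (h : ℝ) (η : ZMod N → ℝ) : 0 ≤ dd h η := Finset.sum_nonneg fun _ _ => sq_nonneg _

lemma qq_eq (W : ℝ → ℝ) (hW : Integrable W) (h : ℝ) (η : ZMod N → ℝ) : qq W h η = ∫ t, W t * corr η ((⌊t / h⌋ : ℤ) : ZMod N) := by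
  unfold qq
  rw [Sop_sum W hW]
  congr 1; funext t; congr 1
  have h2 : ∑ j, η j * shf η j ⌊t / h⌋ =
      (corr η (-((⌊t / h⌋ : ℤ) : ZMod N)) + corr η ((⌊t / h⌋ : ℤ) : ZMod N)) / 2 := by
    unfold corr
    rw [← Finset.sum_add_distrib, Finset.sum_div]
    exact Finset.sum_congr rfl fun j _ => by simp only [shf, sub_eq_add_neg]; ring
  rw [h2, corr_neg]; ring

lemma abs_qq_le (W : ℝ → ℝ) (hW : Integrable W) (h : ℝ) (η : ZMod N → ℝ) : |qq W h η| ≤ (∫ t, |W t|) * nn η := by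
  rw [qq_eq W hW]
  exact abs_int_floor W hW h (fun n => corr η (n : ZMod N)) _ fun n => abs_corr_le η _

lemma dd_eq (h : ℝ) (η : ZMod N → ℝ) : dd h η = 2 * (nn η - corr η 1) / h ^ 2 := by
  unfold dd nn corr
  have : ∀ j : ZMod N, ((η (j + 1) - η j) / h) ^ 2 = (η (j+1) ^ 2 + η j ^ 2 - 2 * (η j * η (j+1))) / h ^ 2 := by
    intro j; rw [div_pow]; ring
  rw [Finset.sum_congr rfl fun j _ => this j, ← Finset.sum_div, Finset.sum_sub_distrib,
    Finset.sum_add_distrib, sum_shift (fun j => η j ^ 2), ← Finset.mul_sum]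
  ring

end ops

lemma coercive (W : ℝ → ℝ) (hW : Integrable W) (FW : ℝ → ℝ)
    (hFW : ∀ ξ, FW ξ = ∫ x, W x * Real.cos (ξ * x)) (σ : ℝ) (hσ : ∀ ξ, σ ≤ FW ξ + ξ ^ 2 / 2)
    (μ : ℝ) (hμ0 : 0 ≤ μ) (hμ : μ < σ) : ∃ s κ h0 : ℝ, 0 < s ∧ s < 1 ∧ 0 < κ ∧ 0 < h0 ∧
      ∀ h, 0 < h → h < h0 → ∀ (N : ℕ) [NeZero N] (η : ZMod N → ℝ),
        μ * nn η + κ * (dd h η + nn η) ≤ (1 - s) / 2 * dd h η + qq W h η := by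
  set w := ∫ t, |W t| with hw
  have hw0 : 0 ≤ w := integral_nonneg fun _ => abs_nonneg _
  set ε := (σ - μ) / 4 with hε
  have hεp : 0 < ε := by rw [hε]; linarith
  obtain ⟨h0, hh0, H⟩ := symbol W hW FW hFW σ hσ ε hεp
  set s := min (1/4) (ε / (2 * (σ + w))) with hs
  have hσp : 0 < σ := by linarith
  have hs0 : 0 < s := by rw [hs]; positivity
  have hs1 : s ≤ 1/4 := min_le_left _ _
  have hs2 : s * (2 * (σ + w)) ≤ ε := by
    have : s ≤ ε / (2 * (σ + w)) := min_le_right _ _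
    rwa [le_div_iff₀ (by positivity)] at this
  refine ⟨s, min (s/2) ε, h0, hs0, by linarith, by positivity, hh0, ?_⟩
  intro h hh hhh N _ η
  have base : (σ - ε) * nn η ≤ 1/2 * dd h η + qq W h η := by
    obtain ⟨P, hP0, hP⟩ := parseval η
    have hNpos : (0:ℝ) < N := by exact_mod_cast NeZero.pos N
    have e1 : nn η = ∑ k, P k := by
      have := hP 0
      simpa [corr_zero, nn] using this
    have e2 : corr η 1 = ∑ k, P k * Real.cos (2 * Real.pi * k.valMinAbs / N) := by
      have := hP 1
      simpa using this
    have e3 : qq W h η = ∑ k, P k * ∫ t, W t * Real.cos ((2 * Real.pi * k.valMinAbs / N) * ⌊t / h⌋) := by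
      rw [qq_eq W hW]
      simp only [hP, ← integral_const_mul]
      rw [← integral_finsetSum]
      · congr 1; funext t
        rw [Finset.mul_sum]
        exact Finset.sum_congr rfl fun k _ => by ring
      · intro k _
        refine (int_floor W hW h (fun n => Real.cos (2 * Real.pi * k.valMinAbs / N * n)) 1 ?_).const_mul _
        intro n; exact Real.abs_cos_le_one _
    rw [dd_eq, e3, e2, e1, ← Finset.sum_sub_distrib, Finset.mul_sum, Finset.mul_sum, Finset.sum_div,
      Finset.mul_sum, ← Finset.sum_add_distrib]
    refine Finset.sum_le_sum fun k _ => ?_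
    have hθ : |2 * Real.pi * (k.valMinAbs : ℝ) / N| ≤ Real.pi := by
      have h1 := ZMod.valMinAbs_mem_Ioc k
      have h2 : (-(N:ℝ)) ≤ (k.valMinAbs : ℝ) * 2 := by exact_mod_cast h1.1.le
      have h3 : (k.valMinAbs : ℝ) * 2 ≤ N := by exact_mod_cast h1.2
      rw [abs_le, le_div_iff₀ hNpos, div_le_iff₀ hNpos]
      constructor <;> nlinarith [Real.pi_pos]
    have := mul_le_mul_of_nonneg_left (H h hh hhh _ hθ) (hP0 k)
    refine le_trans (le_of_eq (mul_comm _ _)) (this.trans (le_of_eq ?_))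
    ring
  have hq := (abs_le.1 (abs_qq_le W hW h η)).1
  rw [← hw] at hq
  have hn := nn_nonneg η
  have hd := dd_nonneg h η
  have hκ1 : min (s/2) ε ≤ s/2 := min_le_left _ _
  have hκ2 : min (s/2) ε ≤ ε := min_le_right _ _
  set κ := min (s/2) ε
  have m1 : κ * dd h η ≤ s / 2 * dd h η := by gcongr
  have m2 : κ * nn η ≤ ε * nn η := by gcongr
  have m3 : (1 - 2 * s) * ((σ - ε) * nn η) ≤ (1 - 2 * s) * (1/2 * dd h η + qq W h η) := by
    apply mul_le_mul_of_nonneg_left base; linarith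
  have m4 : 2 * s * (-(w * nn η)) ≤ 2 * s * qq W h η := by gcongr
  have m5 : s * (2 * (σ + w)) * nn η ≤ ε * nn η := by gcongr
  have m6 : σ = μ + 4 * ε := by rw [hε]; ring
  have m7 : 0 ≤ s * ε * nn η := by positivity
  have m8 : σ * nn η = μ * nn η + 4 * (ε * nn η) := by rw [m6]; ring
  nlinarith

end DS


namespace DS
open scoped Topology
set_option linter.unusedSectionVars false

section functionals
variable {N : ℕ} [NeZero N]

def et (ρ : ZMod N → ℝ) : ZMod N → ℝ := fun j => 1 - ρ j ^ 2

noncomputable def Ef (W : ℝ → ℝ) (h : ℝ) (ρ : ZMod N → ℝ) : ℝ :=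
  h * (dd h ρ / 2 + qq W h (et ρ) / 4)
noncomputable def Qf (h : ℝ) (ρ : ZMod N → ℝ) : ℝ := h * ∑ j, (ρ j - (ρ j)⁻¹) ^ 2
noncomputable def gEf (W : ℝ → ℝ) (h : ℝ) (ρ : ZMod N → ℝ) : ZMod N → ℝ := fun j =>
  h * (-(ρ (j + 1) - 2 * ρ j + ρ (j - 1)) / h ^ 2 - ρ j * Sop W h (et ρ) j)
noncomputable def gQf (h : ℝ) (ρ : ZMod N → ℝ) : ZMod N → ℝ := fun j =>
  h * (2 * (ρ j - (ρ j)⁻¹) * (1 + ((ρ j)⁻¹) ^ 2))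

lemma Sop_cont (W : ℝ → ℝ) (hW : Integrable W) (h : ℝ) :
    Continuous (Sop W h : (ZMod N → ℝ) → ZMod N → ℝ) :=
  (Slin (N := N) W hW h).continuous_of_finiteDimensional

lemma et_cont : Continuous (et : (ZMod N → ℝ) → ZMod N → ℝ) := by
  unfold et; fun_prop

lemma Ef_cont (W : ℝ → ℝ) (hW : Integrable W) (h : ℝ) :
    Continuous (Ef W h : (ZMod N → ℝ) → ℝ) := by
  have h1 := (Sop_cont (N := N) W hW h).comp et_cont
  have h2 : ∀ j, Continuous fun ρ : ZMod N → ℝ => Sop W h (et ρ) j := fun j =>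
    (continuous_apply j).comp h1
  have h3 : ∀ j, Continuous fun ρ : ZMod N → ℝ => et ρ j := fun j =>
    (continuous_apply j).comp et_cont
  unfold Ef dd qq
  fun_prop

lemma gEf_cont (W : ℝ → ℝ) (hW : Integrable W) (h : ℝ) :
    Continuous (gEf W h : (ZMod N → ℝ) → _) := by
  have h1 := (Sop_cont (N := N) W hW h).comp et_cont
  have h2 : ∀ j, Continuous fun ρ : ZMod N → ℝ => Sop W h (et ρ) j := fun j =>
    (continuous_apply j).comp h1
  unfold gEf
  fun_prop

lemma inv_contOn (j : ZMod N) : ContinuousOn (fun ρ : ZMod N → ℝ => (ρ j)⁻¹) (pos (ZMod N)) :=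
  ContinuousOn.inv₀ (by fun_prop) (fun ρ hρ => (hρ j).ne')

lemma Qf_cont (h : ℝ) : ContinuousOn (Qf h) (pos (ZMod N)) := by
  have := inv_contOn (N := N)
  unfold Qf
  refine continuousOn_const.mul (continuousOn_finsetSum _ fun j _ => ?_)
  have := this j
  fun_prop

lemma gQf_cont (h : ℝ) : ContinuousOn (gQf h) (pos (ZMod N)) := by
  unfold gQf
  refine continuousOn_pi.2 fun j => ?_
  have := inv_contOn (N := N) j
  fun_prop

lemma dEf (W : ℝ → ℝ) (hW : Integrable W) (h : ℝ) (ρ w : ZMod N → ℝ) :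
    HasDerivAt (fun s : ℝ => Ef W h (ρ + s • w)) (∑ j, gEf W h ρ j * w j) 0 := by
  have hl : ∀ j, HasDerivAt (fun s : ℝ => ρ j + s * w j) (w j) 0 := fun j => by
    simpa using ((hasDerivAt_id (0:ℝ)).mul_const (w j)).const_add (ρ j)
  have h1 : HasDerivAt (fun s : ℝ => dd h (ρ + s • w))
      (∑ j, 2 * ((ρ (j + 1) - ρ j) / h) * ((w (j+1) - w j) / h)) 0 := by
    unfold dd
    refine HasDerivAt.fun_sum fun j _ => ?_
    have := (((hl (j+1)).sub (hl j)).div_const h).pow 2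
    refine this.congr_deriv ?_
    simp
  have h2 : HasDerivAt (fun s : ℝ => et (ρ + s • w)) (fun j => -2 * ρ j * w j) 0 := by
    unfold et
    refine hasDerivAt_pi.2 fun j => ?_
    refine (((hl j).pow 2).const_sub 1).congr_deriv ?_
    simp
  have h3 : HasDerivAt (fun s : ℝ => Sop W h (et (ρ + s • w))) (Sop W h (fun j => -2 * ρ j * w j)) 0 :=
    ((Slin (N := N) W hW h).toContinuousLinearMap.hasFDerivAt.comp_hasDerivAt (0:ℝ) h2)
  have h4 : HasDerivAt (fun s : ℝ => qq W h (et (ρ + s • w)))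
      (∑ j, 2 * ((-2 * ρ j * w j) * Sop W h (et ρ) j)) 0 := by
    unfold qq
    have : HasDerivAt (fun s : ℝ => ∑ j, et (ρ + s • w) j * Sop W h (et (ρ + s • w)) j)
      (∑ j, ((-2 * ρ j * w j) * Sop W h (et ρ) j + et ρ j * Sop W h (fun j => -2 * ρ j * w j) j)) 0 := by
      refine HasDerivAt.fun_sum fun j _ => ?_
      refine ((hasDerivAt_pi.1 h2 j).mul (hasDerivAt_pi.1 h3 j)).congr_deriv ?_
      simp
    refine this.congr_deriv ?_
    rw [Finset.sum_add_distrib, Sop_symm W hW h (fun j => -2 * ρ j * w j) (et ρ), ← Finset.mul_sum]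
    ring
  have h5 := ((h1.div_const 2).add (h4.div_const 4)).const_mul h
  refine h5.congr_deriv ?_
  have hs : ∑ j, (ρ (j+1) - ρ j) * w (j+1) = ∑ j, (ρ j - ρ (j-1)) * w j := by
    rw [← sum_shift (fun j => (ρ j - ρ (j-1)) * w j) 1]
    simp
  have e1 : ∑ j, 2 * ((ρ (j + 1) - ρ j) / h) * ((w (j+1) - w j) / h)
      = 2 / h^2 * (∑ j, (ρ j - ρ (j-1)) * w j - ∑ j, (ρ (j+1) - ρ j) * w j) := by
    rw [← hs, ← Finset.sum_sub_distrib, Finset.mul_sum]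
    refine Finset.sum_congr rfl fun j _ => ?_
    rw [sq h]; ring
  rw [e1, ← Finset.sum_sub_distrib, Finset.sum_div, Finset.mul_sum, Finset.sum_div, ← Finset.sum_add_distrib, Finset.mul_sum]
  refine Finset.sum_congr rfl fun j _ => ?_
  unfold gEf
  ring

lemma dQf (h : ℝ) (ρ : ZMod N → ℝ) (hρ : ρ ∈ pos (ZMod N)) (w : ZMod N → ℝ) :
    HasDerivAt (fun s : ℝ => Qf h (ρ + s • w)) (∑ j, gQf h ρ j * w j) 0 := by
  have hl : ∀ j, HasDerivAt (fun s : ℝ => ρ j + s * w j) (w j) 0 := fun j => by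
    simpa using ((hasDerivAt_id (0:ℝ)).mul_const (w j)).const_add (ρ j)
  have : HasDerivAt (fun s : ℝ => ∑ j, ((ρ + s • w) j - ((ρ + s • w) j)⁻¹) ^ 2)
     (∑ j, (2 * (ρ j - (ρ j)⁻¹) * (1 + ((ρ j)⁻¹) ^ 2)) * w j) 0 := by
    refine HasDerivAt.fun_sum fun j _ => ?_
    have hi := (hl j).fun_inv (by simpa using (hρ j).ne')
    refine (((hl j).fun_sub hi).fun_pow 2).congr_deriv ?_
    have := (hρ j).ne'
    simp
    field_simp
    ring
  unfold Qf
  refine (this.const_mul h).congr_deriv ?_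
  rw [Finset.mul_sum]
  refine Finset.sum_congr rfl fun j _ => ?_
  unfold gQf
  ring

lemma Qf_nonneg (h : ℝ) (hh : 0 ≤ h) (ρ : ZMod N → ℝ) : 0 ≤ Qf h ρ :=
  mul_nonneg hh (Finset.sum_nonneg fun _ _ => sq_nonneg _)

lemma Qf_term {h : ℝ} (hh : 0 < h) {ρ : ZMod N → ℝ} {M : ℝ} (hM : Qf h ρ ≤ M) (j) :
    (ρ j - (ρ j)⁻¹) ^ 2 ≤ M / h := by
  have : (ρ j - (ρ j)⁻¹) ^ 2 ≤ ∑ j, (ρ j - (ρ j)⁻¹) ^ 2 :=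
    Finset.single_le_sum (f := fun j => (ρ j - (ρ j)⁻¹) ^ 2) (fun _ _ => sq_nonneg _) (Finset.mem_univ j)
  rw [le_div_iff₀ hh]
  unfold Qf at hM
  nlinarith

lemma inv_bd {x K : ℝ} (hx : 0 < x) (hK : 0 ≤ K) (h : (x - x⁻¹) ^ 2 ≤ K) :
    x ≤ 2 + K ∧ (2 + K)⁻¹ ≤ x := by
  have hi : 0 < x⁻¹ := inv_pos.2 hx
  have hxx : x * x⁻¹ = 1 := mul_inv_cancel₀ hx.ne'
  have h1 : |x - x⁻¹| ≤ 1 + K := by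
    have : |x - x⁻¹| ^ 2 ≤ K := by rwa [sq_abs]
    nlinarith [abs_nonneg (x - x⁻¹)]
  obtain ⟨h2, h3⟩ := abs_le.1 h1
  constructor
  · by_contra hc
    push Not at hc
    have : x⁻¹ < 1 := by
      by_contra h'; push Not at h'; nlinarith
    linarith
  · rw [inv_le_comm₀ (by positivity) hx]
    by_contra hc
    push Not at hc
    have : x < 1 := by
      by_contra h'; push Not at h'; nlinarith
    linarith

lemma Qf_compact {h : ℝ} (hh : 0 < h) (M : ℝ) :
    IsCompact {ρ | ρ ∈ pos (ZMod N) ∧ Qf h ρ ≤ M} := by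
  rcases lt_or_ge M 0 with hM | hM
  · convert isCompact_empty
    ext ρ
    simp only [Set.mem_ofPred_eq, Set.mem_empty_iff_false, iff_false, not_and, not_le]
    intro _
    exact hM.trans_le (Qf_nonneg h hh.le ρ)
  set K := M / h
  have hK : 0 ≤ K := by positivity
  have hc : IsCompact (Set.Icc (fun _ : ZMod N => (2 + K)⁻¹) (fun _ => 2 + K)) := isCompact_Icc
  have hsub : Set.Icc (fun _ : ZMod N => (2 + K)⁻¹) (fun _ => 2 + K) ⊆ pos (ZMod N) := by
    intro ρ hρ j
    exact (by positivity : (0:ℝ) < (2+K)⁻¹).trans_le (hρ.1 j)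
  have : {ρ | ρ ∈ pos (ZMod N) ∧ Qf h ρ ≤ M} =
      (Set.Icc (fun _ : ZMod N => (2 + K)⁻¹) (fun _ => 2 + K)) ∩ (Qf h) ⁻¹' (Set.Iic M) := by
    ext ρ
    constructor
    · rintro ⟨h1, h2⟩
      refine ⟨⟨fun j => (inv_bd (h1 j) hK (Qf_term hh h2 j)).2, fun j => (inv_bd (h1 j) hK (Qf_term hh h2 j)).1⟩, h2⟩
    · rintro ⟨h1, h2⟩
      exact ⟨hsub h1, h2⟩
  rw [this]
  exact hc.of_isClosed_subset (((Qf_cont h).mono hsub).preimage_isClosed_of_isClosed isClosed_Icc isClosed_Iic) Set.inter_subset_left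

end functionals
end DS


namespace DS
open scoped Topology
set_option linter.unusedSectionVars false
set_option linter.unusedVariables false

section est
variable {N : ℕ} [NeZero N]

lemma sbp (ρ w : ZMod N → ℝ) : ∑ j, -(ρ (j + 1) - 2 * ρ j + ρ (j - 1)) * w j
    = ∑ j, (ρ (j+1) - ρ j) * (w (j+1) - w j) := by
  have hs : ∑ j, (ρ (j+1) - ρ j) * w (j+1) = ∑ j, (ρ j - ρ (j-1)) * w j := by
    rw [← sum_shift (fun j => (ρ j - ρ (j-1)) * w j) 1]
    simp
  simp only [mul_sub, Finset.sum_sub_distrib]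
  rw [hs, ← Finset.sum_sub_distrib]
  refine Finset.sum_congr rfl fun j _ => ?_
  ring

lemma sob {h : ℝ} (hh : 0 < h) (hN : 1 ≤ N * h) {a : ℝ} (ha : 0 < a) (η : ZMod N → ℝ) (j : ZMod N) :
    η j ^ 2 ≤ h * nn η + h * (a / 2 * dd h η + 2 / a * nn η) := by
  obtain ⟨k, hk⟩ := exists_min (fun j => η j ^ 2)
  have h1 := tv (fun j => η j ^ 2) j k
  have hk' : η k ^ 2 ≤ h * nn η := by
    unfold nn
    have : h * (N * η k ^ 2) ≤ h * ∑ j, η j ^ 2 := by gcongr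
    nlinarith [sq_nonneg (η k)]
  have h2 : ∑ i, |η (i+1) ^ 2 - η i ^ 2| ≤ h * (a / 2 * dd h η + 2 / a * nn η) := by
    have : ∀ i, |η (i+1) ^ 2 - η i ^ 2| ≤ h * (a / 2 * ((η (i+1) - η i)/h)^2) +
       h * (1 / a * (η (i+1) ^ 2 + η i ^ 2)) := by
      intro i
      set D := (η (i+1) - η i)/h
      have hD : η (i+1) - η i = h * D := by simp only [D]; field_simp
      have e : η (i+1) ^ 2 - η i ^ 2 = h * (D * (η (i+1) + η i)) := by
        rw [← mul_assoc, ← hD]; ring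
      rw [e, abs_mul, abs_of_pos hh, ← mul_add]
      gcongr
      have e2 : a / 2 * D ^ 2 + 1 / a * (η (i+1) ^ 2 + η i ^ 2) =
         (2 * a)⁻¹ * ((a * D) ^ 2 + 2 * (η (i+1) ^ 2 + η i ^ 2)) := by field_simp
      rw [e2, ← div_eq_inv_mul, le_div_iff₀ (by positivity)]
      have := two_mul_le_add_sq (|a * D|) (|η (i+1) + η i|)
      rw [sq_abs, sq_abs, abs_mul, abs_of_pos ha] at this
      rw [abs_mul]
      nlinarith [sq_nonneg (η (i+1) - η i)]
    refine (Finset.sum_le_sum fun i _ => this i).trans (le_of_eq ?_)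
    rw [Finset.sum_add_distrib, ← Finset.mul_sum, ← Finset.mul_sum, ← Finset.mul_sum, ← Finset.mul_sum,
      Finset.sum_add_distrib, sum_shift (fun i => η i ^ 2) 1]
    unfold dd nn
    ring
  have h3 := (abs_le.1 (h1.trans h2)).2
  linarith

lemma local_bounds {r x : ℝ} (hr0 : 0 < r) (hr : r < 1) (hx : |x - 1| ≤ r) :
    1 - r ≤ x ∧ x ≤ 1 + r := by
  obtain ⟨h1, h2⟩ := abs_le.1 hx
  constructor <;> linarith

lemma dd_et_le {h r C : ℝ} (hr0 : 0 < r) (hr : r < 1) (ρ : ZMod N → ℝ)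
    (hρ : ∀ j, |ρ j - 1| ≤ r) (hC : 0 ≤ C) (hC2 : C * (1 + r)^4 ≤ 1) :
    C / 2 * dd h (et ρ) ≤ ∑ j, ((ρ (j+1) - ρ j)/h)^2 * (2 / (1+r)^2) := by
  unfold dd
  rw [Finset.mul_sum]
  refine Finset.sum_le_sum fun j _ => ?_
  obtain ⟨a1, a2⟩ := local_bounds hr0 hr (hρ j)
  obtain ⟨b1, b2⟩ := local_bounds hr0 hr (hρ (j+1))
  have e : (et ρ (j+1) - et ρ j) / h = -((ρ (j+1) - ρ j)/h) * (ρ (j+1) + ρ j) := by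
    unfold et; ring
  rw [e, mul_pow, neg_sq]
  have : C / 2 * (ρ (j+1) + ρ j)^2 ≤ 2 / (1+r)^2 := by
    rw [le_div_iff₀ (by positivity)]
    have : (ρ (j+1) + ρ j)^2 ≤ (2*(1+r))^2 := by
      apply pow_le_pow_left₀ <;> linarith
    calc C / 2 * (ρ (j+1) + ρ j)^2 * (1+r)^2 ≤ C / 2 * (2*(1+r))^2 * (1+r)^2 := by gcongr
      _ = 2 * (C * (1+r)^4) := by ring
      _ ≤ 2 := by linarith
  nlinarith [sq_nonneg ((ρ (j+1) - ρ j)/h)]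

variable (W : ℝ → ℝ) (h μ s κ r c : ℝ)

lemma sub_inv_sq {x : ℝ} (hx : 0 < x) : (x - x⁻¹)^2 = (1 - x^2)^2 * (x⁻¹)^2 := by
  field_simp; ring

lemma inv_sq_le {r x : ℝ} (hr : r < 1) (hx : 1 - r ≤ x) : (x⁻¹)^2 ≤ ((1-r)⁻¹)^2 := by
  have : 0 < 1 - r := by linarith
  have : 0 < x := by linarith
  gcongr

/-- local lower bound of the action -/
lemma local_J (hh : 0 < h)
    (hco : ∀ η : ZMod N → ℝ, μ*nn η + κ*(dd h η+nn η) ≤ (1-s)/2*dd h η + qq W h η)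
    (hs : s < 1) (hr0 : 0 < r) (hr : r < 1)
    (hr1 : (1-s) * (1+r)^4 ≤ 1) (hr2 : c^2/2 ≤ μ * (1-r)^4) (hμ : 0 ≤ μ)
    (ρ : ZMod N → ℝ) (hρ : ∀ j, |ρ j - 1| ≤ r) :
    h * κ / 4 * (dd h (et ρ) + nn (et ρ)) ≤ Ef W h ρ - c^2/8 * Qf h ρ := by
  have h1 := dd_et_le (h := h) hr0 hr ρ hρ (by linarith) hr1
  have h2 : ∑ j, ((ρ (j+1) - ρ j)/h)^2 * (2 / (1+r)^2) ≤ 2 * dd h ρ := by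
    rw [← Finset.sum_mul, mul_comm]
    refine mul_le_mul_of_nonneg_right ?_ (dd_nonneg h ρ)
    rw [div_le_iff₀ (by positivity)]
    nlinarith
  have h3 : c^2/2 * ∑ j, (ρ j - (ρ j)⁻¹)^2 ≤ μ * nn (et ρ) := by
    unfold nn
    rw [Finset.mul_sum, Finset.mul_sum]
    refine Finset.sum_le_sum fun j _ => ?_
    obtain ⟨a1, a2⟩ := local_bounds hr0 hr (hρ j)
    rw [sub_inv_sq (by linarith)]
    have h4 : c^2/2 * ((ρ j)⁻¹)^2 ≤ μ := by
      have hp : 0 < 1 - r := by linarith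
      calc c^2/2 * ((ρ j)⁻¹)^2 ≤ (μ * (1-r)^4) * ((1-r)⁻¹)^2 :=
            mul_le_mul hr2 (inv_sq_le hr a1) (by positivity) (by positivity)
        _ = μ * (1-r)^2 := by field_simp
        _ ≤ μ := mul_le_of_le_one_right hμ (pow_le_one₀ hp.le (by linarith))
    unfold et
    nlinarith [sq_nonneg (1 - ρ j ^2)]
  have h4 := hco (et ρ)
  unfold Ef Qf
  have : h * (κ / 4 * (dd h (et ρ) + nn (et ρ))) ≤ h * (dd h ρ / 2 + qq W h (et ρ)/4 - c^2/8 * ∑ j, (ρ j - (ρ j)⁻¹)^2) := by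
    refine mul_le_mul_of_nonneg_left ?_ hh.le
    linarith
  linarith

lemma crit_test (hh : 0 < h) (ρ : ZMod N → ℝ) (hp : ρ ∈ pos (ZMod N))
    (hcr : ∀ j, gEf W h ρ j - c^2/8 * gQf h ρ j = 0) :
    ∑ j, ((ρ (j+1) - ρ j)/h)^2 * (1 + (ρ (j+1))⁻¹ * (ρ j)⁻¹) + qq W h (et ρ)
      = c^2/4 * ∑ j, (ρ j - (ρ j)⁻¹)^2 * (1 + ((ρ j)⁻¹)^2) := by
  set w : ZMod N → ℝ := fun j => ρ j - (ρ j)⁻¹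
  have h0 : ∑ j, (gEf W h ρ j - c^2/8 * gQf h ρ j) / h * w j = 0 := by
    refine Finset.sum_eq_zero fun j _ => ?_
    rw [hcr]; simp
  have hb := sbp ρ w
  have e1 : ∑ j, (gEf W h ρ j - c^2/8 * gQf h ρ j) / h * w j =
     (h^2)⁻¹ * ∑ j, -(ρ (j + 1) - 2 * ρ j + ρ (j - 1)) * w j + qq W h (et ρ)
      - c^2/4 * ∑ j, (ρ j - (ρ j)⁻¹)^2 * (1 + ((ρ j)⁻¹)^2) := by
    unfold qq
    rw [Finset.mul_sum, Finset.mul_sum, ← Finset.sum_add_distrib, ← Finset.sum_sub_distrib]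
    refine Finset.sum_congr rfl fun j _ => ?_
    have hj := (hp j).ne'
    have hw : ρ j * w j = - et ρ j := by
      simp only [w, et]; field_simp; ring
    have : et ρ j * Sop W h (et ρ) j = - (ρ j * w j) * Sop W h (et ρ) j := by rw [hw]; ring
    rw [this]
    simp only [gEf, gQf]
    have hw2 : ρ j - (ρ j)⁻¹ = w j := rfl
    rw [hw2]
    field_simp
    ring
  have e2 : (h^2)⁻¹ * ∑ j, (ρ (j+1) - ρ j) * (w (j+1) - w j) =
      ∑ j, ((ρ (j+1) - ρ j)/h)^2 * (1 + (ρ (j+1))⁻¹ * (ρ j)⁻¹) := by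
    rw [Finset.mul_sum]
    refine Finset.sum_congr rfl fun j _ => ?_
    have hj := (hp j).ne'
    have hj' := (hp (j+1)).ne'
    simp only [w]
    field_simp
    ring
  rw [e1, hb, e2] at h0
  linarith

lemma local_crit (hW : Integrable W) (hh : 0 < h)
    (hco : ∀ η : ZMod N → ℝ, μ*nn η + κ*(dd h η+nn η) ≤ (1-s)/2*dd h η + qq W h η)
    (hs : s < 1) (hr0 : 0 < r) (hr : r < 1) (hκ : 0 < κ)
    (hr1 : (1-s) * (1+r)^4 ≤ 1) (hr2 : c^2/2 ≤ μ * (1-r)^4) (hμ : 0 ≤ μ)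
    (ρ : ZMod N → ℝ) (hp : ρ ∈ pos (ZMod N))
    (hcr : ∀ j, gEf W h ρ j - c^2/8 * gQf h ρ j = 0)
    (hJ : 0 < Ef W h ρ - c^2/8 * Qf h ρ) : ∃ j, r < |ρ j - 1| := by
  by_contra hcon
  push Not at hcon
  have h0 := crit_test W h c hh ρ hp hcr
  have h1 := dd_et_le (h := h) hr0 hr ρ hcon (by linarith) hr1
  have hpr : 0 < 1 - r := by linarith
  have h2 : ∑ j, ((ρ (j+1) - ρ j)/h)^2 * (2 / (1+r)^2) ≤
      ∑ j, ((ρ (j+1) - ρ j)/h)^2 * (1 + (ρ (j+1))⁻¹ * (ρ j)⁻¹) := by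
    refine Finset.sum_le_sum fun j _ => ?_
    refine mul_le_mul_of_nonneg_left ?_ (sq_nonneg _)
    obtain ⟨a1, a2⟩ := local_bounds hr0 hr (hcon j)
    obtain ⟨b1, b2⟩ := local_bounds hr0 hr (hcon (j+1))
    have i1 : (1+r)⁻¹ ≤ (ρ j)⁻¹ := inv_anti₀ (hp j) a2
    have i2 : (1+r)⁻¹ ≤ (ρ (j+1))⁻¹ := inv_anti₀ (hp _) b2
    have i3 : (1+r)⁻¹ * (1+r)⁻¹ ≤ (ρ (j+1))⁻¹ * (ρ j)⁻¹ := by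
      apply mul_le_mul i2 i1 (by positivity) (inv_pos.2 (hp _)).le
    have i4 : (1+r)⁻¹ ≤ 1 := inv_le_one_of_one_le₀ (by linarith)
    have i5 : 0 < (1+r)⁻¹ := by positivity
    have : 2 / (1+r)^2 = 2 * ((1+r)⁻¹ * (1+r)⁻¹) := by field_simp
    rw [this]
    nlinarith
  have h3 : c^2/4 * ∑ j, (ρ j - (ρ j)⁻¹)^2 * (1 + ((ρ j)⁻¹)^2) ≤ μ * nn (et ρ) := by
    unfold nn
    rw [Finset.mul_sum, Finset.mul_sum]
    refine Finset.sum_le_sum fun j _ => ?_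
    obtain ⟨a1, a2⟩ := local_bounds hr0 hr (hcon j)
    rw [sub_inv_sq (by linarith)]
    have i1 := inv_sq_le hr a1
    have i2 : 1 ≤ ((1-r)⁻¹)^2 := one_le_pow₀ ((one_le_inv₀ hpr).2 (by linarith))
    have h4 : c^2/2 * ((ρ j)⁻¹^2 * (1 + (ρ j)⁻¹^2)) ≤ 2 * μ := by
      calc c^2/2 * ((ρ j)⁻¹^2 * (1 + (ρ j)⁻¹^2)) ≤ c^2/2 * (((1-r)⁻¹)^2 * (((1-r)⁻¹)^2 + ((1-r)⁻¹)^2)) := by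
            gcongr
        _ ≤ (μ * (1-r)^4) * (((1-r)⁻¹)^2 * (((1-r)⁻¹)^2 + ((1-r)⁻¹)^2)) := by gcongr
        _ = 2 * μ := by field_simp; ring
    unfold et
    have := mul_le_mul_of_nonneg_left h4 (sq_nonneg (1 - ρ j ^2))
    linarith
  have h4 := hco (et ρ)
  have h5 : nn (et ρ) = 0 := by
    have := nn_nonneg (et ρ)
    have := dd_nonneg h (et ρ)
    have h6 : κ * (dd h (et ρ) + nn (et ρ)) ≤ 0 := by linarith
    nlinarith
  have h6 : ∀ j, ρ j = 1 := by
    intro j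
    unfold nn at h5
    have := (Finset.sum_eq_zero_iff_of_nonneg (fun _ _ => sq_nonneg _)).1 h5 j (Finset.mem_univ j)
    have h7 : 1 - ρ j^2 = 0 := by simpa [et] using this
    have := hp j
    nlinarith
  have h7 : dd h ρ = 0 := by simp [dd, h6]
  have h8 : qq W h (et ρ) = 0 := by
    have := abs_qq_le W hW h (et ρ)
    rw [h5] at this
    simpa using this
  have := Qf_nonneg h hh.le ρ
  unfold Ef at hJ
  rw [h7, h8] at hJ
  nlinarith [mul_nonneg (sq_nonneg c) this]

end est
end DS


namespace DS
open scoped Topology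
set_option linter.unusedSectionVars false
set_option linter.unusedVariables false

section geom
variable {N : ℕ} [NeZero N]

lemma path_low (W : ℝ → ℝ) (h μ s κ r c : ℝ) (hh : 0 < h) (hN : 1 ≤ N * h)
    (hco : ∀ η : ZMod N → ℝ, μ*nn η + κ*(dd h η+nn η) ≤ (1-s)/2*dd h η + qq W h η)
    (hs : s < 1) (hr0 : 0 < r) (hr : r < 1) (hκ : 0 < κ)
    (hr1 : (1-s) * (1+r)^4 ≤ 1) (hr2 : c^2/2 ≤ μ * (1-r)^4) (hμ : 0 ≤ μ)
    (e : ZMod N → ℝ) (k : ZMod N) (hk : r ≤ |e k - 1|)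
    (p : ℝ → ZMod N → ℝ) (hp : Continuous p) (hp0 : p 0 = fun _ => 1) (hp1 : p 1 = e) :
    ∃ t, κ * r^2 / 8 ≤ Ef W h (p t) - c^2/8 * Qf h (p t) := by
  set one : ZMod N → ℝ := fun _ => 1
  have hc : ContinuousOn (fun t => ‖p t - one‖) (Set.Icc 0 1) := by fun_prop
  have h1 := intermediate_value_Icc zero_le_one hc
  have hr' : r ∈ Set.Icc ‖p 0 - one‖ ‖p 1 - one‖ := by
    constructor
    · rw [hp0]; simpa using hr0.le
    · rw [hp1]
      refine hk.trans ?_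
      have := norm_le_pi_norm (e - one) k
      simpa [one] using this
  obtain ⟨t, -, ht⟩ := h1 hr'
  refine ⟨t, ?_⟩
  have hle : ∀ j, |p t j - 1| ≤ r := by
    intro j
    have := norm_le_pi_norm (p t - one) j
    rw [show ‖p t - one‖ = r from ht] at this
    simpa [one] using this
  have hex : ∃ j, r ≤ |p t j - 1| := by
    by_contra hcon
    push Not at hcon
    have : ‖p t - one‖ < r := (pi_norm_lt_iff hr0).2 fun j => by simpa [one] using hcon j
    exact this.ne ht
  obtain ⟨j, hj⟩ := hex
  have hJ := local_J W h μ s κ r c hh hco hs hr0 hr hr1 hr2 hμ (p t) hle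
  refine le_trans ?_ hJ
  have hb := sob hh hN (a := 2) two_pos (et (p t)) j
  have hη : r^2 ≤ (et (p t) j)^2 := by
    obtain ⟨a1, a2⟩ := local_bounds hr0 hr (hle j)
    have : et (p t) j = -((p t j - 1) * (p t j + 1)) := by unfold et; ring
    rw [this, neg_sq, mul_pow]
    have h3 : r^2 ≤ (p t j - 1)^2 := by rw [← sq_abs (p t j - 1)]; gcongr
    have h4 : 1 ≤ (p t j + 1)^2 := by nlinarith
    nlinarith
  have hd := dd_nonneg h (et (p t))
  have : r^2 ≤ 2 * (h * (dd h (et (p t)) + nn (et (p t)))) := by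
    have := mul_nonneg hh.le hd
    linarith
  have := mul_le_mul_of_nonneg_left this hκ.le
  linarith

lemma tent (n : ℕ) (hn : 3 ≤ n) (hN : N = n^2) (h : ℝ) (hh : h = 1 / n) :
    ∃ φ : ZMod N → ℝ, (∀ j, 0 ≤ φ j ∧ φ j ≤ 1) ∧ (∃ k, φ k = 1) ∧ dd h φ ≤ 2 * n + 1 ∧
      (∑ j, (if φ j = 0 then (0:ℝ) else 1)) ≤ 2 * n + 1 := by
  have hn0 : (0:ℝ) < n := by positivity
  have hh0 : 0 < h := by rw [hh]; positivity
  have hnh : n * h = 1 := by rw [hh]; field_simp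
  have hn3 : (3:ℝ) ≤ n := by exact_mod_cast hn
  have hlt : n < N := by rw [hN]; nlinarith
  have hNr : (N:ℝ) = n * n := by rw [hN]; push_cast; ring
  let g : ℝ → ℝ := fun x => max 0 (1 - |h * x - 1|)
  let φ : ZMod N → ℝ := fun j => g j.val
  have hg0 : ∀ x : ℝ, 2 * (n:ℝ) ≤ x → g x = 0 := by
    intro x hx
    have : 2 ≤ h * x := by nlinarith
    apply max_eq_left
    rw [abs_of_nonneg (by linarith)]; linarith
  have hgl : ∀ x, |g (x+1) - g x| ≤ h := by
    intro x
    have h1 := abs_max_sub_max_le_abs (1 - |h * (x+1) - 1|) (1 - |h * x - 1|) 0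
    simp only [g]
    rw [max_comm 0, max_comm 0]
    refine h1.trans ?_
    have h2 := abs_abs_sub_abs_le (h * x - 1) (h * (x+1) - 1)
    have e : (1 - |h * (x+1) - 1|) - (1 - |h * x - 1|) = |h * x - 1| - |h * (x+1) - 1| := by ring
    rw [e]
    refine h2.trans (le_of_eq ?_)
    rw [show h * x - 1 - (h * (x+1) - 1) = -h by ring, abs_neg, abs_of_pos hh0]
  have hcount : ∑ i ∈ Finset.range N, (if i < 2 * n + 1 then (1:ℝ) else 0) ≤ 2 * n + 1 := by
    rw [Finset.sum_ite, Finset.sum_const_zero, add_zero, Finset.sum_const, nsmul_eq_mul, mul_one]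
    have : (Finset.filter (fun i => i < 2 * n + 1) (Finset.range N)).card ≤ 2 * n + 1 := by
      refine (Finset.card_le_card (t := Finset.range (2*n+1)) ?_).trans (by simp)
      intro i hi
      simp at hi ⊢
      exact hi.2
    exact_mod_cast this
  have hv : ∀ i ∈ Finset.range N, ((i : ZMod N)).val = i := fun i hi =>
    ZMod.val_natCast_of_lt (Finset.mem_range.1 hi)
  refine ⟨φ, fun j => ⟨le_max_left _ _, ?_⟩, ⟨(n : ZMod N), ?_⟩, ?_, ?_⟩
  · exact max_le zero_le_one (by linarith [abs_nonneg (h * ((j.val : ℕ) : ℝ) - 1)])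
  · simp only [φ, ZMod.val_natCast_of_lt hlt, g]
    rw [mul_comm h, hnh]; simp
  · unfold dd
    rw [← sum_range_zmod (fun j => ((φ (j+1) - φ j)/h)^2)]
    refine (Finset.sum_le_sum fun i hi => ?_).trans hcount
    have hi' := Finset.mem_range.1 hi
    have hd : φ ((i : ZMod N) + 1) - φ i = g ((i:ℝ)+1) - g i := by
      simp only [φ, hv i hi]
      congr 1
      by_cases hi2 : i + 1 < N
      · have : ((i : ZMod N) + 1).val = i + 1 := by
          have := ZMod.val_natCast_of_lt hi2
          push_cast at this; exact this
        rw [this]; push_cast; rfl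
      · have e : i + 1 = N := by omega
        have : (i : ZMod N) + 1 = 0 := by
          have : ((i + 1 : ℕ) : ZMod N) = 0 := by rw [e]; simp
          simpa using this
        rw [this]
        have er : (i:ℝ) + 1 = n * n := by rw [← hNr, ← e]; push_cast; rfl
        rw [er, hg0 (n*n) (by nlinarith)]
        simp [g]
    rw [hd]
    split_ifs with hc
    · rw [div_pow, div_le_one (by positivity), ← sq_abs]
      gcongr
      exact hgl _
    · have : (2 * n + 1 : ℝ) ≤ i := by
        push Not at hc; exact_mod_cast hc
      rw [hg0 i (by linarith), hg0 (i+1) (by linarith)]; simp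
  · rw [← sum_range_zmod (fun j => if φ j = 0 then (0:ℝ) else 1)]
    refine (Finset.sum_le_sum fun i hi => ?_).trans hcount
    have : φ i = g i := by simp only [φ, hv i hi]
    rw [this]
    by_cases hc : i < 2 * n + 1
    · rw [if_pos hc]; split_ifs <;> norm_num
    · rw [if_neg hc, if_pos]
      apply hg0
      push Not at hc
      have : (2 * n + 1 : ℝ) ≤ i := by exact_mod_cast hc
      linarith

lemma endpoint (W : ℝ → ℝ) (hW : Integrable W) (n : ℕ) (hn : 3 ≤ n) (hN : N = n^2) (h : ℝ) (hh : h = 1 / n)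
    (c1 : ℝ) (hc1 : 0 < c1) :
    ∃ e : ZMod N → ℝ, (∃ p : ℝ → ZMod N → ℝ, Continuous p ∧ (∀ t, p t ∈ pos (ZMod N)) ∧ p 0 = (fun _ => 1) ∧ p 1 = e ∧
      ∀ t, Ef W h (p t) ≤ 3 * (1 + ∫ t, |W t|)) ∧ Ef W h e ≤ c1^2/8 * Qf h e ∧
      ∃ k, 1/2 ≤ |e k - 1| := by
  obtain ⟨φ, hφ, ⟨k, hk⟩, hd, hs⟩ := tent n hn hN h hh
  have hn0 : (0:ℝ) < n := by positivity
  have hh0 : 0 < h := by rw [hh]; positivity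
  have hnh : n * h = 1 := by rw [hh]; field_simp
  have hn3 : (3:ℝ) ≤ n := by exact_mod_cast hn
  set w := ∫ t, |W t|
  have hw : 0 ≤ w := integral_nonneg fun _ => abs_nonneg _
  set C0 := 3 * (1 + w)
  have hC0 : 0 ≤ C0 := by positivity
  set K := 8 * C0 / (c1^2 * h)
  have hK : 0 ≤ K := by positivity
  set ε := (2 + K)⁻¹
  have hε : 0 < ε := by positivity
  have hε2 : ε ≤ 1/2 := by
    rw [one_div]; exact inv_anti₀ (by norm_num) (by linarith)
  let cl : ℝ → ℝ := fun t => max 0 (min t 1)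
  have hcl : ∀ t, 0 ≤ cl t ∧ cl t ≤ 1 := fun t => ⟨le_max_left _ _, max_le zero_le_one (min_le_right _ _)⟩
  let p : ℝ → ZMod N → ℝ := fun t j => 1 - cl t * (1 - ε) * φ j
  have hb : ∀ t j, 0 ≤ cl t * (1-ε) * φ j ∧ cl t * (1-ε) * φ j ≤ 1 - ε := by
    intro t j
    obtain ⟨a1, a2⟩ := hcl t
    obtain ⟨b1, b2⟩ := hφ j
    have : 0 ≤ 1 - ε := by linarith
    refine ⟨by positivity, ?_⟩
    calc cl t * (1-ε) * φ j ≤ 1 * (1-ε) * 1 := by gcongr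
      _ = _ := by ring
  have hpp : ∀ t, p t ∈ pos (ZMod N) := fun t j => by
    have := (hb t j).2
    simp only [p]; linarith
  have hE : ∀ t, Ef W h (p t) ≤ C0 := by
    intro t
    have h1 : dd h (p t) ≤ dd h φ := by
      unfold dd
      refine Finset.sum_le_sum fun j _ => ?_
      have : (p t (j+1) - p t j)/h = -(cl t * (1-ε)) * ((φ (j+1) - φ j)/h) := by simp only [p]; ring
      rw [this, mul_pow, neg_sq]
      have h0 := hcl t
      have : (cl t * (1-ε))^2 ≤ 1 := by
        have h2 : 0 ≤ 1 - ε := by linarith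
        apply pow_le_one₀ (mul_nonneg h0.1 h2)
        nlinarith
      nlinarith [sq_nonneg ((φ (j+1) - φ j)/h)]
    have h2 : nn (et (p t)) ≤ 2 * n + 1 := by
      refine le_trans ?_ hs
      unfold nn
      refine Finset.sum_le_sum fun j _ => ?_
      split_ifs with hz
      · simp [et, p, hz]
      · have := hb t j
        have h3 : 0 ≤ p t j ∧ p t j ≤ 1 := by simp only [p]; constructor <;> linarith
        have h4 : 0 ≤ et (p t) j ∧ et (p t) j ≤ 1 := by
          unfold et; constructor <;> nlinarith
        nlinarith
    have h3 := (abs_le.1 (abs_qq_le W hW h (et (p t)))).2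
    have h4 : qq W h (et (p t)) ≤ w * (2 * n + 1) := h3.trans (by gcongr)
    have h5 : dd h (p t) / 2 + qq W h (et (p t)) / 4 ≤ (1 + w) * (2 * n + 1) := by nlinarith
    unfold Ef
    calc _ ≤ h * ((1 + w) * (2 * n + 1)) := by gcongr
      _ ≤ h * ((1+w) * (3 * n)) := by gcongr; linarith
      _ = C0 * (n * h) := by simp only [C0]; ring
      _ = C0 := by rw [hnh, mul_one]
  refine ⟨p 1, ⟨p, ?_, hpp, ?_, rfl, hE⟩, ?_, k, ?_⟩
  · simp only [p, cl]; fun_prop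
  · funext j; simp [p, cl]
  · have hk1 : p 1 k = ε := by simp [p, cl, hk]
    have h1 : K ≤ (ε - ε⁻¹)^2 := by
      have : ε⁻¹ = 2 + K := by simp [ε]
      rw [this]
      have : 1 + K ≤ 2 + K - ε := by linarith
      nlinarith
    have h2 : h * (p 1 k - (p 1 k)⁻¹)^2 ≤ Qf h (p 1) := by
      unfold Qf
      gcongr
      exact Finset.single_le_sum (f := fun j => (p 1 j - (p 1 j)⁻¹) ^ 2) (fun _ _ => sq_nonneg _) (Finset.mem_univ k)
    rw [hk1] at h2
    calc _ ≤ C0 := hE 1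
      _ = c1^2/8 * (h * K) := by simp only [K]; field_simp
      _ ≤ c1^2/8 * (h * (ε - ε⁻¹)^2) := by gcongr
      _ ≤ _ := by gcongr
  · have hk1 : p 1 k = ε := by simp [p, cl, hk]
    rw [hk1, abs_sub_comm, abs_of_nonneg (by linarith)]
    linarith

end geom

instance neZeroSq (n : ℕ) : NeZero ((n+3)^2) := ⟨by positivity⟩

lemma exists_r (s lam μ : ℝ) (hs : 0 < s) (hlam : lam < μ) :
    ∃ r : ℝ, 0 < r ∧ r < 1/2 ∧ (1-s)*(1+r)^4 ≤ 1 ∧ lam ≤ μ*(1-r)^4 := by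
  have h1 : ∀ᶠ r in 𝓝 (0:ℝ), (1-s)*(1+r)^4 < 1 := by
    have : ContinuousAt (fun r : ℝ => (1-s)*(1+r)^4) 0 := by fun_prop
    exact this.eventually_lt_const (by simp; exact hs)
  have h2 : ∀ᶠ r in 𝓝 (0:ℝ), lam < μ*(1-r)^4 := by
    have : ContinuousAt (fun r : ℝ => μ*(1-r)^4) 0 := by fun_prop
    exact this.eventually_const_lt (by simpa using hlam)
  have h3 : ∀ᶠ r in 𝓝 (0:ℝ), r < 1/2 := eventually_lt_nhds (by norm_num)
  have h4 : ∀ᶠ r in 𝓝[>] (0:ℝ), 0 < r := self_mem_nhdsWithin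
  obtain ⟨r, ⟨⟨a, b⟩, d⟩, e⟩ := (((h1.and h2).and h3).filter_mono nhdsWithin_le_nhds |>.and h4).exists
  exact ⟨r, e, d, a.le, b.le⟩

theorem crit_exists (W : ℝ → ℝ) (hW : Integrable W) (FW : ℝ → ℝ)
    (hFW : ∀ ξ, FW ξ = ∫ x, W x * Real.cos (ξ*x)) (σ : ℝ) (hσ : ∀ ξ, σ ≤ FW ξ + ξ^2/2)
    (c1 c2 : ℝ) (hc1 : 0 < c1) (hc12 : c1 < c2) (hc2 : c2^2/2 < σ) :
    ∃ r : ℝ, 0 < r ∧ r < 1/2 ∧ ∀ᵐ c ∂(volume.restrict (Set.Ioo c1 c2)), ∃ Q0 : ℝ, 0 ≤ Q0 ∧ ∃ᶠ n : ℕ in atTop,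
      ∃ ρ ∈ pos (ZMod ((n+3)^2)), Qf (1/((n+3:ℕ):ℝ)) ρ ≤ Q0 ∧ Ef W (1/((n+3:ℕ):ℝ)) ρ ≤ Q0 ∧
      (∃ j, r < |ρ j - 1|) ∧
      ∀ j, gEf W (1/((n+3:ℕ):ℝ)) ρ j - c^2/8 * gQf (1/((n+3:ℕ):ℝ)) ρ j = 0 := by
  set μ := (c2^2/2+σ)/2 with hμdef
  have hμ0 : 0 ≤ μ := by nlinarith [sq_nonneg c2]
  obtain ⟨s, κ, h0, hs, hs1, hκ, hh0, hco⟩ := coercive W hW FW hFW σ hσ μ hμ0 (by linarith)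
  obtain ⟨r, hr0, hr, hr1, hr2⟩ := exists_r s (c2^2/2) μ hs (by linarith)
  refine ⟨r, hr0, hr, ?_⟩
  set w := ∫ t, |W t|
  have hw : 0 ≤ w := integral_nonneg fun _ => abs_nonneg _
  set C0 := 3 * (1 + w) with hC0def
  have hC0 : 0 ≤ C0 := by positivity
  set α := κ * r^2/8 with hα
  have hα0 : 0 < α := by positivity
  obtain ⟨n0, hn0⟩ : ∃ n0 : ℕ, 1 / h0 < n0 := exists_nat_gt _
  let H : ℕ → ℝ := fun n => 1 / ((n+3:ℕ):ℝ)
  have hH : ∀ n, 0 < H n := fun n => by simp only [H]; positivity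
  have hHN : ∀ n, 1 ≤ (((n+3)^2 : ℕ):ℝ) * H n := fun n => by
    simp only [H]
    rw [mul_one_div, le_div_iff₀ (by positivity)]
    push_cast
    have : (0:ℝ) ≤ n := by positivity
    nlinarith
  have hend := fun n : ℕ => endpoint (N := (n+3)^2) W hW (n+3) (by omega) rfl (H n) rfl c1 hc1
  choose e hp hJe k hk using hend
  let one : ∀ n : ℕ, ZMod ((n+3)^2) → ℝ := fun n _ => 1
  let L : ℕ → ℝ → ℝ := fun n c => level (Ef W (H n)) (Qf (H n)) (one n) (e n) c
  have hne : ∀ n c, C0 ∈ levelSet (Ef W (H n)) (Qf (H n)) (one n) (e n) c := by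
    intro n c
    obtain ⟨p, p1, p2, p3, p4, p5⟩ := hp n
    refine ⟨p, p1, p2, p3, p4, fun t => ?_⟩
    have := Qf_nonneg (H n) (hH n).le (p t)
    have := p5 t
    have : 0 ≤ c^2/8 * Qf (H n) (p t) := by positivity
    linarith
  have hHlt : ∀ n, n0 ≤ n → H n < h0 := by
    intro n hn
    simp only [H]
    rw [div_lt_comm₀ (by positivity) hh0]
    have : (n0:ℝ) ≤ n := by exact_mod_cast hn
    push_cast
    linarith
  have hlow : ∀ n, n0 ≤ n → ∀ c, c ∈ Set.Icc c1 c2 → ∀ p : ℝ → ZMod ((n+3)^2) → ℝ, Continuous p → p 0 = one n → p 1 = e n →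
      ∃ t, α ≤ Ef W (H n) (p t) - c^2/8 * Qf (H n) (p t) := by
    intro n hn c hc p p1 p3 p4
    have hc' : c^2/2 ≤ μ * (1-r)^4 := by
      have : c^2 ≤ c2^2 := pow_le_pow_left₀ (by linarith [hc.1]) hc.2 2
      linarith
    exact path_low W (H n) μ s κ r c (hH n) (hHN n) (fun η => hco (H n) (hH n) (hHlt n hn) _ η) hs1 hr0 (by linarith) hκ hr1
      hc' hμ0 (e n) (k n) (by linarith [hk n]) p p1 p3 p4
  have hmem : ∀ n, n0 ≤ n → ∀ c, c ∈ Set.Icc c1 c2 → ∀ m ∈ levelSet (Ef W (H n)) (Qf (H n)) (one n) (e n) c, α ≤ m := by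
    intro n hn c hc m ⟨p, p1, p2, p3, p4, p5⟩
    obtain ⟨t, ht⟩ := hlow n hn c hc p p1 p3 p4
    exact ht.trans (p5 t)
  have hbb : ∀ n, n0 ≤ n → ∀ c, c ∈ Set.Icc c1 c2 → BddBelow (levelSet (Ef W (H n)) (Qf (H n)) (one n) (e n) c) :=
    fun n hn c hc => ⟨α, fun m hm => hmem n hn c hc m hm⟩
  have hLC : ∀ n, n0 ≤ n → ∀ c, c ∈ Set.Icc c1 c2 → L n c ≤ C0 := fun n hn c hc => csInf_le (hbb n hn c hc) (hne n c)
  have hLα : ∀ n, n0 ≤ n → ∀ c, c ∈ Set.Icc c1 c2 → α ≤ L n c := fun n hn c hc =>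
    le_csInf ⟨_, hne n c⟩ (hmem n hn c hc)
  have hanti : ∀ n, n0 ≤ n → ∀ c ∈ Set.Icc c1 c2, ∀ c' ∈ Set.Icc c1 c2, c ≤ c' → L n c' ≤ L n c := by
    intro n hn c hc c' hc' hcc
    refine csInf_le_csInf (hbb n hn c' hc') ⟨_, hne n c⟩ ?_
    rintro m ⟨p, p1, p2, p3, p4, p5⟩
    refine ⟨p, p1, p2, p3, p4, fun t => ?_⟩
    have h1 := p5 t
    have h2 := Qf_nonneg (H n) (hH n).le (p t)
    have h3 : c^2 ≤ c'^2 := pow_le_pow_left₀ (by linarith [hc.1]) hcc 2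
    nlinarith
  let cl : ℝ → ℝ := fun c => max c1 (min c c2)
  have hcl : ∀ c, cl c ∈ Set.Icc c1 c2 := fun c => ⟨le_max_left _ _, max_le hc12.le (min_le_right _ _)⟩
  have hclm : Monotone cl := fun a b hab => max_le_max le_rfl (min_le_min hab le_rfl)
  have hcle : ∀ c ∈ Set.Icc c1 c2, cl c = c := fun c hc => by
    simp only [cl]; rw [min_eq_left hc.2, max_eq_right hc.1]
  let f : ℕ → ℝ → ℝ := fun n c => - L (n + n0) (cl c)
  have hfm : ∀ n, Monotone (f n) := fun n a b hab =>
    neg_le_neg (hanti (n+n0) (by omega) _ (hcl a) _ (hcl b) (hclm hab))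
  have hfat := fatou_slope f hfm c1 c2 hc12 C0 (fun n => by
    have h1 := hLC (n+n0) (by omega) _ (hcl c1)
    have h2 := hLα (n+n0) (by omega) _ (hcl c2)
    simp only [f]; linarith)
  filter_upwards [hfat, ae_restrict_mem measurableSet_Ioo] with c hc hcm
  obtain ⟨M, hM⟩ := hc
  set M1 := max M 0 + 1 with hM1
  have hM10 : 0 ≤ M1 := by positivity
  set Q1 := 4 * (M1 + 4)/c1
  have hQ1 : 0 ≤ Q1 := by positivity
  refine ⟨C0 + 1 + Q1 + c2^2/8 * Q1, by positivity, ?_⟩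
  have hmap : Tendsto (fun n => n + n0) atTop atTop := tendsto_add_atTop_nat n0
  refine hmap.frequently (hM.mono ?_)
  rintro n ⟨hd, hdM⟩
  set m := n + n0
  have hmn : n0 ≤ m := by omega
  have hcI : c ∈ Set.Icc c1 c2 := ⟨hcm.1.le, hcm.2.le⟩
  have hslope : ∀ᶠ c' in 𝓝[<] c, L m c' ≤ L m c + M1 * (c - c') := by
    have h1 := hd.hasDerivAt.hasDerivWithinAt (s := Set.Iio c)
    rw [hasDerivWithinAt_iff_tendsto_slope' (by simp)] at h1
    have h2 := h1.eventually_lt_const (show deriv (f n) c < M1 by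
      have := le_max_left M 0; linarith)
    have h3 : ∀ᶠ c' in 𝓝[<] c, c1 < c' := eventually_nhdsWithin_of_eventually_nhds (eventually_gt_nhds hcm.1)
    filter_upwards [h2, h3, self_mem_nhdsWithin] with c' h2 h3 h4
    have h4 : c' < c := h4
    rw [slope_def_field, div_lt_iff_of_neg (by linarith)] at h2
    simp only [f] at h2
    rw [hcle c hcI, hcle c' ⟨h3.le, by linarith [hcm.2]⟩] at h2
    linarith
  have hcr := mp_crit (Ef W (H m)) (Qf (H m)) (gEf W (H m)) (gQf (H m)) (Ef_cont W hW _).continuousOn (Qf_cont _)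
    (gEf_cont W hW _).continuousOn (gQf_cont _) (fun ρ _ w => dEf W hW _ ρ w) (fun ρ hρ w => dQf _ ρ hρ w)
    (fun ρ => Qf_nonneg _ (hH m).le ρ) (fun M => Qf_compact (hH m) M) (one m) (e m) c1 c α M1 hc1 hcm.1 hα0 hM10
    (by
      have h1 : dd (H m) (one m) = 0 := by simp [dd, one]
      have h2 : et (one m) = 0 := by funext j; simp [et, one]
      have h3 : qq W (H m) (et (one m)) = 0 := by rw [h2]; simp [qq]
      have : Ef W (H m) (one m) = 0 := by unfold Ef; rw [h1, h3]; simp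
      have h2 := Qf_nonneg (H m) (hH m).le (one m)
      rw [this]
      have : 0 ≤ c^2/8 * Qf (H m) (one m) := by positivity
      linarith)
    (by
      have h1 := hJe m
      have h2 := Qf_nonneg (H m) (hH m).le (e m)
      have h3 : c1^2 ≤ c^2 := pow_le_pow_left₀ hc1.le hcm.1.le 2
      nlinarith)
    (fun c' => ⟨_, hne m c'⟩)
    (fun p p1 _ p3 p4 => hlow m hmn c hcI p p1 p3 p4) hslope.frequently
  obtain ⟨ρ, hρ, q1, q2, q3, q4⟩ := hcr
  have hc' : c^2 ≤ c2^2 := pow_le_pow_left₀ (by linarith [hcm.1]) hcm.2.le 2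
  refine ⟨ρ, hρ, ?_, ?_, ?_, q4⟩
  · have : Qf (H m) ρ ≤ Q1 := q1
    have : 0 ≤ c2^2/8 * Q1 := by positivity
    show Qf (H m) ρ ≤ _
    linarith
  · have h1 : Qf (H m) ρ ≤ Q1 := q1
    have h2 : c^2/8 * Qf (H m) ρ ≤ c2^2/8 * Q1 := by
      apply mul_le_mul (by linarith) h1 (Qf_nonneg _ (hH m).le _) (by positivity)
    have h3 := hLC m hmn c hcI
    have h4 : Ef W (H m) ρ - c^2/8 * Qf (H m) ρ ≤ L m c + 1 := q3
    show Ef W (H m) ρ ≤ _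
    linarith
  · exact local_crit W (H m) μ s κ r c hW (hH m) (fun η => hco (H m) (hH m) (hHlt m hmn) _ η) hs1 hr0 (by linarith) hκ hr1
      (by linarith) hμ0 ρ hρ q4 (by linarith)
end DS


namespace DS
open scoped Topology
set_option linter.unusedSectionVars false
set_option linter.unusedVariables false

lemma logF_diff {a b : ℝ} (ha : 0 < a) (hb : 0 < b) :
    |(Real.log b - b^2/2) - (Real.log a - a^2/2)| ≤ |b - a| * (|a - a⁻¹| + |b - b⁻¹|) := by
  have hpos : ∀ x ∈ Set.uIcc a b, 0 < x := fun x hx => (lt_min ha hb).trans_le hx.1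
  have h1 := Convex.norm_image_sub_le_of_norm_hasDerivWithin_le (𝕜 := ℝ) (s := Set.uIcc a b)
    (f := fun x => Real.log x - x^2/2) (f' := fun x => x⁻¹ - x) (C := |a - a⁻¹| + |b - b⁻¹|)
    (x := a) (y := b)
    (fun x hx => by
      have := ((Real.hasDerivAt_log (hpos x hx).ne').sub (((hasDerivAt_id x).pow 2).div_const 2)).hasDerivWithinAt (s := Set.uIcc a b)
      refine this.congr_deriv ?_
      simp)
    (fun x hx => by
      have hx0 := hpos x hx
      rw [Real.norm_eq_abs, abs_sub_comm]
      have key : ∀ y z : ℝ, 0 < y → y ≤ x → x ≤ z → |x - x⁻¹| ≤ |y - y⁻¹| + |z - z⁻¹| := by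
        intro y z hy hyx hxz
        have i1 : x⁻¹ ≤ y⁻¹ := inv_anti₀ hy hyx
        have i2 : z⁻¹ ≤ x⁻¹ := inv_anti₀ hx0 hxz
        rw [abs_le]
        have := neg_abs_le (y - y⁻¹)
        have := le_abs_self (z - z⁻¹)
        have := abs_nonneg (y - y⁻¹)
        have := abs_nonneg (z - z⁻¹)
        constructor <;> linarith
      rcases le_total a b with hab | hab
      · rw [Set.uIcc_of_le hab] at hx
        exact key a b ha hx.1 hx.2
      · rw [Set.uIcc_of_ge hab] at hx
        rw [add_comm]
        exact key b a hb hx.1 hx.2)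
    (convex_uIcc a b) Set.left_mem_uIcc Set.right_mem_uIcc
  rw [mul_comm]
  simpa using h1

lemma unif (W : ℝ → ℝ) (hW : Integrable W) (Q0 : ℝ) (hQ0 : 0 ≤ Q0) :
    ∃ C : ℝ, 1 ≤ C ∧ ∀ (N : ℕ) [NeZero N] (h : ℝ), 0 < h → 1 ≤ N * h → ∀ ρ ∈ pos (ZMod N),
      Qf h ρ ≤ Q0 → Ef W h ρ ≤ Q0 →
      h * dd h ρ ≤ C ∧ h * nn (et ρ) ≤ C ∧ ∀ j, C⁻¹ ≤ ρ j ∧ ρ j ≤ C := by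
  set w := ∫ t, |W t|
  have hw : 0 ≤ w := integral_nonneg fun _ => abs_nonneg _
  set a := (1 + w * Q0)⁻¹
  have ha : 0 < a := by positivity
  set Y0 := 4 * (Q0 + 2 * w * Q0 + w / 2 * Q0 * (Q0 + 2 / a * Q0))
  have hY0 : 0 ≤ Y0 := by positivity
  set V2 := Q0 + a / 2 * Y0 + 2 / a * Q0
  have hV2 : 0 ≤ V2 := by positivity
  set Z := Q0 * (8 + 2 * V2)
  have hZ : 0 ≤ Z := by positivity
  set L := Real.log (2 + Q0) + (2 + Q0)^2/2 + Y0/2 + 2 * Q0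
  set C := 2 + Y0 + Z + V2 + Real.exp L
  have hC : 1 ≤ C := by
    have := Real.exp_pos L
    simp only [C]; linarith
  refine ⟨C, hC, ?_⟩
  intro N _ h hh hN ρ hρ hQ hE
  set v : ZMod N → ℝ := fun j => ρ j - 1
  have hddv : dd h v = dd h ρ := by simp [dd, v]
  have hv1 : ∀ j, v j ^2 ≤ (ρ j - (ρ j)⁻¹)^2 := by
    intro j
    have hj := hρ j
    have e : ρ j - (ρ j)⁻¹ = v j * (1 + (ρ j)⁻¹) := by simp only [v]; field_simp; ring
    rw [e, mul_pow]
    have : 1 ≤ (1 + (ρ j)⁻¹)^2 := one_le_pow₀ (by have := inv_pos.2 hj; linarith)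
    nlinarith [sq_nonneg (v j)]
  have hnv : h * nn v ≤ Q0 := by
    refine le_trans ?_ hQ
    unfold Qf nn
    exact mul_le_mul_of_nonneg_left (Finset.sum_le_sum fun j _ => hv1 j) hh.le
  set Y := h * dd h ρ
  have hYn : 0 ≤ Y := mul_nonneg hh.le (dd_nonneg h ρ)
  have hsv : ∀ j, v j^2 ≤ Q0 + a/2 * Y + 2/a*Q0 := by
    intro j
    have := sob hh hN ha v j
    rw [hddv] at this
    have h2 : 2/a * (h * nn v) ≤ 2/a * Q0 := by gcongr
    simp only [Y]
    linarith
  have het : ∀ V, (∀ j, v j^2 ≤ V) → h * nn (et ρ) ≤ Q0 * (8 + 2 * V) := by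
    intro V hV
    have hV0 : 0 ≤ V := (sq_nonneg _).trans (hV 0)
    have : nn (et ρ) ≤ nn v * (8 + 2 * V) := by
      unfold nn
      rw [Finset.sum_mul]
      refine Finset.sum_le_sum fun j _ => ?_
      have e : et ρ j = -(v j * (2 + v j)) := by simp only [et, v]; ring
      rw [e, neg_sq, mul_pow]
      gcongr
      nlinarith [hV j, sq_nonneg (2 - v j)]
    calc h * nn (et ρ) ≤ h * (nn v * (8 + 2 * V)) := by gcongr
      _ = (h * nn v) * (8 + 2*V) := by ring
      _ ≤ _ := by gcongr
  have hY : Y ≤ Y0 := by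
    have h1 := het _ hsv
    have h2 := (abs_le.1 (abs_qq_le W hW h (et ρ))).1
    have h3 : -(w * (h * nn (et ρ))) ≤ h * qq W h (et ρ) := by
      have := mul_le_mul_of_nonneg_left h2 hh.le
      linarith
    have h4 : w * (h * nn (et ρ)) ≤ w * (Q0 * (8 + 2 * (Q0 + a/2 * Y + 2/a*Q0))) := by gcongr
    have h5 : Y / 2 + h * qq W h (et ρ) / 4 ≤ Q0 := by
      have : Ef W h ρ = Y / 2 + h * qq W h (et ρ) / 4 := by unfold Ef; simp only [Y]; ring
      rw [← this]; exact hE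
    have h6 : w * Q0 * a ≤ 1 := by
      simp only [a]
      rw [← div_eq_mul_inv, div_le_one (by positivity)]; linarith
    have h7 : w * Q0 * a * Y ≤ 1 * Y := by gcongr
    simp only [Y0]
    linarith
  have hV : ∀ j, v j^2 ≤ V2 := fun j => (hsv j).trans (by simp only [V2]; gcongr)
  have hL := Real.exp_pos L
  refine ⟨by simp only [C]; linarith, (het _ hV).trans (by simp only [C]; linarith), fun j => ⟨?_, ?_⟩⟩
  · have hF : ∀ i k, |(Real.log (ρ i) - ρ i^2/2) - (Real.log (ρ k) - ρ k^2/2)| ≤ Y/2 + 2 * Q0 := by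
      intro i k
      refine (tv (fun i => Real.log (ρ i) - ρ i^2/2) i k).trans ?_
      have : ∀ i, |(Real.log (ρ (i+1)) - ρ (i+1)^2/2) - (Real.log (ρ i) - ρ i^2/2)| ≤
        h * (((ρ (i+1) - ρ i)/h)^2 / 2) + h * ((ρ i - (ρ i)⁻¹)^2 + (ρ (i+1) - (ρ (i+1))⁻¹)^2) := by
        intro i
        refine (logF_diff (hρ i) (hρ (i+1))).trans ?_
        set D := (ρ (i+1) - ρ i)/h
        have hD : ρ (i+1) - ρ i = h * D := by simp only [D]; field_simp
        rw [hD, abs_mul, abs_of_pos hh, mul_assoc, ← mul_add]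
        gcongr
        rw [← sq_abs D, ← sq_abs (ρ i - (ρ i)⁻¹), ← sq_abs (ρ (i+1) - (ρ (i+1))⁻¹)]
        generalize |D| = x
        generalize |ρ i - (ρ i)⁻¹| = y
        generalize |ρ (i+1) - (ρ (i+1))⁻¹| = z
        nlinarith [sq_nonneg (x - (y+z)), sq_nonneg (y - z)]
      refine (Finset.sum_le_sum fun i _ => this i).trans ?_
      rw [Finset.sum_add_distrib, ← Finset.mul_sum, ← Finset.mul_sum, Finset.sum_add_distrib,
        sum_shift (fun i => (ρ i - (ρ i)⁻¹)^2) 1, ← Finset.sum_div]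
      unfold Qf at hQ
      simp only [Y, dd]
      linarith
    obtain ⟨k, hk⟩ := exists_min (fun j => (ρ j - (ρ j)⁻¹)^2)
    have hk' : (ρ k - (ρ k)⁻¹)^2 ≤ Q0 := by
      refine le_trans ?_ hQ
      unfold Qf
      have : h * (N * (ρ k - (ρ k)⁻¹)^2) ≤ h * ∑ j, (ρ j - (ρ j)⁻¹)^2 := by gcongr
      nlinarith [sq_nonneg (ρ k - (ρ k)⁻¹)]
    obtain ⟨b1, b2⟩ := inv_bd (hρ k) hQ0 hk'
    have h1 := (abs_le.1 (hF j k)).1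
    have h2 : - Real.log (2 + Q0) ≤ Real.log (ρ k) := by
      rw [← Real.log_inv]
      exact Real.log_le_log (by positivity) b2
    have h3 : ρ k^2 ≤ (2+Q0)^2 := pow_le_pow_left₀ (hρ k).le b1 2
    have h4 : -L ≤ Real.log (ρ j) := by
      simp only [L]
      nlinarith [sq_nonneg (ρ j)]
    have h5 : Real.exp (-L) ≤ ρ j := by
      rw [← Real.exp_log (hρ j)]; exact Real.exp_le_exp.2 h4
    refine le_trans ?_ h5
    rw [Real.exp_neg]
    apply inv_anti₀ hL
    simp only [C]; linarith
  · have h1 := hV j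
    have h2 : ρ j ≤ 2 + V2 := by
      have : ρ j = 1 + v j := by simp [v]
      nlinarith [sq_nonneg (v j - 1)]
    simp only [C]; linarith

/-- lattice data transported to `ℤ` -/
structure Lat (W : ℝ → ℝ) (c r C : ℝ) (h : ℝ) (P : ℕ) (R D : ℤ → ℝ) : Prop where
  h1 : ∀ j, R (j+1) - R j = h * D j
  h2 : ∀ j, D (j+1) - D j = -h * (R (j+1) * (∫ t, W t * (((1 - R (j+1-⌊t/h⌋)^2) + (1 - R (j+1+⌊t/h⌋)^2))/2))
      + c^2/4 * (R (j+1) - (R (j+1))⁻¹^3))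
  h3 : ∀ j, C⁻¹ ≤ R j ∧ R j ≤ C
  h4 : ∀ j, |D j| ≤ C
  h5 : r ≤ |R 0 - 1|
  h6 : ∀ k : ℤ, h * ∑ i ∈ Finset.range P, D (k + i)^2 ≤ C
  h7 : ∀ k : ℤ, h * ∑ i ∈ Finset.range P, (1 - R (k + i)^2)^2 ≤ C

lemma sum_range_int {N : ℕ} [NeZero N] (g : ZMod N → ℝ) (k : ℤ) (j0 : ZMod N) :
    ∑ i ∈ Finset.range N, g (((k + i : ℤ) : ZMod N) + j0) = ∑ j, g j := by
  rw [← sum_shift g ((k : ZMod N) + j0), ← sum_range_zmod]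
  refine Finset.sum_congr rfl fun i _ => ?_
  congr 1
  push_cast
  ring

lemma D_bound {N : ℕ} (m : ℕ) (hm : 0 < m) (h : ℝ) (hh : h = 1/m) (ρ D : ZMod N → ℝ) (C K : ℝ)
    (hK : 0 ≤ K)
    (h1 : ∀ j, ρ (j+1) - ρ j = h * D j) (h2 : ∀ j, |D (j+1) - D j| ≤ h * K) (h3 : ∀ j, |ρ j| ≤ C) (j : ZMod N) :
    |D j| ≤ K + 2 * C := by
  have hm0 : (0:ℝ) < m := by exact_mod_cast hm
  have hh0 : 0 < h := by rw [hh]; positivity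
  have hmh : m * h = 1 := by rw [hh]; field_simp
  have a1 : ∀ i : ℕ, |D (j + i) - D j| ≤ i * (h * K) := by
    intro i
    induction i with
    | zero => simp
    | succ i ih =>
      have := abs_add_le (D (j + i + 1) - D (j+i)) (D (j+i) - D j)
      have h2' := h2 (j+i)
      push_cast
      rw [← add_assoc]
      rw [show D (j + i + 1) - D j = (D (j + i + 1) - D (j+i)) + (D (j+i) - D j) by ring]
      linarith
  have a2 : ∀ i : ℕ, i ≤ m → |ρ (j + i) - ρ j - i * h * D j| ≤ i * h * K := by
    intro i
    induction i with
    | zero => simp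
    | succ i ih =>
      intro hi
      have ih := ih (by omega)
      have e : ρ (j + (i+1:ℕ)) - ρ j - (i+1:ℕ) * h * D j =
        (ρ (j + i) - ρ j - i * h * D j) + h * (D (j+i) - D j) := by
        have := h1 (j+i)
        push_cast
        rw [← add_assoc]
        linear_combination this
      rw [e]
      refine (abs_add_le _ _).trans ?_
      rw [abs_mul, abs_of_pos hh0]
      have i1 : (i:ℝ) * (h * K) ≤ K := by
        have : (i:ℝ) ≤ m := by exact_mod_cast (by omega : i ≤ m)
        calc (i:ℝ) * (h * K) ≤ m * (h*K) := by gcongr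
          _ = K := by rw [← mul_assoc, hmh, one_mul]
      have i2 := (a1 i).trans i1
      have : h * |D (j+i) - D j| ≤ h * K := by gcongr
      push_cast
      linarith
  have a3 := a2 m le_rfl
  rw [hmh, one_mul, one_mul] at a3
  have b1 := abs_le.1 a3
  have b2 := abs_le.1 (h3 (j+m))
  have b3 := abs_le.1 (h3 j)
  rw [abs_le]
  constructor <;> linarith [b1.1, b1.2, b2.1, b2.2, b3.1, b3.2]

lemma lat_exists (W : ℝ → ℝ) (hW : Integrable W) (Q0 : ℝ) (hQ0 : 0 ≤ Q0) (c r : ℝ) :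
    ∃ C : ℝ, 1 ≤ C ∧ ∀ (n : ℕ) (ρ : ZMod ((n+3)^2) → ℝ), ρ ∈ pos (ZMod ((n+3)^2)) →
      Qf (1/((n+3:ℕ):ℝ)) ρ ≤ Q0 → Ef W (1/((n+3:ℕ):ℝ)) ρ ≤ Q0 →
      (∃ j, r < |ρ j - 1|) →
      (∀ j, gEf W (1/((n+3:ℕ):ℝ)) ρ j - c^2/8 * gQf (1/((n+3:ℕ):ℝ)) ρ j = 0) →
      ∃ R D, Lat W c r C (1/((n+3:ℕ):ℝ)) ((n+3)^2) R D := by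
  obtain ⟨C, hC, hu⟩ := unif W hW Q0 hQ0
  set w := ∫ t, |W t|
  have hw : 0 ≤ w := integral_nonneg fun _ => abs_nonneg _
  set K := C * (w * (1 + C^2)) + c^2/4 * (C + C^3)
  have hK : 0 ≤ K := by positivity
  refine ⟨K + 2 * C, by linarith, ?_⟩
  intro n ρ hρ hQ hE ⟨j0, hj0⟩ hcr
  set h : ℝ := 1/((n+3:ℕ):ℝ) with hh
  have hh0 : 0 < h := by positivity
  have hHN : 1 ≤ (((n+3)^2 : ℕ):ℝ) * h := by
    rw [hh, mul_one_div, le_div_iff₀ (by positivity)]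
    push_cast
    have : (0:ℝ) ≤ n := by positivity
    nlinarith
  obtain ⟨u1, u2, u3⟩ := hu _ h hh0 hHN ρ hρ hQ hE
  set D : ZMod ((n+3)^2) → ℝ := fun j => (ρ (j+1) - ρ j)/h
  have hD1 : ∀ j, ρ (j+1) - ρ j = h * D j := fun j => by simp only [D]; field_simp
  have hD2 : ∀ j, D (j+1) - D j = -h * (ρ (j+1) * Sop W h (et ρ) (j+1) + c^2/4 * (ρ (j+1) - (ρ (j+1))⁻¹^3)) := by
    intro j
    have e := hcr (j+1)
    simp only [gEf, gQf] at e
    have hj := (hρ (j+1)).ne'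
    rw [add_sub_cancel_right] at e
    have e2 : D (j+1) - D j = (ρ (j+1+1) - 2 * ρ (j+1) + ρ j)/h := by simp only [D]; ring
    rw [e2]
    have e3 : (ρ (j+1) - (ρ (j+1))⁻¹) * (1 + (ρ (j+1))⁻¹^2) = ρ (j+1) - (ρ (j+1))⁻¹^3 := by
      field_simp; ring
    rw [← e3]
    rw [div_eq_iff hh0.ne']
    have e4 : (-(ρ (j + 1 + 1) - 2 * ρ (j + 1) + ρ j) / h ^ 2 * h) * h = -(ρ (j + 1 + 1) - 2 * ρ (j + 1) + ρ j) := by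
      field_simp
    linear_combination (-h) * e + e4
  have hetb : ∀ j, |et ρ j| ≤ 1 + C^2 := by
    intro j
    have := pow_le_pow_left₀ (hρ j).le (u3 j).2 2
    unfold et
    rw [abs_le]; constructor <;> nlinarith [sq_nonneg (ρ j)]
  have hC0 : 0 < C := by linarith
  have hD3 : ∀ j, |D (j+1) - D j| ≤ h * K := by
    intro j
    rw [hD2, abs_mul, abs_neg, abs_of_pos hh0]
    gcongr
    refine (abs_add_le _ _).trans ?_
    rw [abs_mul, abs_mul, abs_of_pos (hρ (j+1)), abs_of_nonneg (by positivity : 0 ≤ c^2/4)]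
    have i1 := Sop_bd W hW h hetb (j+1)
    have i2 : (ρ (j+1))⁻¹ ≤ C := by
      rw [inv_le_comm₀ (hρ _) hC0]; exact (u3 _).1
    have i3 : (ρ (j+1))⁻¹^3 ≤ C^3 := pow_le_pow_left₀ (inv_pos.2 (hρ _)).le i2 3
    have i4 : 0 < (ρ (j+1))⁻¹^3 := by have := hρ (j+1); positivity
    have i5 : |ρ (j+1) - (ρ (j+1))⁻¹^3| ≤ C + C^3 := by
      have := hρ (j+1)
      have := (u3 (j+1)).2
      rw [abs_le]; constructor <;> linarith
    have i6 := (u3 (j+1)).2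
    simp only [K]
    gcongr
  have hρC : ∀ j, |ρ j| ≤ C := fun j => by rw [abs_of_pos (hρ j)]; exact (u3 j).2
  have hDb := D_bound (n+3) (by omega) h hh ρ D C K hK hD1 hD3 hρC
  have hz1 : ∀ j : ℤ, (((j + 1 : ℤ) : ZMod ((n+3)^2)) + j0) = ((j : ZMod ((n+3)^2)) + j0) + 1 := by
    intro j; push_cast; ring
  refine ⟨fun j => ρ ((j : ZMod ((n+3)^2)) + j0), fun j => D ((j : ZMod ((n+3)^2)) + j0), ?_, ?_, ?_, ?_, ?_, ?_, ?_⟩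
  · intro j; simp only [hz1]; exact hD1 _
  · intro j
    have e5 : ∀ m : ℤ, (((j + 1 - m : ℤ) : ZMod ((n+3)^2)) + j0) = ((j : ZMod ((n+3)^2)) + j0 + 1) - m := by
      intro m; push_cast; ring
    have e6 : ∀ m : ℤ, (((j + 1 + m : ℤ) : ZMod ((n+3)^2)) + j0) = ((j : ZMod ((n+3)^2)) + j0 + 1) + m := by
      intro m; push_cast; ring
    simp only [e5, e6, hz1]
    rw [hD2]
    rfl
  · intro j
    have := u3 ((j : ZMod ((n+3)^2)) + j0)
    constructor
    · refine le_trans (inv_anti₀ hC0 (by linarith)) this.1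
    · linarith [this.2]
  · intro j; exact hDb _
  · simpa using hj0.le
  · intro k
    rw [sum_range_int (fun j => D j ^2) k j0]
    have : h * ∑ j, D j^2 ≤ C := u1
    linarith
  · intro k
    rw [sum_range_int (fun j => (1 - ρ j ^2)^2) k j0]
    have : h * ∑ j, (1 - ρ j^2)^2 ≤ C := u2
    linarith

end DS


namespace DS
open scoped Topology
set_option linter.unusedSectionVars false
set_option linter.unusedVariables false

/-- continuous convergence of lattice functions -/
def Cv (h : ℕ → ℝ) (X : ℕ → ℤ → ℝ) (x : ℝ → ℝ) : Prop :=
  ∀ y : ℝ, ∀ j : ℕ → ℤ, Tendsto (fun n => (j n : ℝ) * h n) atTop (𝓝 y) →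
    Tendsto (fun n => X n (j n)) atTop (𝓝 (x y))

lemma lip_int {h K : ℝ} (hh : 0 < h) {X : ℤ → ℝ} (hX : ∀ j, |X (j+1) - X j| ≤ h * K) (i j : ℤ) :
    |X i - X j| ≤ K * |(i:ℝ) * h - j * h| := by
  have a : ∀ (j : ℤ) (k : ℕ), |X (j + k) - X j| ≤ k * (h * K) := by
    intro j k
    induction k with
    | zero => simp
    | succ k ih =>
      have h1 := abs_add_le (X (j + k + 1) - X (j+k)) (X (j+k) - X j)
      have h2 := hX (j+k)
      push_cast
      rw [← add_assoc, show X (j + k + 1) - X j = (X (j + k + 1) - X (j+k)) + (X (j+k) - X j) by ring]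
      linarith
  have b : ∀ i j : ℤ, j ≤ i → |X i - X j| ≤ K * |(i:ℝ) * h - j * h| := by
    intro i j hij
    obtain ⟨k, rfl⟩ := Int.le.dest hij
    refine (a j k).trans (le_of_eq ?_)
    push_cast
    rw [show ((j:ℝ) + k) * h - j * h = k * h by ring, abs_of_nonneg (by positivity)]
    ring
  rcases le_total j i with hij | hij
  · exact b i j hij
  · rw [abs_sub_comm, abs_sub_comm ((i:ℝ) * h)]
    exact b j i hij

lemma floor_tendsto {h : ℕ → ℝ} (hh : ∀ n, 0 < h n) (h0 : Tendsto h atTop (𝓝 0)) (x : ℝ) :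
    Tendsto (fun n => ((⌊x / h n⌋ : ℤ) : ℝ) * h n) atTop (𝓝 x) := by
  have h1 : Tendsto (fun n => x - h n) atTop (𝓝 x) := by simpa using tendsto_const_nhds.sub h0
  refine tendsto_of_tendsto_of_tendsto_of_le_of_le h1 tendsto_const_nhds (fun n => ?_) (fun n => ?_)
  · have := Int.lt_floor_add_one (x / h n)
    rw [div_lt_iff₀ (hh n)] at this
    simp only; linarith
  · have := Int.floor_le (x / h n)
    rw [le_div_iff₀ (hh n)] at this
    exact this

lemma extract {h : ℕ → ℝ} (hh : ∀ n, 0 < h n) (h0 : Tendsto h atTop (𝓝 0)) (K C : ℝ) (R : ℕ → ℤ → ℝ) (d : ℕ → ℝ)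
    (hR : ∀ n j, |R n j| ≤ C) (hd : ∀ n, |d n| ≤ C) (hK : ∀ n j, |R n (j+1) - R n j| ≤ h n * K) :
    ∃ φ : ℕ → ℕ, StrictMono φ ∧ ∃ (ρ : ℝ → ℝ) (d0 : ℝ), Tendsto (fun n => d (φ n)) atTop (𝓝 d0) ∧
      Cv (fun n => h (φ n)) (fun n => R (φ n)) ρ := by
  have hK0 : 0 ≤ K := by
    have := (abs_nonneg _).trans (hK 0 0)
    exact nonneg_of_mul_nonneg_right this (hh 0)
  have hcomp : IsCompact (Set.univ.pi (fun _ : Option ℚ => Set.Icc (-C) C)) :=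
    isCompact_univ_pi fun _ => isCompact_Icc
  let v : ℕ → Option ℚ → ℝ := fun n o => o.elim (d n) (fun q => R n ⌊(q:ℝ) / h n⌋)
  have hv : ∀ n, v n ∈ Set.univ.pi (fun _ : Option ℚ => Set.Icc (-C) C) := by
    intro n o _
    cases o with
    | none => exact abs_le.1 (hd n)
    | some q => exact abs_le.1 (hR n _)
  obtain ⟨l, -, φ, hφ, hl⟩ := hcomp.tendsto_subseq hv
  have hl' := tendsto_pi_nhds.1 hl
  have hH : ∀ n, 0 < h (φ n) := fun n => hh _
  have hH0 : Tendsto (fun n => h (φ n)) atTop (𝓝 0) := h0.comp hφ.tendsto_atTop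
  have hcau : ∀ x, CauchySeq (fun n => R (φ n) ⌊x / h (φ n)⌋) := by
    intro x
    rw [Metric.cauchySeq_iff]
    intro ε hε
    set δ := ε / (4 * (K + 1))
    have hδ : 0 < δ := by positivity
    obtain ⟨q, hq1, hq2⟩ := exists_rat_btwn (show x < x + δ by linarith)
    have c1 : CauchySeq (fun n => R (φ n) ⌊(q:ℝ) / h (φ n)⌋) := (hl' (some q)).cauchySeq
    rw [Metric.cauchySeq_iff] at c1
    obtain ⟨N1, hN1⟩ := c1 (ε/2) (by positivity)
    have t1 := (floor_tendsto hH hH0 x).sub (floor_tendsto hH hH0 q)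
    have t2 := t1.abs.eventually_lt_const (show |x - q| < δ by rw [abs_sub_comm, abs_of_pos] <;> linarith)
    obtain ⟨N2, hN2⟩ := eventually_atTop.1 t2
    have key : ∀ n ≥ N2, |R (φ n) ⌊x / h (φ n)⌋ - R (φ n) ⌊(q:ℝ) / h (φ n)⌋| < ε/4 := by
      intro n hn
      refine (lip_int (hH n) (hK (φ n)) _ _).trans_lt ?_
      have := hN2 n hn
      calc _ ≤ K * δ := by gcongr
        _ < (K+1) * δ := by nlinarith
        _ = ε/4 := by simp only [δ]; field_simp
    refine ⟨max N1 N2, fun m hm n hn => ?_⟩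
    have a1 := key m (le_trans (le_max_right _ _) hm)
    have a2 := key n (le_trans (le_max_right _ _) hn)
    have a3 := hN1 m (le_trans (le_max_left _ _) hm) n (le_trans (le_max_left _ _) hn)
    rw [Real.dist_eq] at *
    rw [abs_lt] at *
    constructor <;> linarith [a1.1, a1.2, a2.1, a2.2, a3.1, a3.2]
  choose ρ hρ using fun x => cauchySeq_tendsto_of_complete (hcau x)
  refine ⟨φ, hφ, ρ, l none, hl' none, ?_⟩
  intro x j hj
  have t1 := ((hj.sub (floor_tendsto hH hH0 x)).abs).const_mul K
  simp only [sub_self, abs_zero, mul_zero] at t1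
  have t2 : Tendsto (fun n => R (φ n) (j n) - R (φ n) ⌊x / h (φ n)⌋) atTop (𝓝 0) :=
    squeeze_zero_norm (fun n => lip_int (hH n) (hK (φ n)) _ _) t1
  have := t2.add (hρ x)
  simpa using this

lemma floor_intble (h : ℝ) (Y : ℤ → ℝ) (K : ℝ) (hY : ∀ j, |Y j| ≤ K) (a b : ℝ) :
    IntervalIntegrable (fun s => Y ⌊s/h⌋) volume a b := by
  refine (intervalIntegrable_const (c := K)).mono_fun (meas_floor h Y).aestronglyMeasurable ?_
  refine Eventually.of_forall fun s => ?_
  simp only [Real.norm_eq_abs]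
  exact (hY _).trans (le_abs_self K)

lemma step_int {h : ℝ} (hh : 0 < h) (Y : ℤ → ℝ) (j : ℤ) :
    ∫ s in ((j:ℝ) * h)..(((j+1 : ℤ) : ℝ) * h), Y ⌊s/h⌋ = h * Y j := by
  have hle : (j:ℝ) * h ≤ ((j+1 : ℤ) : ℝ) * h := by push_cast; nlinarith
  rw [intervalIntegral.integral_of_le hle, integral_Ioc_eq_integral_Ioo,
    setIntegral_congr_fun (g := fun _ => Y j) measurableSet_Ioo]
  · simp only [integral_const, MeasurableSet.univ, measureReal_restrict_apply, Set.univ_inter, smul_eq_mul]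
    rw [Real.volume_real_Ioo_of_le hle]
    push_cast; ring
  · intro s hs
    have : ⌊s/h⌋ = j := by
      rw [Int.floor_eq_iff, le_div_iff₀ hh, div_lt_iff₀ hh]
      have := hs.2
      push_cast at this
      exact ⟨hs.1.le, this⟩
    simp only [this]

lemma sum_int {h : ℝ} (hh : 0 < h) (X Y : ℤ → ℝ) (K : ℝ) (hY : ∀ j, |Y j| ≤ K)
    (hX : ∀ j, X (j+1) - X j = h * Y j) (j : ℤ) :
    X j - X 0 = ∫ s in (0:ℝ)..((j:ℝ) * h), Y ⌊s/h⌋ := by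
  have ii := floor_intble h Y K hY
  induction j using Int.induction_on with
  | zero => simp
  | succ i ih =>
    have h1 := intervalIntegral.integral_add_adjacent_intervals (ii 0 ((i:ℤ) * h)) (ii ((i:ℤ) * h) (((i+1 : ℤ) : ℝ) * h))
    rw [step_int hh, ← ih] at h1
    rw [← h1, ← hX]; ring
  | pred i ih =>
    have h1 := intervalIntegral.integral_add_adjacent_intervals (ii 0 (((-i-1:ℤ):ℝ) * h)) (ii (((-i-1:ℤ):ℝ) * h) (((-i-1+1 : ℤ) : ℝ) * h))
    rw [step_int hh, ← hX] at h1
    rw [show (-(i:ℤ)-1+1) = -i by ring, ← ih] at h1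
    linarith

lemma int_lim {h : ℕ → ℝ} (hh : ∀ n, 0 < h n) (h0 : Tendsto h atTop (𝓝 0)) (X Y : ℕ → ℤ → ℝ) (K : ℝ)
    (hY : ∀ n j, |Y n j| ≤ K) (hX : ∀ n j, X n (j+1) - X n j = h n * Y n j) (x0 : ℝ)
    (hx0 : Tendsto (fun n => X n 0) atTop (𝓝 x0)) (y : ℝ → ℝ) (hy : Cv h Y y) :
    Cv h X (fun x => x0 + ∫ s in (0:ℝ)..x, y s) := by
  intro x j hj
  have e : ∀ n, X n (j n) = X n 0 + ((∫ s in (0:ℝ)..x, Y n ⌊s/h n⌋) + ∫ s in x..((j n:ℝ) * h n), Y n ⌊s/h n⌋) := by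
    intro n
    have ii := floor_intble (h n) (Y n) K (hY n)
    rw [intervalIntegral.integral_add_adjacent_intervals (ii _ _) (ii _ _), ← sum_int (hh n) (X n) (Y n) K (hY n) (hX n)]
    ring
  simp only [e]
  refine hx0.add ?_
  have t1 : Tendsto (fun n => ∫ s in (0:ℝ)..x, Y n ⌊s/h n⌋) atTop (𝓝 (∫ s in (0:ℝ)..x, y s)) := by
    refine intervalIntegral.tendsto_integral_filter_of_dominated_convergence (fun _ => K) ?_ ?_ ?_ ?_
    · exact Eventually.of_forall fun n => (meas_floor (h n) (Y n)).aestronglyMeasurable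
    · exact Eventually.of_forall fun n => Eventually.of_forall fun s _ => by simpa using hY n _
    · exact intervalIntegrable_const
    · exact Eventually.of_forall fun s _ => hy s _ (floor_tendsto hh h0 s)
  have t2 : Tendsto (fun n => ∫ s in x..((j n:ℝ) * h n), Y n ⌊s/h n⌋) atTop (𝓝 0) := by
    have t3 : Tendsto (fun n => K * |(j n:ℝ) * h n - x|) atTop (𝓝 0) := by
      have := ((hj.sub_const x).abs).const_mul K
      simpa using this
    refine squeeze_zero_norm (fun n => ?_) t3
    exact intervalIntegral.norm_integral_le_of_norm_le_const fun s _ => by simpa using hY n _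
  simpa using t1.add t2

lemma fatou_l2 {h : ℕ → ℝ} (hh : ∀ n, 0 < h n) (h0 : Tendsto h atTop (𝓝 0)) (P : ℕ → ℕ)
    (hP : Tendsto (fun n => h n * P n) atTop atTop) (Z : ℕ → ℤ → ℝ) (C : ℝ)
    (hC : ∀ n, ∀ k : ℤ, h n * ∑ i ∈ Finset.range (P n), Z n (k + i)^2 ≤ C) (z : ℝ → ℝ) (hz : Cv h Z z)
    (hzc : Continuous z) : MemLp z 2 volume := by
  rw [memLp_two_iff_integrable_sq hzc.aestronglyMeasurable]
  refine ⟨(hzc.pow 2).aestronglyMeasurable, ?_⟩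
  have hnn : ∀ s, ‖z s ^ 2‖ₑ = ENNReal.ofReal (z s^2) := fun s => by
    rw [← ofReal_norm, Real.norm_of_nonneg (sq_nonneg _)]
  let k : ℕ → ℤ := fun n => -((P n / 2 : ℕ) : ℤ)
  let g : ℕ → ℝ → ENNReal := fun n s => ∑ i ∈ Finset.range (P n),
    (Set.Ico (((k n + i : ℤ):ℝ) * h n) (((k n + i : ℤ):ℝ) * h n + h n)).indicator (fun _ => ENNReal.ofReal (Z n (k n + i)^2)) s
  have hgm : ∀ n, Measurable (g n) := fun n =>
    Finset.measurable_fun_sum _ fun i _ => measurable_const.indicator measurableSet_Ico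
  have hgi : ∀ n, ∫⁻ s, g n s ≤ ENNReal.ofReal C := by
    intro n
    simp only [g]
    rw [lintegral_finsetSum _ fun i _ => measurable_const.indicator measurableSet_Ico]
    refine le_trans (le_of_eq ?_) (ENNReal.ofReal_le_ofReal (hC n (k n)))
    rw [Finset.mul_sum, ENNReal.ofReal_sum_of_nonneg (fun i _ => mul_nonneg (hh n).le (sq_nonneg _))]
    refine Finset.sum_congr rfl fun i _ => ?_
    rw [lintegral_indicator measurableSet_Ico, setLIntegral_const, Real.volume_Ico, add_sub_cancel_left,
      ENNReal.ofReal_mul (hh n).le, mul_comm]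
  have hlim : ∀ s, ENNReal.ofReal (z s^2) ≤ liminf (fun n => g n s) atTop := by
    intro s
    have t1 : Tendsto (fun n => ENNReal.ofReal (Z n ⌊s/h n⌋^2)) atTop (𝓝 (ENNReal.ofReal (z s^2))) :=
      ENNReal.tendsto_ofReal ((hz s _ (floor_tendsto hh h0 s)).pow 2)
    rw [← t1.liminf_eq]
    refine liminf_le_liminf ?_
    filter_upwards [hP.eventually_ge_atTop (2 * |s| + 4), h0.eventually_lt_const (show (0:ℝ) < 1 by norm_num)] with n hn hn1
    have hhn := hh n
    have p1 : ((P n / 2 : ℕ):ℝ) ≤ (P n : ℝ)/2 := Nat.cast_div_le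
    have p2 : (P n : ℝ)/2 - 1/2 ≤ ((P n / 2 : ℕ):ℝ) := by
      have : P n ≤ 2 * (P n / 2) + 1 := by omega
      have : (P n : ℝ) ≤ 2 * ((P n / 2 : ℕ):ℝ) + 1 := by exact_mod_cast this
      linarith
    have hkn : (k n : ℝ) = -((P n / 2 : ℕ):ℝ) := by
      simp only [k]; rw [Int.cast_neg, Int.cast_natCast]
    have q1 : (k n : ℤ) ≤ ⌊s/h n⌋ := by
      rw [Int.le_floor, le_div_iff₀ hhn]
      rw [hkn]
      have := neg_abs_le s
      have := mul_le_mul_of_nonneg_left p2 hhn.le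
      linarith
    have q2 : ⌊s/h n⌋ < k n + P n := by
      rw [Int.floor_lt, div_lt_iff₀ hhn]
      rw [Int.cast_add, hkn, Int.cast_natCast]
      have := le_abs_self s
      have := mul_le_mul_of_nonneg_left p1 hhn.le
      linarith
    obtain ⟨i, hi⟩ := Int.le.dest q1
    have hi' : i < P n := by
      have : (i:ℤ) < P n := by linarith
      exact_mod_cast this
    have hterm : ENNReal.ofReal (Z n ⌊s/h n⌋^2) = (Set.Ico (((k n + i : ℤ):ℝ) * h n) (((k n + i : ℤ):ℝ) * h n + h n)).indicator (fun _ => ENNReal.ofReal (Z n (k n + i)^2)) s := by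
      rw [Set.indicator_of_mem, hi]
      rw [hi]
      have a1 := Int.floor_le (s / h n)
      have a2 := Int.lt_floor_add_one (s / h n)
      rw [le_div_iff₀ hhn] at a1
      rw [div_lt_iff₀ hhn] at a2
      exact ⟨a1, by linarith⟩
    rw [hterm]
    exact Finset.single_le_sum (f := fun i : ℕ => (Set.Ico (((k n + i : ℤ):ℝ) * h n) (((k n + i : ℤ):ℝ) * h n + h n)).indicator (fun _ => ENNReal.ofReal (Z n (k n + i)^2)) s)
      (fun _ _ => zero_le) (Finset.mem_range.2 hi')
  unfold HasFiniteIntegral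
  simp only [hnn]
  calc ∫⁻ s, ENNReal.ofReal (z s^2) ≤ ∫⁻ s, liminf (fun n => g n s) atTop := lintegral_mono hlim
    _ ≤ liminf (fun n => ∫⁻ s, g n s) atTop := lintegral_liminf_le hgm
    _ ≤ ENNReal.ofReal C := by
      refine liminf_le_of_le (by isBoundedDefault) ?_
      intro b hb
      obtain ⟨n, hn⟩ := hb.exists
      exact hn.trans (hgi n)
    _ < ⊤ := ENNReal.ofReal_lt_top

end DS


namespace DS
open scoped Topology
set_option linter.unusedSectionVars false
set_option linter.unusedVariables false

lemma Cv.continuous_of_lip {h : ℕ → ℝ} (hh : ∀ n, 0 < h n) (h0 : Tendsto h atTop (𝓝 0)) {X : ℕ → ℤ → ℝ} {x : ℝ → ℝ}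
    (hX : Cv h X x) (K : ℝ) (hK : ∀ n j, |X n (j+1) - X n j| ≤ h n * K) : Continuous x := by
  have hK0 : 0 ≤ K := by
    have := (abs_nonneg _).trans (hK 0 0)
    exact nonneg_of_mul_nonneg_right this (hh 0)
  have : LipschitzWith ⟨K, hK0⟩ x := by
    refine LipschitzWith.of_dist_le_mul fun a b => ?_
    rw [Real.dist_eq, Real.dist_eq]
    have t1 := ((hX a _ (floor_tendsto hh h0 a)).sub (hX b _ (floor_tendsto hh h0 b))).abs
    have t2 := (((floor_tendsto hh h0 a).sub (floor_tendsto hh h0 b)).abs).const_mul K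
    exact le_of_tendsto_of_tendsto' t1 t2 fun n => lip_int (hh n) (hK n) _ _
  exact this.continuous

lemma conv_cont (W : ℝ → ℝ) (hW : Integrable W) (η : ℝ → ℝ) (hη : Continuous η) (B : ℝ) (hB : ∀ x, |η x| ≤ B) :
    Continuous fun x => ∫ t, W t * η (x - t) := by
  refine continuous_of_dominated (bound := fun t => |W t| * B) ?_ ?_ ?_ ?_
  · intro x
    exact hW.aestronglyMeasurable.mul (by fun_prop : Continuous fun t => η (x - t)).aestronglyMeasurable
  · intro x
    refine Eventually.of_forall fun t => ?_
    rw [norm_mul]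
    exact mul_le_mul_of_nonneg_left (hB _) (norm_nonneg _)
  · exact hW.abs.mul_const B
  · exact Eventually.of_forall fun t => by fun_prop

lemma conv_even (W : ℝ → ℝ) (hW : Integrable W) (hWe : ∀ x, W (-x) = W x) (η : ℝ → ℝ) (hη : Continuous η) (B : ℝ) (hB : ∀ x, |η x| ≤ B) (x : ℝ) :
    ∫ t, W t * ((η (x - t) + η (x + t))/2) = ∫ t, W t * η (x - t) := by
  have i1 : Integrable fun t => W t * η (x - t) :=
    hW.mul_bdd (c := B) (by fun_prop : Continuous fun t => η (x - t)).aestronglyMeasurable (Eventually.of_forall fun t => hB _)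
  have i2 : Integrable fun t => W t * η (x + t) :=
    hW.mul_bdd (c := B) (by fun_prop : Continuous fun t => η (x + t)).aestronglyMeasurable (Eventually.of_forall fun t => hB _)
  have e : ∫ t, W t * η (x + t) = ∫ t, W t * η (x - t) := by
    rw [← integral_neg_eq_self]
    congr 1; funext t
    rw [hWe, ← sub_eq_add_neg]
  have : ∀ t, W t * ((η (x - t) + η (x + t))/2) = (1/2) * (W t * η (x - t)) + (1/2) * (W t * η (x+t)) := fun t => by ring
  simp only [this]
  rw [integral_add (i1.const_mul _) (i2.const_mul _), integral_const_mul, integral_const_mul, e]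
  ring

theorem limit (W : ℝ → ℝ) (hW : Integrable W) (hWe : ∀ x, W (-x) = W x) (c r C : ℝ) (hC : 1 ≤ C)
    (h : ℕ → ℝ) (P : ℕ → ℕ) (R D : ℕ → ℤ → ℝ) (hh : ∀ n, 0 < h n) (h0 : Tendsto h atTop (𝓝 0))
    (hP : Tendsto (fun n => h n * P n) atTop atTop) (hL : ∀ n, Lat W c r C (h n) (P n) (R n) (D n)) :
    ∃ ρ G : ℝ → ℝ, (∀ x, HasDerivAt ρ (G x) x) ∧
      (∀ x, HasDerivAt G (-(ρ x * (∫ t, W t * (1 - ρ (x - t)^2)) + c^2/4 * (ρ x - (ρ x)⁻¹^3))) x) ∧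
      (∀ x, C⁻¹ ≤ ρ x ∧ ρ x ≤ C) ∧ (∀ x, |G x| ≤ C) ∧ r ≤ |ρ 0 - 1| ∧ MemLp G 2 volume ∧
      MemLp (fun x => 1 - ρ x^2) 2 volume := by
  have hC0 : 0 < C := by linarith
  have hRp : ∀ n j, 0 < R n j := fun n j => (inv_pos.2 hC0).trans_le ((hL n).h3 j).1
  have hRb : ∀ n j, |R n j| ≤ C := fun n j => by rw [abs_of_pos (hRp n j)]; exact ((hL n).h3 j).2
  have hRl : ∀ n j, |R n (j+1) - R n j| ≤ h n * C := fun n j => by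
    rw [(hL n).h1, abs_mul, abs_of_pos (hh n)]
    exact mul_le_mul_of_nonneg_left ((hL n).h4 j) (hh n).le
  obtain ⟨φ, hφ, ρ, d0, hd0, hρ⟩ := extract hh h0 C C R (fun n => D n 0) hRb (fun n => (hL n).h4 0) hRl
  set h' := fun n => h (φ n)
  have hh' : ∀ n, 0 < h' n := fun n => hh _
  have h0' : Tendsto h' atTop (𝓝 0) := h0.comp hφ.tendsto_atTop
  have hP' : Tendsto (fun n => h' n * P (φ n)) atTop atTop := hP.comp hφ.tendsto_atTop
  have hfl := floor_tendsto hh' h0'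
  have hρc : Continuous ρ := hρ.continuous_of_lip hh' h0' C fun n j => hRl _ j
  have hρb : ∀ x, C⁻¹ ≤ ρ x ∧ ρ x ≤ C := fun x =>
    ⟨ge_of_tendsto' (hρ x _ (hfl x)) fun n => ((hL _).h3 _).1, le_of_tendsto' (hρ x _ (hfl x)) fun n => ((hL _).h3 _).2⟩
  have hρp : ∀ x, 0 < ρ x := fun x => (inv_pos.2 hC0).trans_le (hρb x).1
  have hb : ∀ y, 0 < y → y ≤ C → |1 - y^2| ≤ 1 + C^2 := by
    intro y h1 h2
    have := pow_le_pow_left₀ h1.le h2 2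
    rw [abs_le]; constructor <;> nlinarith [sq_nonneg y]
  have hηb : ∀ x, |1 - ρ x^2| ≤ 1 + C^2 := fun x => hb _ (hρp x) (hρb x).2
  have hRηb : ∀ n j, |1 - R n j^2| ≤ 1 + C^2 := fun n j => hb _ (hRp n j) ((hL n).h3 j).2
  set S : ℝ → ℝ := fun x => ∫ t, W t * (1 - ρ (x - t)^2) with hS
  have hSc : Continuous S := conv_cont W hW (fun x => 1 - ρ x^2) (by fun_prop) (1 + C^2) hηb
  let Sn : ℕ → ℤ → ℝ := fun n j => ∫ t, W t * (((1 - R n (j-⌊t/h n⌋)^2) + (1 - R n (j+⌊t/h n⌋)^2))/2)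
  have hSn : Cv h' (fun n => Sn (φ n)) S := by
    intro x j hj
    rw [hS]
    simp only
    rw [← conv_even W hW hWe (fun x => 1 - ρ x^2) (by fun_prop) (1 + C^2) hηb]
    refine tendsto_integral_of_dominated_convergence (fun t => |W t| * (1 + C^2)) ?_ ?_ ?_ ?_
    · intro n
      refine hW.aestronglyMeasurable.mul ?_
      exact (meas_floor (h' n) (fun m => ((1 - R (φ n) (j n-m)^2) + (1 - R (φ n) (j n+m)^2))/2)).aestronglyMeasurable
    · exact hW.abs.mul_const _
    · intro n
      refine Eventually.of_forall fun t => ?_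
      rw [norm_mul]
      refine mul_le_mul_of_nonneg_left ?_ (norm_nonneg _)
      have a1 := abs_le.1 (hRηb (φ n) (j n - ⌊t/h' n⌋))
      have a2 := abs_le.1 (hRηb (φ n) (j n + ⌊t/h' n⌋))
      rw [Real.norm_eq_abs, abs_le]
      constructor <;> linarith [a1.1, a1.2, a2.1, a2.2]
    · refine Eventually.of_forall fun t => ?_
      have b1 := hρ (x - t) (fun n => j n - ⌊t/h' n⌋) (by
        have := hj.sub (hfl t)
        refine this.congr fun n => ?_
        push_cast; ring)
      have b2 := hρ (x + t) (fun n => j n + ⌊t/h' n⌋) (by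
        have := hj.add (hfl t)
        refine this.congr fun n => ?_
        push_cast; ring)
      exact ((((b1.pow 2).const_sub 1).add ((b2.pow 2).const_sub 1)).div_const 2).const_mul (W t)
  set f : ℝ → ℝ := fun x => -(ρ x * S x + c^2/4 * (ρ x - (ρ x)⁻¹^3)) with hf
  have hfc : Continuous f := by
    have : Continuous fun x => (ρ x)⁻¹ := hρc.inv₀ fun x => (hρp x).ne'
    simp only [hf]; fun_prop
  let Fn : ℕ → ℤ → ℝ := fun n j => -(R n j * Sn n j + c^2/4 * (R n j - (R n j)⁻¹^3))
  have hFn : Cv h' (fun n => Fn (φ n)) f := by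
    intro x j hj
    have a1 := hρ x j hj
    have a2 := hSn x j hj
    exact ((a1.mul a2).add ((a1.sub ((a1.inv₀ (hρp x).ne').pow 3)).const_mul (c^2/4))).neg
  have hFs : Cv h' (fun n j => Fn (φ n) (j+1)) f := by
    intro x j hj
    refine hFn x (fun n => j n + 1) ?_
    have := hj.add h0'
    rw [add_zero] at this
    refine this.congr fun n => ?_
    push_cast; ring
  set w := ∫ t, |W t|
  have hw : 0 ≤ w := integral_nonneg fun _ => abs_nonneg _
  have hFb : ∀ n j, |Fn n j| ≤ C * (w * (1 + C^2)) + c^2/4 * (C + C^3) := by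
    intro n j
    simp only [Fn]
    rw [abs_neg]
    refine (abs_add_le _ _).trans ?_
    rw [abs_mul, abs_mul, abs_of_nonneg (by positivity : 0 ≤ c^2/4)]
    have i1 : |Sn n j| ≤ w * (1 + C^2) := by
      refine abs_int_floor W hW (h n) (fun m => ((1 - R n (j-m)^2) + (1 - R n (j+m)^2))/2) (1 + C^2) fun m => ?_
      have a1 := abs_le.1 (hRηb n (j - m))
      have a2 := abs_le.1 (hRηb n (j + m))
      rw [abs_le]
      constructor <;> linarith [a1.1, a1.2, a2.1, a2.2]
    have i2 : (R n j)⁻¹ ≤ C := by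
      rw [inv_le_comm₀ (hRp n j) hC0]; exact ((hL n).h3 j).1
    have i3 : (R n j)⁻¹^3 ≤ C^3 := pow_le_pow_left₀ (inv_pos.2 (hRp n j)).le i2 3
    have i4 : 0 < (R n j)⁻¹^3 := by have := hRp n j; positivity
    have i5 : |R n j - (R n j)⁻¹^3| ≤ C + C^3 := by
      have := hRp n j
      have := ((hL n).h3 j).2
      rw [abs_le]; constructor <;> linarith
    have i6 := hRb n j
    gcongr
  set G : ℝ → ℝ := fun x => d0 + ∫ s in (0:ℝ)..x, f s with hG
  have hDc : Cv h' (fun n => D (φ n)) G := by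
    refine int_lim hh' h0' _ (fun n j => Fn (φ n) (j+1)) _ (fun n j => hFb _ _) ?_ d0 hd0 f hFs
    intro n j
    rw [(hL (φ n)).h2]
    simp only [Fn, Sn, h']
    ring
  have hGd : ∀ x, HasDerivAt G (f x) x := fun x =>
    (intervalIntegral.integral_hasDerivAt_right (hfc.intervalIntegrable _ _) (hfc.stronglyMeasurableAtFilter _ _) hfc.continuousAt).const_add d0
  have hGc : Continuous G := continuous_iff_continuousAt.2 fun x => (hGd x).continuousAt
  have hρ2 : Cv h' (fun n => R (φ n)) (fun x => ρ 0 + ∫ s in (0:ℝ)..x, G s) := by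
    refine int_lim hh' h0' _ (fun n => D (φ n)) C (fun n j => (hL _).h4 j) (fun n j => (hL _).h1 j) (ρ 0) ?_ G hDc
    refine hρ 0 (fun _ => 0) ?_
    simp
  have hρe : ρ = fun x => ρ 0 + ∫ s in (0:ℝ)..x, G s := funext fun x =>
    tendsto_nhds_unique (hρ x _ (hfl x)) (hρ2 x _ (hfl x))
  have hρd : ∀ x, HasDerivAt ρ (G x) x := fun x => by
    rw [hρe]
    exact (intervalIntegral.integral_hasDerivAt_right (hGc.intervalIntegrable _ _) (hGc.stronglyMeasurableAtFilter _ _) hGc.continuousAt).const_add _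
  refine ⟨ρ, G, hρd, hGd, hρb, ?_, ?_, ?_, ?_⟩
  · intro x
    exact le_of_tendsto' (hDc x _ (hfl x)).abs fun n => (hL _).h4 _
  · have t := hρ 0 (fun _ => 0) (by simp)
    exact ge_of_tendsto' (t.sub_const 1).abs fun n => (hL _).h5
  · exact fatou_l2 hh' h0' (fun n => P (φ n)) hP' (fun n => D (φ n)) C (fun n k => (hL _).h6 k) G hDc hGc
  · refine fatou_l2 hh' h0' (fun n => P (φ n)) hP' (fun n j => 1 - R (φ n) j^2) C (fun n k => (hL _).h7 k) _ ?_ (by fun_prop)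
    intro x j hj
    exact ((hρ x j hj).pow 2).const_sub 1

end DS


namespace DS
open scoped Topology
set_option linter.unusedSectionVars false
set_option linter.unusedVariables false

/-- bounded functions with `k` bounded continuous derivatives -/
def BC : ℕ → (ℝ → ℝ) → Prop
  | 0, f => (∃ B, ∀ x, |f x| ≤ B) ∧ Continuous f
  | k+1, f => (∃ B, ∀ x, |f x| ≤ B) ∧ ∃ f' : ℝ → ℝ, (∀ x, HasDerivAt f (f' x) x) ∧ BC k f'

lemma BC.bdd {k : ℕ} {f : ℝ → ℝ} (h : BC k f) : ∃ B, ∀ x, |f x| ≤ B := by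
  cases k with
  | zero => exact h.1
  | succ k => exact h.1

lemma BC.cont {k : ℕ} {f : ℝ → ℝ} (h : BC k f) : Continuous f := by
  cases k with
  | zero => exact h.2
  | succ k =>
    obtain ⟨_, f', h1, _⟩ := h
    exact continuous_iff_continuousAt.2 fun x => (h1 x).continuousAt

lemma BC.pred {k : ℕ} : ∀ {f : ℝ → ℝ}, BC (k+1) f → BC k f := by
  induction k with
  | zero => exact fun h => ⟨h.bdd, h.cont⟩
  | succ k ih =>
    intro f h
    obtain ⟨hb, f', h1, h2⟩ := h
    exact ⟨hb, f', h1, ih h2⟩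

lemma BC.const (k : ℕ) (a : ℝ) : BC k (fun _ => a) := by
  induction k generalizing a with
  | zero => exact ⟨⟨|a|, fun _ => le_rfl⟩, continuous_const⟩
  | succ k ih => exact ⟨⟨|a|, fun _ => le_rfl⟩, fun _ => 0, fun x => hasDerivAt_const x a, ih 0⟩

lemma BC.add {k : ℕ} : ∀ {f g : ℝ → ℝ}, BC k f → BC k g → BC k (fun x => f x + g x) := by
  have hb : ∀ {k : ℕ} {f g : ℝ → ℝ}, BC k f → BC k g → ∃ B, ∀ x, |f x + g x| ≤ B := by
    intro k f g hf hg
    obtain ⟨A, hA⟩ := hf.bdd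
    obtain ⟨B, hB⟩ := hg.bdd
    exact ⟨A + B, fun x => (abs_add_le _ _).trans (add_le_add (hA x) (hB x))⟩
  induction k with
  | zero => exact fun hf hg => ⟨hb hf hg, hf.cont.add hg.cont⟩
  | succ k ih =>
    intro f g hf hg
    refine ⟨hb hf hg, ?_⟩
    obtain ⟨_, f', f1, f2⟩ := hf
    obtain ⟨_, g', g1, g2⟩ := hg
    exact ⟨_, fun x => (f1 x).add (g1 x), ih f2 g2⟩

lemma BC.mul {k : ℕ} : ∀ {f g : ℝ → ℝ}, BC k f → BC k g → BC k (fun x => f x * g x) := by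
  have hb : ∀ {k : ℕ} {f g : ℝ → ℝ}, BC k f → BC k g → ∃ B, ∀ x, |f x * g x| ≤ B := by
    intro k f g hf hg
    obtain ⟨A, hA⟩ := hf.bdd
    obtain ⟨B, hB⟩ := hg.bdd
    refine ⟨A * B, fun x => ?_⟩
    rw [abs_mul]
    exact mul_le_mul (hA x) (hB x) (abs_nonneg _) ((abs_nonneg _).trans (hA x))
  induction k with
  | zero => exact fun hf hg => ⟨hb hf hg, hf.cont.mul hg.cont⟩
  | succ k ih =>
    intro f g hf hg
    refine ⟨hb hf hg, ?_⟩
    have hf0 := hf.pred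
    have hg0 := hg.pred
    obtain ⟨_, f', f1, f2⟩ := hf
    obtain ⟨_, g', g1, g2⟩ := hg
    exact ⟨_, fun x => (f1 x).mul (g1 x), (ih f2 hg0).add (ih hf0 g2)⟩

lemma BC.inv {k : ℕ} {m : ℝ} (hm : 0 < m) : ∀ {f : ℝ → ℝ}, BC k f → (∀ x, m ≤ f x) → BC k (fun x => (f x)⁻¹) := by
  have hb : ∀ {f : ℝ → ℝ}, (∀ x, m ≤ f x) → ∃ B, ∀ x, |(f x)⁻¹| ≤ B := by
    intro f hf
    refine ⟨m⁻¹, fun x => ?_⟩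
    rw [abs_inv, abs_of_pos (hm.trans_le (hf x))]
    exact inv_anti₀ hm (hf x)
  induction k with
  | zero => exact fun hf h => ⟨hb h, hf.cont.inv₀ fun x => (hm.trans_le (h x)).ne'⟩
  | succ k ih =>
    intro f hf h
    refine ⟨hb h, ?_⟩
    have hi := ih hf.pred h
    obtain ⟨_, f', f1, f2⟩ := hf
    refine ⟨fun x => (-1) * f' x * ((f x)⁻¹ * (f x)⁻¹), fun x => ?_, ((BC.const k (-1)).mul f2).mul (hi.mul hi)⟩
    refine ((f1 x).fun_inv (hm.trans_le (h x)).ne').congr_deriv ?_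
    have := (hm.trans_le (h x)).ne'
    field_simp

lemma conv_bdd (W : ℝ → ℝ) (hW : Integrable W) (η : ℝ → ℝ) (B : ℝ) (hB : ∀ x, |η x| ≤ B) (x : ℝ) :
    |∫ t, W t * η (x - t)| ≤ ∫ t, |W t| * B := by
  rw [← Real.norm_eq_abs]
  refine norm_integral_le_of_norm_le (hW.abs.mul_const B) (ae_of_all _ fun t => ?_)
  rw [norm_mul, Real.norm_eq_abs, Real.norm_eq_abs]
  exact mul_le_mul_of_nonneg_left (hB _) (abs_nonneg _)

lemma BC.conv (W : ℝ → ℝ) (hW : Integrable W) {k : ℕ} : ∀ {η : ℝ → ℝ}, BC k η →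
    BC k (fun x => ∫ t, W t * η (x - t)) := by
  have hb : ∀ {k : ℕ} {η : ℝ → ℝ}, BC k η → ∃ B, ∀ x, |∫ t, W t * η (x - t)| ≤ B := by
    intro k η h
    obtain ⟨B, hB⟩ := h.bdd
    exact ⟨_, conv_bdd W hW η B hB⟩
  induction k with
  | zero =>
    intro η h
    refine ⟨hb h, ?_⟩
    obtain ⟨B, hB⟩ := h.bdd
    exact conv_cont W hW η h.cont B hB
  | succ k ih =>
    intro η h
    refine ⟨hb h, ?_⟩
    obtain ⟨B, hB⟩ := h.bdd
    have hc := h.cont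
    obtain ⟨_, η', h1, h2⟩ := h
    refine ⟨_, fun x => ?_, ih h2⟩
    obtain ⟨B', hB'⟩ := h2.bdd
    have hc' := h2.cont
    have meas : ∀ (g : ℝ → ℝ), Continuous g → ∀ x, AEStronglyMeasurable (fun t => W t * g (x - t)) volume :=
      fun g hg x => hW.aestronglyMeasurable.mul (hg.comp (continuous_const.sub continuous_id)).aestronglyMeasurable
    refine (hasDerivAt_integral_of_dominated_loc_of_deriv_le (s := Set.univ)
      (F := fun x t => W t * η (x - t)) (F' := fun x t => W t * η' (x - t))
      (bound := fun t => |W t| * B') (Filter.univ_mem) (Eventually.of_forall (meas η hc)) ?_ (meas η' hc' x) ?_ (hW.abs.mul_const B') ?_).2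
    · refine (hW.abs.mul_const B).mono' (meas η hc x) (ae_of_all _ fun t => ?_)
      rw [norm_mul, Real.norm_eq_abs, Real.norm_eq_abs]
      exact mul_le_mul_of_nonneg_left (hB _) (abs_nonneg _)
    · refine ae_of_all _ fun t y _ => ?_
      rw [norm_mul, Real.norm_eq_abs, Real.norm_eq_abs]
      exact mul_le_mul_of_nonneg_left (hB' _) (abs_nonneg _)
    · refine ae_of_all _ fun t y _ => ?_
      have := (h1 (y - t)).comp_sub_const y t
      exact this.const_mul (W t)

lemma BC.contDiff {k : ℕ} : ∀ {f : ℝ → ℝ}, BC k f → ContDiff ℝ k f := by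
  induction k with
  | zero => exact fun h => contDiff_zero.2 h.cont
  | succ k ih =>
    intro f h
    obtain ⟨_, f', h1, h2⟩ := h
    have hd : deriv f = f' := funext fun x => (h1 x).deriv
    have := (contDiff_succ_iff_deriv (𝕜 := ℝ) (f := f) (n := (k : WithTop ℕ∞))).2
      ⟨fun x => (h1 x).differentiableAt, by simp, by rw [hd]; exact ih h2⟩
    exact_mod_cast this

theorem build_u (W : ℝ → ℝ) (hW : Integrable W) (c r C : ℝ) (hr : 0 < r) (hC : 1 ≤ C) (ρ G : ℝ → ℝ)
    (h1 : ∀ x, HasDerivAt ρ (G x) x)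
    (h2 : ∀ x, HasDerivAt G (-(ρ x * (∫ t, W t * (1 - ρ (x - t)^2)) + c^2/4 * (ρ x - (ρ x)⁻¹^3))) x)
    (h3 : ∀ x, C⁻¹ ≤ ρ x ∧ ρ x ≤ C) (h4 : ∀ x, |G x| ≤ C) (h5 : r ≤ |ρ 0 - 1|)
    (h6 : MemLp G 2 volume) (h7 : MemLp (fun x => 1 - ρ x^2) 2 volume) :
    ∃ u : ℝ → ℂ,
        ContDiff ℝ (⊤ : ℕ∞) u ∧
        (∃ M : ℝ, ∀ x, ‖u x‖ ≤ M) ∧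
        (∃ x y, u x ≠ u y) ∧
        MemLp (deriv u) 2 (volume : Measure ℝ) ∧
        MemLp (fun x : ℝ => 1 - ‖u x‖ ^ 2) 2 (volume : Measure ℝ) ∧
        (∀ x : ℝ,
          Complex.I * (c : ℂ) * deriv u x + deriv (deriv u) x +
            (((∫ t : ℝ, W t * (1 - ‖u (x - t)‖ ^ 2)) : ℝ) : ℂ) * u x = 0) := by
  have hCp : 0 < C⁻¹ := by positivity
  have hpos : ∀ x, 0 < ρ x := fun x => hCp.trans_le (h3 x).1
  -- regularity
  have hBC : ∀ k, BC k ρ ∧ BC k G := by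
    have hρb : ∀ x, |ρ x| ≤ C := fun x => by rw [abs_of_pos (hpos x)]; exact (h3 x).2
    intro k
    induction k with
    | zero =>
      exact ⟨⟨⟨C, hρb⟩, continuous_iff_continuousAt.2 fun x => (h1 x).continuousAt⟩,
        ⟨⟨C, h4⟩, continuous_iff_continuousAt.2 fun x => (h2 x).continuousAt⟩⟩
    | succ k ih =>
      refine ⟨⟨⟨C, hρb⟩, G, h1, ih.2⟩, ⟨⟨C, h4⟩, _, h2, ?_⟩⟩
      have hη : BC k (fun x => 1 - ρ x^2) := by
        have := (BC.const k 1).add ((BC.const k (-1)).mul (ih.1.mul ih.1))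
        convert this using 2
        ring
      have hi := ih.1.inv hCp fun x => (h3 x).1
      have := (BC.const k (-1)).mul ((ih.1.mul (hη.conv W hW)).add
        ((BC.const k (c^2/4)).mul (ih.1.add ((BC.const k (-1)).mul (hi.mul (hi.mul hi))))))
      convert this using 2
      ring
  set ω : ℝ → ℝ := fun x => c/2 * ((ρ x)⁻¹^2 - 1) with hω
  have hωBC : ∀ k, BC k ω := by
    intro k
    have hi := (hBC k).1.inv hCp fun x => (h3 x).1
    have := (BC.const k (c/2)).mul ((hi.mul hi).add (BC.const k (-1)))
    convert this using 2
    rw [hω]; ring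
  have hωc : Continuous ω := (hωBC 0).cont
  set θ : ℝ → ℝ := fun x => ∫ s in (0:ℝ)..x, ω s with hθ
  have hθd : ∀ x, HasDerivAt θ (ω x) x := fun x =>
    intervalIntegral.integral_hasDerivAt_right (hωc.intervalIntegrable _ _)
      hωc.stronglyMeasurable.stronglyMeasurableAtFilter hωc.continuousAt
  have hρs : ContDiff ℝ (⊤ : ℕ∞) ρ := contDiff_infty.2 fun k => (hBC k).1.contDiff
  have hωs : ContDiff ℝ (⊤ : ℕ∞) ω := contDiff_infty.2 fun k => (hωBC k).contDiff
  have hθs : ContDiff ℝ (⊤ : ℕ∞) θ := by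
    refine contDiff_infty_iff_deriv.2 ⟨fun x => (hθd x).differentiableAt, ?_⟩
    have : deriv θ = ω := funext fun x => (hθd x).deriv
    rw [this]; exact hωs
  have hωd : ∀ x, HasDerivAt ω (-c * G x * (ρ x)⁻¹^3) x := by
    intro x
    have := ((((h1 x).fun_inv (hpos x).ne').pow 2).sub_const 1).const_mul (c/2)
    refine this.congr_deriv ?_
    have := (hpos x).ne'
    norm_num
    field_simp
  let e : ℝ → ℂ := fun x => Complex.exp (Complex.I * (θ x : ℂ))
  have hed : ∀ x, HasDerivAt e (e x * (Complex.I * (ω x : ℂ))) x := fun x =>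
    (((hθd x).ofReal_comp).const_mul Complex.I).cexp
  have hen : ∀ x, ‖e x‖ = 1 := fun x => by
    simp only [e]; rw [mul_comm]; exact Complex.norm_exp_ofReal_mul_I _
  let u : ℝ → ℂ := fun x => (ρ x : ℂ) * e x
  have hun : ∀ x, ‖u x‖ = ρ x := fun x => by
    simp only [u]
    rw [norm_mul, hen, mul_one, Complex.norm_real, Real.norm_eq_abs, abs_of_pos (hpos x)]
  have hud : ∀ x, HasDerivAt u (((G x : ℂ) + Complex.I * ((ρ x : ℂ) * (ω x : ℂ))) * e x) x := by
    intro x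
    have := ((h1 x).ofReal_comp).mul (hed x)
    refine this.congr_deriv ?_
    ring
  have hdu : deriv u = fun x => ((G x : ℂ) + Complex.I * ((ρ x : ℂ) * (ω x : ℂ))) * e x :=
    funext fun x => (hud x).deriv
  refine ⟨u, ?_, ⟨C, fun x => (hun x).le.trans (h3 x).2⟩, ?_, ?_, ?_, ?_⟩
  · have a1 : ContDiff ℝ (⊤ : ℕ∞) (fun x => (ρ x : ℂ)) := Complex.ofRealCLM.contDiff.comp hρs
    have a2 : ContDiff ℝ (⊤ : ℕ∞) (fun x => (θ x : ℂ)) := Complex.ofRealCLM.contDiff.comp hθs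
    exact a1.mul ((contDiff_const.mul a2).cexp)
  · by_contra hcon
    push Not at hcon
    have hρc : ∀ x, ρ x = ρ 0 := fun x => by rw [← hun x, ← hun 0, hcon x 0]
    have h8 : MemLp (fun _ : ℝ => 1 - ρ 0 ^2) 2 (volume : Measure ℝ) := by
      convert h7 using 2 with x
      rw [hρc x]
    rw [memLp_const_iff (by norm_num) (by norm_num)] at h8
    rcases h8 with h8 | h8
    · have : ρ 0 = 1 := by
        have : (1 - ρ 0) * (1 + ρ 0) = 0 := by linear_combination h8
        rcases mul_eq_zero.1 this with h | h
        · linarith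
        · linarith [hpos 0]
      rw [this] at h5
      simp at h5
      linarith
    · simp at h8
  · rw [hdu]
    have hg : MemLp (fun x => |G x| + |c|/2 * C * |1 - ρ x^2|) 2 volume := h6.abs.add (h7.abs.const_mul _)
    refine hg.mono' ?_ (ae_of_all _ fun x => ?_)
    · have : Measurable (deriv u) := measurable_deriv u
      rw [hdu] at this
      exact this.aestronglyMeasurable
    · rw [norm_mul, hen, mul_one]
      refine (norm_add_le _ _).trans (add_le_add ?_ ?_)
      · rw [Complex.norm_real, Real.norm_eq_abs]
      · rw [norm_mul, Complex.norm_I, one_mul, ← Complex.ofReal_mul, Complex.norm_real, Real.norm_eq_abs]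
        have : ρ x * ω x = c/2 * (ρ x)⁻¹ * (1 - ρ x^2) := by
          rw [hω]
          have := (hpos x).ne'
          field_simp
        rw [this, abs_mul, abs_mul, abs_div, abs_inv, abs_of_pos (hpos x), abs_two]
        have : (ρ x)⁻¹ ≤ C := inv_le_of_inv_le₀ (by linarith) (h3 x).1
        gcongr
  · simpa only [hun] using h7
  · intro x
    have hudd := ((((h2 x).ofReal_comp).add
      ((((h1 x).ofReal_comp).mul ((hωd x).ofReal_comp)).const_mul Complex.I)).mul (hed x))
    have hfun : deriv u = (((fun y => (G y : ℂ)) + fun y => Complex.I * ((fun y => (ρ y : ℂ)) * fun y => (ω y : ℂ)) y) * e) := by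
      rw [hdu]; rfl
    rw [← hfun] at hudd
    rw [hudd.deriv, hdu]
    simp only [hun, Pi.add_apply, Pi.mul_apply]
    set V : ℝ := ∫ t, W t * (1 - ρ (x - t)^2)
    simp only [u, hω]
    have hne : (ρ x : ℂ) ≠ 0 := by exact_mod_cast (hpos x).ne'
    push_cast
    field_simp
    ring_nf
    simp only [Complex.I_sq]
    ring_nf

end DS


theorem darkSoliton_existence
    (W : ℝ → ℝ) (hW_int : Integrable W) (hW_even : ∀ x, W (-x) = W x)
    (FW : ℝ → ℝ)
    (hFW : ∀ ξ : ℝ, (FW ξ : ℂ) =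
      ∫ x : ℝ, (W x : ℂ) * Complex.exp (-(Complex.I * (x : ℂ) * (ξ : ℂ))))
    (σ : ℝ) (hσ : σ ∈ Set.Ioc (0 : ℝ) 1)
    (hinf : IsGLB (Set.range fun ξ : ℝ => FW ξ + ξ ^ 2 / 2) σ) :
    ∀ᵐ (c : ℝ) ∂(volume.restrict (Set.Ioo (0 : ℝ) (Real.sqrt (2 * σ)))),
      ∃ u : ℝ → ℂ,
        ContDiff ℝ (⊤ : ℕ∞) u ∧
        (∃ M : ℝ, ∀ x, ‖u x‖ ≤ M) ∧
        (∃ x y, u x ≠ u y) ∧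
        MemLp (deriv u) 2 (volume : Measure ℝ) ∧
        MemLp (fun x : ℝ => 1 - ‖u x‖ ^ 2) 2 (volume : Measure ℝ) ∧
        (∀ x : ℝ,
          Complex.I * (c : ℂ) * deriv u x + deriv (deriv u) x +
            (((∫ t : ℝ, W t * (1 - ‖u (x - t)‖ ^ 2)) : ℝ) : ℂ) * u x = 0) := by
  have hF : ∀ ξ, FW ξ = ∫ x, W x * Real.cos (ξ*x) := by
    intro ξ
    have hexp : ∀ x : ℝ, Complex.exp (-(Complex.I * (x : ℂ) * (ξ : ℂ))) = Complex.exp (((-(ξ*x) : ℝ) : ℂ) * Complex.I) := by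
      intro x
      congr 1
      push_cast
      ring
    have hintg : Integrable (fun x : ℝ => (W x : ℂ) * Complex.exp (-(Complex.I * (x : ℂ) * (ξ : ℂ)))) := by
      have hWc : Integrable (fun x : ℝ => (W x : ℂ)) := hW_int.ofReal
      refine hWc.norm.mono' ?_ (ae_of_all _ fun x => ?_)
      · exact hWc.aestronglyMeasurable.mul (by fun_prop : Continuous fun x : ℝ => Complex.exp (-(Complex.I * (x : ℂ) * (ξ : ℂ)))).aestronglyMeasurable
      · rw [norm_mul, hexp, Complex.norm_exp_ofReal_mul_I, mul_one]
    have h1 : FW ξ = (∫ x : ℝ, (W x : ℂ) * Complex.exp (-(Complex.I * (x : ℂ) * (ξ : ℂ)))).re := by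
      rw [← hFW, Complex.ofReal_re]
    rw [h1]
    have h2 := integral_re (𝕜 := ℂ) hintg
    change _ = Complex.re _ at h2
    rw [← h2]
    refine integral_congr_ae (ae_of_all _ fun x => ?_)
    change Complex.re _ = _
    rw [hexp, Complex.re_ofReal_mul, Complex.exp_ofReal_mul_I_re, Real.cos_neg]
  have hS : ∀ ξ, σ ≤ FW ξ + ξ^2/2 := fun ξ => hinf.1 ⟨ξ, rfl⟩
  have hmain : ∀ p q : ℚ, 0 < (p:ℝ) → (p:ℝ) < q → (q:ℝ)^2/2 < σ → ∀ᵐ c : ℝ, c ∈ Set.Ioo (p:ℝ) q → 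
      ∃ u : ℝ → ℂ,
        ContDiff ℝ (⊤ : ℕ∞) u ∧
        (∃ M : ℝ, ∀ x, ‖u x‖ ≤ M) ∧
        (∃ x y, u x ≠ u y) ∧
        MemLp (deriv u) 2 (volume : Measure ℝ) ∧
        MemLp (fun x : ℝ => 1 - ‖u x‖ ^ 2) 2 (volume : Measure ℝ) ∧
        (∀ x : ℝ,
          Complex.I * (c : ℂ) * deriv u x + deriv (deriv u) x +
            (((∫ t : ℝ, W t * (1 - ‖u (x - t)‖ ^ 2)) : ℝ) : ℂ) * u x = 0) := by
    intro p q hp hpq hq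
    obtain ⟨r, hr0, hr1, hae⟩ := DS.crit_exists W hW_int FW hF σ hS p q hp hpq hq
    rw [ae_restrict_iff' measurableSet_Ioo] at hae
    filter_upwards [hae] with c hc hcI
    obtain ⟨Q0, hQ0, hfr⟩ := hc hcI
    obtain ⟨C, hC, hLat⟩ := DS.lat_exists W hW_int Q0 hQ0 c r
    obtain ⟨φ, hφ, hφ2⟩ := extraction_of_frequently_atTop hfr
    have hRD : ∀ k, ∃ R D, DS.Lat W c r C (1/((φ k+3:ℕ):ℝ)) ((φ k+3)^2) R D := by
      intro k
      obtain ⟨ρ, a1, a2, a3, a4, a5⟩ := hφ2 k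
      exact hLat (φ k) ρ a1 a2 a3 a4 a5
    choose R D hRD using hRD
    have htop : Tendsto (fun k => ((φ k+3:ℕ):ℝ)) atTop atTop :=
      tendsto_natCast_atTop_atTop.comp ((tendsto_add_atTop_nat 3).comp hφ.tendsto_atTop)
    obtain ⟨ρ, G, b1, b2, b3, b4, b5, b6, b7⟩ := DS.limit W hW_int hW_even c r C hC
      (fun k => 1/((φ k+3:ℕ):ℝ)) (fun k => (φ k+3)^2) R D (fun k => by positivity)
      (by simp only [one_div]; exact htop.inv_tendsto_atTop)
      (by
        convert htop using 2 with k
        have : ((φ k+3:ℕ):ℝ) ≠ 0 := by positivity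
        push_cast at this ⊢
        field_simp) hRD
    exact DS.build_u W hW_int c r C hr0 hC ρ G b1 b2 b3 b4 b5 b6 b7
  rw [ae_restrict_iff' measurableSet_Ioo]
  have hall := ae_all_iff.2 fun p : ℚ => ae_all_iff.2 fun q : ℚ =>
    (eventually_imp_distrib_left.2 fun hp => eventually_imp_distrib_left.2 fun hpq =>
      eventually_imp_distrib_left.2 fun hq => hmain p q hp hpq hq)
  filter_upwards [hall] with c hc hcI
  obtain ⟨p, hp0, hpc⟩ := exists_rat_btwn hcI.1
  obtain ⟨q, hcq, hqs⟩ := exists_rat_btwn hcI.2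
  have hq0 : (0:ℝ) ≤ q := hcI.1.le.trans hcq.le
  have := (Real.lt_sqrt hq0).1 hqs
  exact hc p q hp0 (hpc.trans hcq) (by linarith) ⟨hpc, hcq⟩
end
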